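/- Let A, B ∈ SL(2,ℂ) generate a discrete subgroup, let A be elliptic of order n ≥ 3, and suppose the axes of A and B·A·B⁻¹ are disjoint, i.e.: (i) A and B·A·B⁻¹ have no common eigenvector in ℂ², and (ii) there is no C ∈ SL(2,ℂ) such that the matrices C·A·C⁻¹ and C·(B·A·B⁻¹)·C⁻¹ both lie in the special unitary group SU(2). Then for every C ∈ SL(2,ℂ), max{‖C·A·C⁻¹‖², ‖C·B·C⁻¹‖²} ≥ 2·d(n), where d(n) = t(n) for n ≠ 6 and d(6) = 6 − √24. -/

import Mathlib

open Matrix Real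

noncomputable section

abbrev SL2C := Matrix.SpecialLinearGroup (Fin 2) ℂ

/-- The Frobenius (Hilbert–Schmidt) norm of a 2×2 complex matrix. -/
def fnorm (A : Matrix (Fin 2) (Fin 2) ℂ) : ℝ :=
  @norm _ Matrix.frobeniusSeminormedAddCommGroup.toNorm A

instance : TopologicalSpace SL2C :=
  TopologicalSpace.induced (fun g => (g : Matrix (Fin 2) (Fin 2) ℂ)) inferInstance

/-- A subgroup of `SL(2,ℂ)` is discrete if it is a discrete subspace of `SL(2,ℂ)`. -/
def IsDiscreteSubgroup (Γ : Subgroup SL2C) : Prop := DiscreteTopology Γ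

/-- `A` is elliptic of order `n`: `A^n = ±1` but `A^k ≠ ±1` for `1 ≤ k < n`. -/
def IsEllipticOfOrder (A : SL2C) (n : ℕ) : Prop :=
  (A ^ n = 1 ∨ A ^ n = -1) ∧ ∀ k : ℕ, 1 ≤ k → k < n → A ^ k ≠ 1 ∧ A ^ k ≠ -1

/-- `A` is parabolic: `A ≠ ±1` and `tr A = ±2`. -/
def IsParabolic (A : SL2C) : Prop :=
  A ≠ 1 ∧ A ≠ -1 ∧ (Matrix.trace (A : Matrix (Fin 2) (Fin 2) ℂ) = 2 ∨
    Matrix.trace (A : Matrix (Fin 2) (Fin 2) ℂ) = -2)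

/-- `S` and `T` have a common eigenvector in `ℂ²`. -/
def HasCommonEigenvector (S T : SL2C) : Prop :=
  ∃ v : Fin 2 → ℂ, v ≠ 0 ∧ (∃ a : ℂ, (S : Matrix (Fin 2) (Fin 2) ℂ).mulVec v = a • v) ∧
    (∃ b : ℂ, (T : Matrix (Fin 2) (Fin 2) ℂ).mulVec v = b • v)

/-- A subgroup of `SL(2,ℂ)` is nonelementary if it contains two elements `S`, `T`
with `S^k ≠ ±1 ≠ T^k` for all `k ≥ 1` having no common eigenvector in `ℂ²`. -/
def IsNonelementary (Γ : Subgroup SL2C) : Prop :=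
  ∃ S ∈ Γ, ∃ T ∈ Γ, (∀ k : ℕ, 1 ≤ k → S ^ k ≠ 1 ∧ S ^ k ≠ -1) ∧
    (∀ k : ℕ, 1 ≤ k → T ^ k ≠ 1 ∧ T ^ k ≠ -1) ∧ ¬ HasCommonEigenvector S T

/-- The trace parameter `β(A) = tr²(A) - 4`. -/
def βp (A : SL2C) : ℂ := (Matrix.trace (A : Matrix (Fin 2) (Fin 2) ℂ)) ^ 2 - 4

/-- The commutator parameter `γ(A,B) = tr [A,B] - 2`. -/
def γp (A B : SL2C) : ℂ :=
  Matrix.trace ((A * B * A⁻¹ * B⁻¹ : SL2C) : Matrix (Fin 2) (Fin 2) ℂ) - 2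

/-- `PSL(2,ℂ)`, the quotient of `SL(2,ℂ)` by its center `{1, -1}`. -/
abbrev PSL2C := SL2C ⧸ Subgroup.center SL2C

/-- The image in `PSL(2,ℂ)` of a subgroup of `SL(2,ℂ)`. -/
def pslImage (Γ : Subgroup SL2C) : Subgroup PSL2C :=
  Γ.map (QuotientGroup.mk' (Subgroup.center SL2C))

open Classical in
/-- `t5`: the unique real `t > 1` with
`t (t - cos²(π/5)) + (t-1) √((t+1)(t+1-2 cos²(π/5))) = 1/2`. -/
def t5 : ℝ :=
  if h : ∃ t : ℝ, 1 < t ∧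
      t * (t - Real.cos (π / 5) ^ 2) +
        (t - 1) * Real.sqrt ((t + 1) * (t + 1 - 2 * Real.cos (π / 5) ^ 2)) = 1 / 2
  then h.choose else 0

/-- The value `t n = cosh (c n)` where `c n` is the sharp displacement bound for
discrete nonelementary groups with an elliptic generator of order `n ≥ 3`. -/
def tOf : ℕ → ℝ
  | 3 => (2 * Real.sqrt (8 + 2 * Real.sqrt 5) - (1 + Real.sqrt 5)) / (6 - Real.sqrt 5)
  | 4 => (Real.sqrt (6 + 2 * Real.sqrt 3) - Real.sqrt 3) / (3 - Real.sqrt 3)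
  | 5 => t5
  | 6 => 17 / 16
  | n => (5 - 2 * Real.sin (π / n) ^ 2) / (4 + 2 * Real.sin (π / n) ^ 2)

/-- `d n`: the sharp bound of Theorem 3.2 (`d n = t n` for `n ≠ 6`, `d 6 = 6 - √24`). -/
noncomputable def dOf (n : ℕ) : ℝ := if n = 6 then 6 - Real.sqrt 24 else tOf n

open Filter Topology

/-- entries of a matrix in `SL(2,ℂ)` as a plain function. -/
def mf (g : SL2C) : Fin 2 → Fin 2 → ℂ := fun i j => g i j

lemma mf_mul (g k : SL2C) (i j : Fin 2) : mf (g * k) i j = mf g i 0 * mf k 0 j + mf g i 1 * mf k 1 j := by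
  simp [mf, Matrix.mul_apply, Fin.sum_univ_two]
lemma mf_one (i j : Fin 2) : mf 1 i j = if i = j then 1 else 0 := by
  simp [mf, Matrix.one_apply]
lemma mf_inv (g : SL2C) : mf g⁻¹ 0 0 = mf g 1 1 ∧ mf g⁻¹ 0 1 = - mf g 0 1 ∧
    mf g⁻¹ 1 0 = - mf g 1 0 ∧ mf g⁻¹ 1 1 = mf g 0 0 := by
  simp [mf, Matrix.adjugate_fin_two]
lemma mf_det (g : SL2C) : mf g 0 0 * mf g 1 1 - mf g 0 1 * mf g 1 0 = 1 := by
  have := g.det_coe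
  rw [Matrix.det_fin_two] at this
  exact this

lemma mf_ext {g k : SL2C} (h00 : mf g 0 0 = mf k 0 0) (h01 : mf g 0 1 = mf k 0 1)
    (h10 : mf g 1 0 = mf k 1 0) (h11 : mf g 1 1 = mf k 1 1) : g = k := by
  apply Matrix.SpecialLinearGroup.ext
  intro i j
  fin_cases i <;> fin_cases j <;> assumption

lemma disc_eps {Γ : Subgroup SL2C} (h : IsDiscreteSubgroup Γ) :
    ∃ e : ℝ, 0 < e ∧ ∀ g ∈ Γ, dist (mf g) (mf 1) < e → g = 1 := by
  have h1 : IsOpen ({1} : Set Γ) := by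
    unfold IsDiscreteSubgroup at h
    exact isOpen_discrete _
  obtain ⟨U, hU, hU1⟩ := isOpen_induced_iff.1 h1
  obtain ⟨V, hV, hV1⟩ := isOpen_induced_iff.1 hU
  have hV' : IsOpen ((Matrix.of : (Fin 2 → Fin 2 → ℂ) → Matrix (Fin 2) (Fin 2) ℂ) ⁻¹' V) :=
    hV.preimage continuous_id
  have hm : ∀ g : SL2C, Matrix.of (mf g) = (g : Matrix (Fin 2) (Fin 2) ℂ) := fun g => rfl
  have h1V : mf 1 ∈ ((Matrix.of : (Fin 2 → Fin 2 → ℂ) → Matrix (Fin 2) (Fin 2) ℂ) ⁻¹' V) := by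
    have : (1 : Γ) ∈ (Subtype.val ⁻¹' U : Set Γ) := by rw [hU1]; rfl
    rw [← hV1] at this
    rw [Set.mem_preimage, hm]
    exact this
  obtain ⟨e, he, hb⟩ := Metric.isOpen_iff.1 hV' _ h1V
  refine ⟨e, he, fun g hg hc => ?_⟩
  have h2 := hb (Metric.mem_ball.2 hc)
  have : (⟨g, hg⟩ : Γ) ∈ (Subtype.val ⁻¹' U : Set Γ) := by
    rw [← hV1]; exact h2
  rw [hU1] at this
  exact congrArg Subtype.val this

lemma disc_finite {Γ : Subgroup SL2C} (h : IsDiscreteSubgroup Γ) (R : ℝ) :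
    {g : SL2C | g ∈ Γ ∧ ∀ i j, ‖mf g i j‖ ≤ R}.Finite := by
  obtain ⟨e, he, hb⟩ := disc_eps h
  by_contra hinf
  have hinf : {g : SL2C | g ∈ Γ ∧ ∀ i j, ‖mf g i j‖ ≤ R}.Infinite := hinf
  have hR : 0 ≤ R := by
    obtain ⟨g, hg⟩ := hinf.nonempty
    exact (norm_nonneg _).trans (hg.2 0 0)
  set δ : ℝ := e / (4 * (R + 1)) with hδ
  have hδ0 : 0 < δ := by positivity
  have htb := (isCompact_closedBall (0 : Fin 2 → Fin 2 → ℂ) R).totallyBounded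
  obtain ⟨t, ht, hcov⟩ := Metric.totallyBounded_iff.1 htb δ hδ0
  have hmem : ∀ g : SL2C, (∀ i j, ‖mf g i j‖ ≤ R) → ∃ y ∈ t, dist (mf g) y < δ := by
    intro g hg
    have : mf g ∈ Metric.closedBall (0 : Fin 2 → Fin 2 → ℂ) R := by
      rw [mem_closedBall_zero_iff, pi_norm_le_iff_of_nonneg hR]
      intro i
      rw [pi_norm_le_iff_of_nonneg hR]
      exact hg i
    have := hcov this
    simpa using this
  choose! F hF1 hF2 using hmem
  obtain ⟨g, hg, k, hk, hne, heq⟩ := hinf.exists_ne_map_eq_of_mapsTo (f := F)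
    (fun g hg => hF1 g hg.2) ht
  apply hne
  have hd : ∀ i j, ‖mf k i j - mf g i j‖ < 2 * δ := by
    intro i j
    have h1 : dist (mf k) (mf g) < 2 * δ := by
      have a1 := hF2 g hg.2
      have a2 := hF2 k hk.2
      rw [← heq] at a2
      calc _ ≤ dist (mf k) (F g) + dist (mf g) (F g) := dist_triangle_right _ _ _
        _ < _ := by linarith
    rw [← dist_eq_norm]
    exact ((dist_le_pi_dist (mf k i) (mf g i) j).trans (dist_le_pi_dist (mf k) (mf g) i)).trans_lt h1
  have h3 : g⁻¹ * k = 1 := by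
    apply hb _ (Γ.mul_mem (Γ.inv_mem hg.1) hk.1)
    rw [dist_pi_lt_iff he]
    intro i
    rw [dist_pi_lt_iff he]
    intro j
    rw [dist_eq_norm]
    have : mf (g⁻¹ * k) i j - mf 1 i j
        = mf g⁻¹ i 0 * (mf k 0 j - mf g 0 j) + mf g⁻¹ i 1 * (mf k 1 j - mf g 1 j) := by
      rw [← inv_mul_cancel g, mf_mul, mf_mul]
      ring
    rw [this]
    have hi : ∀ i j, ‖mf g⁻¹ i j‖ ≤ R := by
      obtain ⟨h1, h2, h3, h4⟩ := mf_inv g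
      have := hg.2
      intro i j
      fin_cases i <;> fin_cases j <;> simp [h1, h2, h3, h4, this]
    have e1 : 4 * R * δ < e := by
      rw [hδ]
      rw [mul_div_assoc', div_lt_iff₀ (by positivity)]
      nlinarith
    calc _ ≤ ‖mf g⁻¹ i 0‖ * ‖mf k 0 j - mf g 0 j‖ + ‖mf g⁻¹ i 1‖ * ‖mf k 1 j - mf g 1 j‖ := by
            refine (norm_add_le _ _).trans ?_
            rw [norm_mul, norm_mul]
      _ ≤ R * (2 * δ) + R * (2 * δ) := by
            gcongr
            · exact hi _ _
            · exact (hd _ _).le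
            · exact hi _ _
            · exact (hd _ _).le
      _ < e := by linarith
  exact (inv_mul_eq_one.1 h3)

/-- products of the off-diagonal entries of all `g` conjugating `f` into `Γ`. -/
def SS (Γ : Subgroup SL2C) (f : SL2C) : Set ℂ :=
  {x | ∃ g : SL2C, g * f * g⁻¹ ∈ Γ ∧ x = mf g 0 1 * mf g 1 0}

/-- the matrix with given entries. -/
def mkSL (a b c d : ℂ) (h : a * d - b * c = 1) : SL2C :=
  ⟨!![a, b; c, d], by rw [Matrix.det_fin_two]; simpa using h⟩

lemma mf_mk (a b c d : ℂ) (h : a * d - b * c = 1) :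
    mf (mkSL a b c d h) 0 0 = a ∧ mf (mkSL a b c d h) 0 1 = b ∧
    mf (mkSL a b c d h) 1 0 = c ∧ mf (mkSL a b c d h) 1 1 = d := by
  simp [mf, mkSL]

/-- `f` is diagonal with diagonal entries `l`, `m`. -/
structure IsDg (f : SL2C) (l m : ℂ) : Prop where
  h00 : mf f 0 0 = l
  h01 : mf f 0 1 = 0
  h10 : mf f 1 0 = 0
  h11 : mf f 1 1 = m

lemma IsDg.mul_eq {f : SL2C} {l m : ℂ} (h : IsDg f l m) : l * m = 1 := by
  have := mf_det f
  rw [h.h00, h.h01, h.h11] at this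
  simpa using this

lemma IsDg.inv {f : SL2C} {l m : ℂ} (h : IsDg f l m) : IsDg f⁻¹ m l := by
  obtain ⟨h1, h2, h3, h4⟩ := mf_inv f
  constructor
  · rw [h1, h.h11]
  · rw [h2, h.h01, neg_zero]
  · rw [h3, h.h10, neg_zero]
  · rw [h4, h.h00]

lemma conj_entries {f g : SL2C} {l m : ℂ} (hf : IsDg f l m) :
    mf (g * f * g⁻¹) 0 0 = (1 + mf g 0 1 * mf g 1 0) * l - mf g 0 1 * mf g 1 0 * m ∧
    mf (g * f * g⁻¹) 0 1 = mf g 0 0 * mf g 0 1 * (m - l) ∧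
    mf (g * f * g⁻¹) 1 0 = mf g 1 0 * mf g 1 1 * (l - m) ∧
    mf (g * f * g⁻¹) 1 1 = (1 + mf g 0 1 * mf g 1 0) * m - mf g 0 1 * mf g 1 0 * l := by
  obtain ⟨h1, h2, h3, h4⟩ := mf_inv g
  have hd := mf_det g
  simp only [mf_mul, h1, h2, h3, h4, hf.h00, hf.h01, hf.h10, hf.h11]
  refine ⟨?_, ?_, ?_, ?_⟩
  · linear_combination l * hd
  · ring
  · ring
  · linear_combination m * hd

lemma CH (M : SL2C) : mf (M * M) 0 0 = (mf M 0 0 + mf M 1 1) * mf M 0 0 - 1 ∧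
    mf (M * M) 0 1 = (mf M 0 0 + mf M 1 1) * mf M 0 1 ∧
    mf (M * M) 1 0 = (mf M 0 0 + mf M 1 1) * mf M 1 0 ∧
    mf (M * M) 1 1 = (mf M 0 0 + mf M 1 1) * mf M 1 1 - 1 := by
  have hd := mf_det M
  simp only [mf_mul]
  refine ⟨?_, ?_, ?_, ?_⟩
  · linear_combination -hd
  · ring
  · ring
  · linear_combination -hd

section closure
variable {Γ : Subgroup SL2C} {f : SL2C} {l m : ℂ}

lemma SS_of_mem (hfΓ : f ∈ Γ) {g : SL2C} (hg : g ∈ Γ) : mf g 0 1 * mf g 1 0 ∈ SS Γ f :=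
  ⟨g, Γ.mul_mem (Γ.mul_mem hg hfΓ) (Γ.inv_mem hg), rfl⟩

lemma SS_mul {g W : SL2C} (hg : g * f * g⁻¹ ∈ Γ) (hW : W ∈ Γ) :
    mf (W * g) 0 1 * mf (W * g) 1 0 ∈ SS Γ f := by
  refine ⟨W * g, ?_, rfl⟩
  have : W * g * f * (W * g)⁻¹ = W * (g * f * g⁻¹) * W⁻¹ := by group
  rw [this]
  exact Γ.mul_mem (Γ.mul_mem hW hg) (Γ.inv_mem hW)

lemma SS_symm (hf : IsDg f l m) (hfΓ : f ∈ Γ) {x : ℂ} (hx : x ∈ SS Γ f) : -1 - x ∈ SS Γ f := by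
  obtain ⟨g, hg, rfl⟩ := hx
  obtain ⟨j0, j1, j2, j3⟩ := mf_mk 0 1 (-1) 0 (by norm_num)
  set J := mkSL 0 1 (-1) 0 (by norm_num) with hJ
  have hJf : J * f * J⁻¹ = f⁻¹ := by
    obtain ⟨c0, c1, c2, c3⟩ := conj_entries (g := J) hf
    have hi := hf.inv
    apply mf_ext
    · rw [c0, hi.h00, j1, j2]; ring
    · rw [c1, hi.h01, j0]; ring
    · rw [c2, hi.h10, j3]; ring
    · rw [c3, hi.h11, j1, j2]; ring
  refine ⟨g * J, ?_, ?_⟩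
  · have : g * J * f * (g * J)⁻¹ = (g * f * g⁻¹)⁻¹ := by
      have : g * J * f * (g * J)⁻¹ = g * (J * f * J⁻¹) * g⁻¹ := by group
      rw [this, hJf]; group
    rw [this]
    exact Γ.inv_mem hg
  · have hd := mf_det g
    simp only [mf_mul, j0, j1, j2, j3]
    linear_combination hd

/-- basic data of the words in `h = g f g⁻¹` and `f`. -/
lemma word_data (hf : IsDg f l m) (g : SL2C) (x T : ℂ) (hx : x = mf g 0 1 * mf g 1 0)
    (hT : T = 2 - (2 - l ^ 2 - m ^ 2) * (1 + x)) :
    mf (g * f * g⁻¹ * f) 0 0 + mf (g * f * g⁻¹ * f) 1 1 = T ∧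
    mf (g * f * g⁻¹ * f * g) 0 1 = (T - 1) * mf g 0 1 ∧
    mf (g * f * g⁻¹ * f * g) 1 0 = (T - 1) * mf g 1 0 ∧
    mf (g * f * g⁻¹) 0 1 * mf (g * f * g⁻¹) 1 0 = (2 - l ^ 2 - m ^ 2) * x * (1 + x) := by
  obtain ⟨c0, c1, c2, c3⟩ := conj_entries (g := g) hf
  have hlm := hf.mul_eq
  have hd := mf_det g
  rw [mf_mul (g * f * g⁻¹ * f) g, mf_mul (g * f * g⁻¹ * f) g]
  simp only [mf_mul (g * f * g⁻¹) f, c0, c1, c2, c3, hf.h00, hf.h01, hf.h10, hf.h11]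
  subst hx hT
  set p := mf g 0 0
  set q := mf g 0 1
  set r := mf g 1 0
  set t := mf g 1 1
  refine ⟨?_, ?_, ?_, ?_⟩
  · linear_combination (-2 * q * r) * hlm
  · linear_combination q * (m ^ 2 - l * m) * hd + q * (-1 - 2 * q * r) * hlm
  · linear_combination r * (l ^ 2 - l * m) * hd + r * (-1 - 2 * q * r) * hlm
  · linear_combination (-q * r * (l - m) ^ 2) * hd + 2 * q * r * (1 + q * r) * hlm

lemma SS_P (hf : IsDg f l m) (hfΓ : f ∈ Γ) {x : ℂ} (hx : x ∈ SS Γ f) :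
    (2 - l ^ 2 - m ^ 2) * x * (1 + x) ∈ SS Γ f := by
  obtain ⟨g, hg, hx⟩ := hx
  rw [← (word_data hf g x _ hx rfl).2.2.2]
  exact SS_of_mem hfΓ hg

lemma SS_Q (hf : IsDg f l m) (hfΓ : f ∈ Γ) {x T : ℂ} (hx : x ∈ SS Γ f)
    (hT : T = 2 - (2 - l ^ 2 - m ^ 2) * (1 + x)) :
    x * (T - 1) ^ 2 ∈ SS Γ f := by
  obtain ⟨g, hg, hx⟩ := hx
  obtain ⟨-, h1, h2, -⟩ := word_data hf g x T hx hT
  have := SS_mul hg (Γ.mul_mem hg hfΓ)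
  rw [h1, h2] at this
  convert this using 1
  rw [hx]; ring

lemma SS_14 (hf : IsDg f l m) (hfΓ : f ∈ Γ) {x T : ℂ} (hx : x ∈ SS Γ f)
    (hT : T = 2 - (2 - l ^ 2 - m ^ 2) * (1 + x)) :
    x * (T ^ 2 - T - 1) ^ 2 ∈ SS Γ f := by
  obtain ⟨g, hg, hx⟩ := hx
  obtain ⟨h0, h1, h2, -⟩ := word_data hf g x T hx hT
  have := SS_mul hg (Γ.mul_mem (Γ.mul_mem hg hfΓ) (Γ.mul_mem hg hfΓ))
  set M := g * f * g⁻¹ * f with hM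
  obtain ⟨a0, a1, a2, a3⟩ := CH M
  rw [h0] at a0 a1 a2 a3
  rw [mf_mul M g] at h1 h2
  convert this using 1
  rw [mf_mul (M * M) g, mf_mul (M * M) g, a0, a1, a2, a3, hx]
  have e1 : (T * mf M 0 0 - 1) * mf g 0 1 + T * mf M 0 1 * mf g 1 1 = (T ^ 2 - T - 1) * mf g 0 1 := by
    linear_combination T * h1
  have e2 : T * mf M 1 0 * mf g 0 0 + (T * mf M 1 1 - 1) * mf g 1 0 = (T ^ 2 - T - 1) * mf g 1 0 := by
    linear_combination T * h2
  rw [e1, e2]; ring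

lemma SS_R3 (hf : IsDg f l m) (hfΓ : f ∈ Γ) {x T : ℂ} (hx : x ∈ SS Γ f)
    (hT : T = 2 - (2 - l ^ 2 - m ^ 2) * (1 + x)) :
    (2 - l ^ 2 - m ^ 2) * x * (1 + x) * T ^ 2 ∈ SS Γ f := by
  obtain ⟨g, hg, hx⟩ := hx
  obtain ⟨h0, h1, h2, h3⟩ := word_data hf g x T hx hT
  set h := g * f * g⁻¹ with hh
  have hlm := hf.mul_eq
  have := SS_of_mem hfΓ (Γ.mul_mem (Γ.mul_mem hg hfΓ) hg)
  obtain ⟨a0, a1, a2, a3⟩ := CH (h * f)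
  rw [h0] at a0 a1 a2 a3
  have hi := hf.inv
  have e : h * f * h = h * f * (h * f) * f⁻¹ := by group
  rw [e] at this
  convert this using 1
  rw [mf_mul _ f⁻¹, mf_mul _ f⁻¹, a0, a1, a2, a3, hi.h00, hi.h01, hi.h10, hi.h11, ← h3]
  simp only [mf_mul h f, hf.h00, hf.h01, hf.h10, hf.h11]
  linear_combination (-(mf h 0 1 * mf h 1 0 * T ^ 2) * (1 + l * m)) * hlm

lemma SS_15 (hf : IsDg f l m) (hfΓ : f ∈ Γ) {x T : ℂ} (hx : x ∈ SS Γ f)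
    (hT : T = 2 - (2 - l ^ 2 - m ^ 2) * (1 + x)) :
    (2 - l ^ 2 - m ^ 2) * x * (1 + x) * (T ^ 2 - 1) ^ 2 ∈ SS Γ f := by
  obtain ⟨g, hg, hx⟩ := hx
  obtain ⟨h0, h1, h2, h3⟩ := word_data hf g x T hx hT
  set h := g * f * g⁻¹ with hh
  have hlm := hf.mul_eq
  have := SS_of_mem hfΓ (Γ.mul_mem (Γ.mul_mem (Γ.mul_mem (Γ.mul_mem hg hfΓ) hg) hfΓ) hg)
  obtain ⟨a0, a1, a2, a3⟩ := CH (h * f)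
  have hdM := mf_det (h * f)
  rw [h0] at a0 a1 a2 a3
  have hi := hf.inv
  have e : h * f * h * f * h = h * f * (h * f) * (h * f) * f⁻¹ := by group
  rw [e] at this
  convert this using 1
  simp only [mf_mul (h * f * (h * f) * (h * f)) f⁻¹, mf_mul (h * f * (h * f)) (h * f),
    a0, a1, a2, a3, hi.h00, hi.h01, hi.h10, hi.h11, ← h3, mul_zero, zero_add, add_zero]
  have e1 : (T * mf (h * f) 0 0 - 1) * mf (h * f) 0 1 + T * mf (h * f) 0 1 * mf (h * f) 1 1
      = (T ^ 2 - 1) * (mf h 0 1 * m) := by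
    rw [← h0]
    simp only [mf_mul h f, hf.h00, hf.h01, hf.h10, hf.h11]; ring
  have e2 : T * mf (h * f) 1 0 * mf (h * f) 0 0 + (T * mf (h * f) 1 1 - 1) * mf (h * f) 1 0
      = (T ^ 2 - 1) * (mf h 1 0 * l) := by
    rw [← h0]
    simp only [mf_mul h f, hf.h00, hf.h01, hf.h10, hf.h11]; ring
  rw [e1, e2]
  linear_combination (-(mf h 0 1 * mf h 1 0 * (T ^ 2 - 1) ^ 2) * (1 + l * m)) * hlm


lemma SS_C (hf : IsDg f l m) (hfΓ : f ∈ Γ) (h3 : l ^ 2 + m ^ 2 = -1) {x T : ℂ} (hx : x ∈ SS Γ f)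
    (hT : T = -1 - 3 * x) :
    x * ((T - 1) ^ 4 - (T ^ 2 - T - 1) * (2 - T)) ∈ SS Γ f := by
  obtain ⟨g, hg, hx⟩ := hx
  obtain ⟨c0, c1, c2, c3⟩ := conj_entries (g := g) hf
  rw [← hx] at c0 c3
  have hlm := hf.mul_eq
  have hd := mf_det g
  have := SS_mul hg (Γ.mul_mem (Γ.mul_mem (Γ.mul_mem hg hfΓ) (Γ.inv_mem hg)) (Γ.inv_mem hfΓ))
  set h := g * f * g⁻¹ with hh
  obtain ⟨i0, i1, i2, i3⟩ := mf_inv h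
  have hi := hf.inv
  convert this using 1
  simp only [mf_mul (h * f * h⁻¹ * f⁻¹) g, mf_mul (h * f * h⁻¹) f⁻¹, mf_mul (h * f) h⁻¹, mf_mul h f, c0, c1, c2, c3,
    i0, i1, i2, i3, hi.h00, hi.h01, hi.h10, hi.h11, hf.h00, hf.h01, hf.h10, hf.h11,
    mul_zero, zero_add, add_zero]
  clear * - hd hx hlm h3 hT
  set p := mf g 0 0
  set q := mf g 0 1
  set r := mf g 1 0
  set t := mf g 1 1
  have hpt : p * t = 1 + x := by linear_combination hd - hx
  have hpt2 : l ^ 2 * m = l := by linear_combination l * hlm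
  have hpt3 : l * m ^ 2 = m := by linear_combination m * hlm
  have key : x * ((T - 1) ^ 4 - (T ^ 2 - T - 1) * (2 - T)) =
      (q * ((T ^ 2 - T - 1) + (1 + m ^ 2) * (2 - T))) * (r * ((T ^ 2 - T - 1) + (1 + l ^ 2) * (2 - T))) := by
    grind
  have k1 : ((1 + x) * l - x * m) * ((1 + x) * m - x * l) - 3 * x * (1 + x) * m ^ 2 +
      ((1 + x) * l - x * m) * (1 + x) * (m - l) * (1 - l ^ 2) =
      (T ^ 2 - T - 1) + (1 + m ^ 2) * (2 - T) := by grind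
  have k2 : ((1 + x) * l - x * m) * ((1 + x) * m - x * l) - 3 * x * (1 + x) * l ^ 2 -
      ((1 + x) * m - x * l) * (1 + x) * (m - l) * (1 - m ^ 2) =
      (T ^ 2 - T - 1) + (1 + l ^ 2) * (2 - T) := by grind
  rw [key, ← k1, ← k2]
  congr 1
  · grind
  · grind

end closure

lemma comm_entries {f g : SL2C} {l m : ℂ} (hf : IsDg f l m) :
    mf (g * f * g⁻¹ * f⁻¹) 0 0 = 1 + mf g 0 1 * mf g 1 0 - mf g 0 1 * mf g 1 0 * m ^ 2 ∧
    mf (g * f * g⁻¹ * f⁻¹) 0 1 = mf g 0 0 * mf g 0 1 * (1 - l ^ 2) ∧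
    mf (g * f * g⁻¹ * f⁻¹) 1 0 = mf g 1 0 * mf g 1 1 * (1 - m ^ 2) ∧
    mf (g * f * g⁻¹ * f⁻¹) 1 1 = 1 + mf g 0 1 * mf g 1 0 - mf g 0 1 * mf g 1 0 * l ^ 2 := by
  obtain ⟨h1, h2, h3, h4⟩ := conj_entries (g := g) hf
  have hlm := hf.mul_eq
  have hi := hf.inv
  simp only [mf_mul (g * f * g⁻¹) f⁻¹, h1, h2, h3, h4, hi.h00, hi.h01, hi.h10, hi.h11]
  refine ⟨?_, ?_, ?_, ?_⟩
  · linear_combination (1 + mf g 0 1 * mf g 1 0) * hlm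
  · linear_combination (mf g 0 0 * mf g 0 1) * hlm
  · linear_combination (mf g 1 0 * mf g 1 1) * hlm
  · linear_combination (1 + mf g 0 1 * mf g 1 0) * hlm

/-- the factor `ψ`. -/
def psi (l m x : ℂ) : ℂ :=
  (1 + x - x * m ^ 2) ^ 2 * (l ^ 2 - m ^ 2) * (l ^ 2 - 1) + (2 - l ^ 2 - m ^ 2) * (1 + x) *
    (l ^ 2 * ((1 + x - x * m ^ 2) * l ^ 2 + (1 + x - x * l ^ 2))
      - m ^ 2 * (l ^ 2 * (1 + x - x * l ^ 2) + (1 + x - x * m ^ 2)))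

/-- the diagonal entry as a function of `x`. -/
def kap (l m x : ℂ) : ℂ :=
  ((1 + x - x * m ^ 2) ^ 2 + ((2 - l ^ 2 - m ^ 2) * x * (1 + x)) * m ^ 2) *
    ((1 + x - x * l ^ 2) ^ 2 + ((2 - l ^ 2 - m ^ 2) * x * (1 + x)) * m ^ 2) -
  ((1 + x - x * m ^ 2) * l ^ 2 + (1 + x - x * l ^ 2)) * ((2 - l ^ 2 - m ^ 2) * x * (1 + x)) *
    ((1 + x - x * l ^ 2) + (1 + x - x * m ^ 2) * m ^ 2)

lemma psi_cont (l m : ℂ) : Continuous (psi l m) := by unfold psi; fun_prop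
lemma kap_cont (l m : ℂ) : Continuous (kap l m) := by unfold kap; fun_prop

lemma psi_zero {l m : ℂ} (hlm : l * m = 1) (h0 : l ^ 2 ≠ m ^ 2) (h1 : l ^ 2 - m ^ 2 ≠ 1) :
    psi l m 0 ≠ 0 := by
  have hh : psi l m 0 = (l ^ 2 - m ^ 2) * (l ^ 2 - 1) * (1 - (l ^ 2 - m ^ 2)) := by
    unfold psi
    have hlm2 : l ^ 2 * m ^ 2 = 1 := by rw [← mul_pow, hlm, one_pow]
    grind
  rw [hh]
  have h2 : l ^ 2 ≠ 1 := by
    intro h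
    apply h0
    have hlm2 : l ^ 2 * m ^ 2 = 1 := by rw [← mul_pow, hlm, one_pow]
    rw [h] at hlm2
    rw [h]; linear_combination -hlm2
  exact mul_ne_zero (mul_ne_zero (sub_ne_zero.2 h0) (sub_ne_zero.2 h2)) (sub_ne_zero.2 (Ne.symm h1))

/-- the word `k = T F T⁻¹ F⁻¹`. -/
lemma kword {f T : SL2C} {l m x : ℂ} (hf : IsDg f l m)
    (h00 : mf T 0 0 = 1 + x - x * m ^ 2) (h11 : mf T 1 1 = 1 + x - x * l ^ 2)
    (hbc : mf T 0 1 * mf T 1 0 = (2 - l ^ 2 - m ^ 2) * x * (1 + x)) :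
    mf (T * (f * T * f⁻¹) * T⁻¹ * (f * T * f⁻¹)⁻¹) 0 0 = kap l m x ∧
    mf (T * (f * T * f⁻¹) * T⁻¹ * (f * T * f⁻¹)⁻¹) 0 1 = mf T 0 1 * (x * psi l m x) ∧
    mf (T * (f * T * f⁻¹) * T⁻¹ * (f * T * f⁻¹)⁻¹) 1 0 = mf T 1 0 * (x * psi m l x) ∧
    mf (T * (f * T * f⁻¹) * T⁻¹ * (f * T * f⁻¹)⁻¹) 1 1 = kap m l x := by
  have hlm := hf.mul_eq
  have hlm2 : l ^ 2 * m ^ 2 = 1 := by rw [← mul_pow, hlm, one_pow]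
  have hi := hf.inv
  have F : mf (f * T * f⁻¹) 0 0 = mf T 0 0 ∧ mf (f * T * f⁻¹) 0 1 = l ^ 2 * mf T 0 1 ∧
      mf (f * T * f⁻¹) 1 0 = m ^ 2 * mf T 1 0 ∧ mf (f * T * f⁻¹) 1 1 = mf T 1 1 := by
    simp only [mf_mul (f * T) f⁻¹, mf_mul f T, hf.h00, hf.h01, hf.h10, hf.h11,
      hi.h00, hi.h01, hi.h10, hi.h11]
    refine ⟨?_, ?_, ?_, ?_⟩
    · linear_combination (mf T 0 0) * hlm
    · ring
    · ring
    · linear_combination (mf T 1 1) * hlm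
  obtain ⟨F0, F1, F2, F3⟩ := F
  set F := f * T * f⁻¹
  obtain ⟨i0, i1, i2, i3⟩ := mf_inv F
  obtain ⟨j0, j1, j2, j3⟩ := mf_inv T
  rw [F3] at i0
  rw [F1] at i1
  rw [F2] at i2
  rw [F0] at i3
  simp only [mf_mul (T * F * T⁻¹) F⁻¹, mf_mul (T * F) T⁻¹, mf_mul T F, F0, F1, F2, F3, i0, i1, i2, i3,
    j0, j1, j2, j3]
  rw [h00, h11]
  have hbc' : mf T 0 1 * mf T 1 0 = (2 - m ^ 2 - l ^ 2) * x * (1 + x) := by rw [hbc]; ring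
  refine ⟨?_, ?_, ?_, ?_⟩
  · unfold kap
    rw [← hbc]; ring
  · unfold psi
    linear_combination (mf T 0 1 * (l ^ 2 * ((1 + x - x * m ^ 2) * l ^ 2 + (1 + x - x * l ^ 2))
      - m ^ 2 * (l ^ 2 * (1 + x - x * l ^ 2) + (1 + x - x * m ^ 2)))) * hbc
  · unfold psi
    linear_combination (mf T 1 0 * (m ^ 2 * ((1 + x - x * l ^ 2) * m ^ 2 + (1 + x - x * m ^ 2))
      - l ^ 2 * (m ^ 2 * (1 + x - x * m ^ 2) + (1 + x - x * l ^ 2)))) * hbc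
  · unfold kap
    rw [← hbc']; ring

lemma iso (Γ : Subgroup SL2C) (hΓ : IsDiscreteSubgroup Γ) {f : SL2C} {l m : ℂ} (hf : IsDg f l m)
    (hfΓ : f ∈ Γ) (hl : ‖l‖ = 1) (hm : ‖m‖ = 1) (h0 : l ^ 2 ≠ m ^ 2) (h1 : l ^ 2 - m ^ 2 ≠ 1)
    (h2 : m ^ 2 - l ^ 2 ≠ 1) : ∃ e : ℝ, 0 < e ∧ ∀ x ∈ SS Γ f, ‖x‖ < e → x = 0 := by
  have hlm := hf.mul_eq
  have hlm2 : l ^ 2 * m ^ 2 = 1 := by rw [← mul_pow, hlm, one_pow]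
  have hpl := psi_zero hlm h0 h1
  have hpm := psi_zero (by rw [mul_comm]; exact hlm) h0.symm h2
  have cl := psi_cont l m
  have cm := psi_cont m l
  have kl := kap_cont l m
  have km := kap_cont m l
  have E1 : ∀ᶠ x in 𝓝 (0 : ℂ), psi l m x ≠ 0 := cl.continuousAt.eventually_ne hpl
  have E2 : ∀ᶠ x in 𝓝 (0 : ℂ), psi m l x ≠ 0 := cm.continuousAt.eventually_ne hpm
  have small : ∀ F : ℂ → ℂ, Continuous F → F 0 = 0 → ∀ᶠ x in 𝓝 (0 : ℂ), ‖F x‖ < 1 := by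
    intro F hF hF0
    have : Continuous fun x => ‖F x‖ := hF.norm
    exact this.continuousAt.eventually_lt continuousAt_const (by simp [hF0])
  have E3 := small (fun x => kap l m x * (x * psi l m x) * (1 - l ^ 2)) (by fun_prop) (by simp)
  have E4 := small (fun x => kap m l x * (x * psi m l x) * (1 - m ^ 2)) (by fun_prop) (by simp)
  have E5 := small (fun x => x * ((2 - l ^ 2 - m ^ 2) * (1 + x) * x * psi l m x * psi m l x))
    (by fun_prop) (by simp)
  have E6 := small (fun x => x) (by fun_prop) (by simp)
  obtain ⟨e, he, hE⟩ := Metric.eventually_nhds_iff.1 (E1.and (E2.and (E3.and (E4.and (E5.and E6)))))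
  refine ⟨e, he, ?_⟩
  rintro x ⟨g, hg, hx⟩ hxe
  by_contra hx0
  set R : ℝ := 3 + ‖mf (g * f * g⁻¹ * f⁻¹) 0 1‖ + ‖mf (g * f * g⁻¹ * f⁻¹) 1 0‖ with hR
  set Z : Set SL2C := {t | t ∈ {g : SL2C | g ∈ Γ ∧ ∀ i j, ‖mf g i j‖ ≤ R} ∧ ∃ g : SL2C, t = g * f * g⁻¹ * f⁻¹ ∧
    mf g 0 1 * mf g 1 0 ≠ 0 ∧ ‖mf g 0 1 * mf g 1 0‖ < e} with hZ
  have hZf : Z.Finite := (disc_finite hΓ R).subset (fun t ht => ht.1)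
  have dg : ∀ g : SL2C, ‖mf g 0 1 * mf g 1 0‖ < e → ‖mf (g * f * g⁻¹ * f⁻¹) 0 0‖ ≤ 3 ∧
      ‖mf (g * f * g⁻¹ * f⁻¹) 1 1‖ ≤ 3 := by
    intro g hge
    obtain ⟨-, -, -, -, -, hlt⟩ := hE (show dist (mf g 0 1 * mf g 1 0) 0 < e by simpa using hge)
    obtain ⟨a0, a1, a2, a3⟩ := comm_entries (g := g) hf
    rw [a0, a3]
    have key : ∀ y : ℂ, ‖y‖ = 1 → ‖1 + mf g 0 1 * mf g 1 0 - mf g 0 1 * mf g 1 0 * y ^ 2‖ ≤ 3 := by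
      intro y hy
      refine (norm_sub_le _ _).trans ?_
      have := norm_add_le 1 (mf g 0 1 * mf g 1 0)
      rw [norm_mul _ (y ^ 2), norm_pow, hy]
      simp only [norm_one, one_pow, mul_one] at *
      linarith
    exact ⟨key m hm, key l hl⟩
  have inZ : ∀ g : SL2C, g * f * g⁻¹ ∈ Γ → mf g 0 1 * mf g 1 0 ≠ 0 → ‖mf g 0 1 * mf g 1 0‖ < e →
      ‖mf (g * f * g⁻¹ * f⁻¹) 0 1‖ ≤ R → ‖mf (g * f * g⁻¹ * f⁻¹) 1 0‖ ≤ R → g * f * g⁻¹ * f⁻¹ ∈ Z := by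
    intro g' hg h1 h2 h3 h4
    refine ⟨⟨Γ.mul_mem hg (Γ.inv_mem hfΓ), ?_⟩, g', rfl, h1, h2⟩
    obtain ⟨d1, d2⟩ := dg g' h2
    have hR3 : 3 ≤ R := by
      rw [hR]; linarith [norm_nonneg (mf (g * f * g⁻¹ * f⁻¹) 0 1), norm_nonneg (mf (g * f * g⁻¹ * f⁻¹) 1 0)]
    intro i j
    fin_cases i <;> fin_cases j
    · exact d1.trans hR3
    · exact h3
    · exact h4
    · exact d2.trans hR3
  have hZn : Z.Nonempty := by
    refine ⟨_, inZ g hg (hx ▸ hx0) (hx ▸ hxe) ?_ ?_⟩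
    · rw [hR]; linarith [norm_nonneg (mf (g * f * g⁻¹ * f⁻¹) 0 1), norm_nonneg (mf (g * f * g⁻¹ * f⁻¹) 1 0)]
    · rw [hR]; linarith [norm_nonneg (mf (g * f * g⁻¹ * f⁻¹) 0 1), norm_nonneg (mf (g * f * g⁻¹ * f⁻¹) 1 0)]
  obtain ⟨t, ht, hmin⟩ := Set.exists_min_image Z (fun t => ‖mf t 0 1‖) hZf hZn
  clear hx hxe hx0
  obtain ⟨⟨htΓ, htR⟩, g', rfl, hx0, hxe⟩ := ht
  obtain ⟨n1, n2, n3, n4, n5, n6⟩ := hE (show dist (mf g' 0 1 * mf g' 1 0) 0 < e by simpa using hxe)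
  obtain ⟨a0, a1, a2, a3⟩ := comm_entries (g := g') hf
  have hd := mf_det g'
  have hbc : mf (g' * f * g'⁻¹ * f⁻¹) 0 1 * mf (g' * f * g'⁻¹ * f⁻¹) 1 0 =
      (2 - l ^ 2 - m ^ 2) * (mf g' 0 1 * mf g' 1 0) * (1 + mf g' 0 1 * mf g' 1 0) := by
    rw [a1, a2]; grind
  have hx1 : 1 + mf g' 0 1 * mf g' 1 0 ≠ 0 := by
    intro h
    have : mf g' 0 1 * mf g' 1 0 = -1 := by linear_combination h
    rw [this] at n6
    simp at n6
  have hs : 2 - l ^ 2 - m ^ 2 ≠ 0 := by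
    intro h
    apply h0
    have : (l ^ 2 - 1) ^ 2 = 0 := by grind
    have := pow_eq_zero_iff (two_ne_zero) |>.1 this
    linear_combination 2 * this + h
  set t := g' * f * g'⁻¹ * f⁻¹ with ht
  obtain ⟨k0, k1, k2, k3⟩ := kword hf a0 a3 hbc
  set x' := mf g' 0 1 * mf g' 1 0 with hx'
  have hkΓ : t * (f * t * f⁻¹) * t⁻¹ * (f * t * f⁻¹)⁻¹ ∈ Γ := by
    have : f * t * f⁻¹ ∈ Γ := Γ.mul_mem (Γ.mul_mem hfΓ htΓ) (Γ.inv_mem hfΓ)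
    exact Γ.mul_mem (Γ.mul_mem (Γ.mul_mem htΓ this) (Γ.inv_mem htΓ)) (Γ.inv_mem this)
  set k := t * (f * t * f⁻¹) * t⁻¹ * (f * t * f⁻¹)⁻¹ with hk
  have hbc0 : mf t 0 1 * mf t 1 0 ≠ 0 := by
    rw [hbc]
    exact mul_ne_zero (mul_ne_zero hs hx0) hx1
  have hb0 := left_ne_zero_of_mul hbc0
  have hc0 := right_ne_zero_of_mul hbc0
  obtain ⟨u0, u1, u2, u3⟩ := comm_entries (g := k) hf
  have hb1 : mf (k * f * k⁻¹ * f⁻¹) 0 1 = mf t 0 1 * (kap l m x' * (x' * psi l m x') * (1 - l ^ 2)) := by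
    rw [u1, k0, k1]; ring
  have hb2 : mf (k * f * k⁻¹ * f⁻¹) 1 0 = mf t 1 0 * (kap m l x' * (x' * psi m l x') * (1 - m ^ 2)) := by
    rw [u2, k2, k3]; ring
  have hlt1 : ‖mf (k * f * k⁻¹ * f⁻¹) 0 1‖ < ‖mf t 0 1‖ := by
    rw [hb1, norm_mul]
    exact mul_lt_of_lt_one_right (norm_pos_iff.2 hb0) n3
  have hlt2 : ‖mf (k * f * k⁻¹ * f⁻¹) 1 0‖ < ‖mf t 1 0‖ := by
    rw [hb2, norm_mul]
    exact mul_lt_of_lt_one_right (norm_pos_iff.2 hc0) n4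
  have hmem : k * f * k⁻¹ * f⁻¹ ∈ Z := by
    apply inZ k
    · exact Γ.mul_mem (Γ.mul_mem hkΓ hfΓ) (Γ.inv_mem hkΓ)
    · rw [k1, k2]
      exact mul_ne_zero (mul_ne_zero hb0 (mul_ne_zero hx0 n1)) (mul_ne_zero hc0 (mul_ne_zero hx0 n2))
    · have : mf k 0 1 * mf k 1 0 = x' * (x' * ((2 - l ^ 2 - m ^ 2) * (1 + x') * x' * psi l m x' * psi m l x')) := by
        rw [k1, k2]; linear_combination (x' ^ 2 * psi l m x' * psi m l x') * hbc
      rw [this, norm_mul]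
      exact (mul_lt_of_lt_one_right (norm_pos_iff.2 hx0) n5).trans hxe
    · exact hlt1.le.trans (htR 0 1)
    · exact hlt2.le.trans (htR 1 0)
  exact absurd (hmin _ hmem) (not_le.2 hlt1)

lemma no_parab (Γ : Subgroup SL2C) (hΓ : IsDiscreteSubgroup Γ) {f : SL2C} {l m : ℂ} (hf : IsDg f l m)
    (hfΓ : f ∈ Γ) (h0 : l ^ 2 ≠ 1) (h0' : m ^ 2 ≠ 1) (h1 : ‖1 - l ^ 2‖ < 1)
    (h2 : ‖1 - m ^ 2‖ < 1) (u : SL2C) (hu : u ∈ Γ) (hu0 : mf u 0 0 = 1) (hu1 : mf u 1 1 = 1)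
    (hqr : mf u 0 1 * mf u 1 0 = 0) (hne : 0 < ‖mf u 0 1‖ + ‖mf u 1 0‖) : False := by
  set R : ℝ := 1 + ‖mf u 0 1‖ + ‖mf u 1 0‖ with hR
  set Z : Set SL2C := {u | u ∈ {g : SL2C | g ∈ Γ ∧ ∀ i j, ‖mf g i j‖ ≤ R} ∧ mf u 0 0 = 1 ∧ mf u 1 1 = 1 ∧
    mf u 0 1 * mf u 1 0 = 0 ∧ 0 < ‖mf u 0 1‖ + ‖mf u 1 0‖}
  have hZf : Z.Finite := (disc_finite hΓ R).subset (fun t ht => ht.1)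
  have hR1 : 1 ≤ R := by rw [hR]; linarith
  have hZn : Z.Nonempty := by
    refine ⟨u, ⟨hu, ?_⟩, hu0, hu1, hqr, hne⟩
    intro i j
    have := norm_nonneg (mf u 0 1)
    have := norm_nonneg (mf u 1 0)
    fin_cases i <;> fin_cases j
    · simpa [hu0] using hR1
    · show ‖mf u 0 1‖ ≤ R
      linarith
    · show ‖mf u 1 0‖ ≤ R
      linarith
    · simpa [hu1] using hR1
  obtain ⟨t, ht, hmin⟩ := Set.exists_min_image Z (fun t => ‖mf t 0 1‖ + ‖mf t 1 0‖) hZf hZn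
  obtain ⟨⟨htΓ, htR⟩, ht0, ht1, htqr, htne⟩ := ht
  obtain ⟨a0, a1, a2, a3⟩ := comm_entries (g := t) hf
  rw [htqr] at a0 a3
  rw [ht0] at a1
  rw [ht1] at a2
  have e1 : ‖mf (t * f * t⁻¹ * f⁻¹) 0 1‖ = ‖mf t 0 1‖ * ‖1 - l ^ 2‖ := by
    rw [a1, one_mul, norm_mul]
  have e2 : ‖mf (t * f * t⁻¹ * f⁻¹) 1 0‖ = ‖mf t 1 0‖ * ‖1 - m ^ 2‖ := by
    rw [a2, mul_one, norm_mul]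
  have p1 : 0 < ‖1 - l ^ 2‖ := norm_pos_iff.2 (sub_ne_zero.2 h0.symm)
  have p2 : 0 < ‖1 - m ^ 2‖ := norm_pos_iff.2 (sub_ne_zero.2 h0'.symm)
  have n1 := norm_nonneg (mf t 0 1)
  have n2 := norm_nonneg (mf t 1 0)
  have hlt : ‖mf (t * f * t⁻¹ * f⁻¹) 0 1‖ + ‖mf (t * f * t⁻¹ * f⁻¹) 1 0‖ < ‖mf t 0 1‖ + ‖mf t 1 0‖ := by
    rw [e1, e2]
    rcases n1.eq_or_lt with h | h
    · rw [← h] at htne ⊢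
      nlinarith
    · nlinarith
  have hpos : 0 < ‖mf (t * f * t⁻¹ * f⁻¹) 0 1‖ + ‖mf (t * f * t⁻¹ * f⁻¹) 1 0‖ := by
    rw [e1, e2]
    rcases n1.eq_or_lt with h | h
    · rw [← h] at htne ⊢
      have : 0 < ‖mf t 1 0‖ := by linarith
      positivity
    · positivity
  have hmem : t * f * t⁻¹ * f⁻¹ ∈ Z := by
    refine ⟨⟨Γ.mul_mem (Γ.mul_mem (Γ.mul_mem htΓ hfΓ) (Γ.inv_mem htΓ)) (Γ.inv_mem hfΓ), ?_⟩,
      by rw [a0]; ring, by rw [a3]; ring, ?_, hpos⟩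
    · intro i j
      fin_cases i <;> fin_cases j
      · show ‖mf (t * f * t⁻¹ * f⁻¹) 0 0‖ ≤ R
        simpa [a0] using hR1
      · show ‖mf (t * f * t⁻¹ * f⁻¹) 0 1‖ ≤ R
        rw [e1]; nlinarith [htR 0 1]
      · show ‖mf (t * f * t⁻¹ * f⁻¹) 1 0‖ ≤ R
        rw [e2]; nlinarith [htR 1 0]
      · show ‖mf (t * f * t⁻¹ * f⁻¹) 1 1‖ ≤ R
        simpa [a3] using hR1
    · rw [a1, a2]
      linear_combination (1 - l ^ 2) * (1 - m ^ 2) * htqr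
  exact absurd (hmin _ hmem) (not_le.2 hlt)

lemma no_P_neg_one (Γ : Subgroup SL2C) (hΓ : IsDiscreteSubgroup Γ) {f : SL2C} {l m : ℂ} (hf : IsDg f l m)
    (hfΓ : f ∈ Γ) (hlm2 : l ^ 2 ≠ m ^ 2) (h0 : l ^ 2 ≠ 1) (h0' : m ^ 2 ≠ 1) (h1 : ‖1 - l ^ 2‖ < 1)
    (h2 : ‖1 - m ^ 2‖ < 1) {x : ℂ} (hx : x ∈ SS Γ f) : (2 - l ^ 2 - m ^ 2) * x * (1 + x) ≠ -1 := by
  intro hP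
  obtain ⟨g, hg, hx⟩ := hx
  have hh := (word_data hf g x _ hx rfl).2.2.2
  rw [hP] at hh
  obtain ⟨c0, c1, c2, c3⟩ := conj_entries (g := g) hf
  set h := g * f * g⁻¹
  have hdet := mf_det h
  have htr : mf h 0 0 + mf h 1 1 = l + m := by rw [c0, c3]; ring
  have hlm := hf.mul_eq
  have hs : l + m ≠ 0 := by
    intro h
    apply hlm2
    linear_combination (l - m) * h
  have hd : m - l ≠ 0 := by
    intro h
    apply hlm2
    linear_combination (-l - m) * h
  have hd' : l - m ≠ 0 := fun h => hd (by linear_combination -h)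
  have h01 : mf h 0 1 ≠ 0 := by intro h; simp [h] at hh
  have h10 : mf h 1 0 ≠ 0 := by intro h; simp [h] at hh
  have hm0 : m ≠ 0 := by intro h; simp [h] at hlm
  have hl0 : l ≠ 0 := by intro h; simp [h] at hlm
  obtain ⟨d0, d1, d2, d3⟩ := conj_entries (g := h) hf
  rw [hh] at d0 d3
  have hprod : mf h 0 0 * mf h 1 1 = 0 := by linear_combination hdet + hh
  have hk : h * f * h⁻¹ * f ∈ Γ := Γ.mul_mem (Γ.mul_mem (Γ.mul_mem hg hfΓ) (Γ.inv_mem hg)) hfΓ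
  have hpos : ∀ a b : ℂ, (a ≠ 0 ∨ b ≠ 0) → 0 < ‖a‖ + ‖b‖ := by
    rintro a b (h | h)
    · have := norm_pos_iff.2 h; positivity
    · have := norm_pos_iff.2 h; positivity
  refine no_parab Γ hΓ hf hfΓ h0 h0' h1 h2 _ hk ?_ ?_ ?_ (hpos _ _ ?_)
  all_goals simp only [mf_mul (h * f * h⁻¹) f, d0, d1, d2, d3, hf.h00, hf.h01, hf.h10, hf.h11]
  · linear_combination hlm
  · linear_combination hlm
  · linear_combination (mf h 0 1 * (m - l) * m * mf h 1 0 * (l - m) * l) * hprod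
  · rcases mul_eq_zero.1 hprod with h3 | h3
    · right
      have : mf h 1 1 ≠ 0 := by intro h; rw [h3, h] at htr; exact hs (by linear_combination -htr)
      simp [this, hl0, hd', h10]
    · left
      have : mf h 0 0 ≠ 0 := by intro h; rw [h3, h] at htr; exact hs (by linear_combination -htr)
      simp [this, hm0, hd, h01]

/-- iteration of a contraction on a set isolated at `0`. -/
lemma contraction (Z : Set ℂ) (e : ℝ) (he : 0 < e) (hZ : ∀ x ∈ Z, e ≤ ‖x‖) (φ : ℂ → ℂ)
    (hφ : ∀ x ∈ Z, φ x ∈ Z) (θ : ℝ) (hθ0 : 0 ≤ θ) (hθ : θ < 1) (hc : ∀ x ∈ Z, ‖φ x‖ ≤ θ * ‖x‖) (x : ℂ) :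
    x ∉ Z := by
  intro hx
  have h1 : ∀ k : ℕ, φ^[k] x ∈ Z ∧ ‖φ^[k] x‖ ≤ θ ^ k * ‖x‖ := by
    intro k
    induction k with
    | zero => simpa using hx
    | succ k ih =>
      rw [Function.iterate_succ_apply']
      refine ⟨hφ _ ih.1, (hc _ ih.1).trans ?_⟩
      rw [pow_succ']
      nlinarith [ih.2]
  have h2 : Tendsto (fun k : ℕ => θ ^ k * ‖x‖) atTop (𝓝 (0 * ‖x‖)) :=
    (tendsto_pow_atTop_nhds_zero_of_lt_one hθ0 hθ).mul_const _
  rw [zero_mul] at h2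
  obtain ⟨k, hk⟩ := (h2.eventually (gt_mem_nhds he)).exists
  have := hZ _ (h1 k).1
  linarith [(h1 k).2]

/-- The closure properties of the parameter set. -/
structure Sys (S : Set ℂ) (σ : ℝ) : Prop where
  iso : ∃ e : ℝ, 0 < e ∧ ∀ x ∈ S, ‖x‖ < e → x = 0
  symm : ∀ x ∈ S, -1 - x ∈ S
  P : ∀ x ∈ S, σ * x * (1 + x) ∈ S
  Q : ∀ x ∈ S, x * (1 - σ * (1 + x)) ^ 2 ∈ S
  R3 : ∀ x ∈ S, σ * x * (1 + x) * (2 - σ * (1 + x)) ^ 2 ∈ S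
  w14 : ∀ x ∈ S, x * ((2 - σ * (1 + x)) ^ 2 - (2 - σ * (1 + x)) - 1) ^ 2 ∈ S
  w15 : ∀ x ∈ S, σ * x * (1 + x) * ((2 - σ * (1 + x)) ^ 2 - 1) ^ 2 ∈ S

lemma Sys_SS (Γ : Subgroup SL2C) (hΓ : IsDiscreteSubgroup Γ) {f : SL2C} {l m : ℂ} (hf : IsDg f l m)
    (hfΓ : f ∈ Γ) (hl : ‖l‖ = 1) (hm : ‖m‖ = 1) (h0 : l ^ 2 ≠ m ^ 2) (h1 : l ^ 2 - m ^ 2 ≠ 1)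
    (h2 : m ^ 2 - l ^ 2 ≠ 1) (σ : ℝ) (hσ : (σ : ℂ) = 2 - l ^ 2 - m ^ 2) : Sys (SS Γ f) σ where
  iso := iso Γ hΓ hf hfΓ hl hm h0 h1 h2
  symm x hx := SS_symm hf hfΓ hx
  P x hx := by rw [hσ]; exact SS_P hf hfΓ hx
  Q x hx := by
    have := SS_Q hf hfΓ hx rfl
    rw [hσ]; convert this using 1; ring
  R3 x hx := by rw [hσ]; exact SS_R3 hf hfΓ hx rfl
  w14 x hx := by rw [hσ]; exact SS_14 hf hfΓ hx rfl
  w15 x hx := by rw [hσ]; exact SS_15 hf hfΓ hx rfl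

/-- `x` is a real number of `[-1,0]`. -/
def Seg (x : ℂ) : Prop := x.im = 0 ∧ -1 ≤ x.re ∧ x.re ≤ 0

lemma Seg_symm {x : ℂ} (h : Seg (-1 - x)) : Seg x := by
  obtain ⟨h1, h2, h3⟩ := h
  simp at h1 h2 h3
  exact ⟨h1, by linarith, by linarith⟩

lemma Seg_real {r : ℝ} (h1 : -1 ≤ r) (h2 : r ≤ 0) : Seg (r : ℂ) := by
  refine ⟨?_, ?_, ?_⟩ <;> simp [h1, h2]

lemma nsq (z : ℂ) : ‖z‖ ^ 2 = z.re ^ 2 + z.im ^ 2 := by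
  rw [← Complex.normSq_eq_norm_sq, Complex.normSq_apply]; ring

lemma key6 {S : Set ℂ} (hS : Sys S 1) {x : ℂ} (hx : x ∈ S) (hF : ‖x‖ + ‖1 + x‖ < 2) : Seg x := by
  have hole : ∀ x ∈ S, ‖x‖ < 1 → x = 0 := by
    intro x hx hx1
    by_contra hx0
    obtain ⟨e, he, hiso⟩ := hS.iso
    refine contraction {y | y ∈ S ∧ y ≠ 0 ∧ ‖y‖ ≤ ‖x‖} e he ?_ (fun y => y ^ 3) ?_ (‖x‖ ^ 2) (by positivity)
      (by nlinarith [norm_nonneg x]) ?_ x ⟨hx, hx0, le_rfl⟩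
    · rintro y ⟨h1, h2, h3⟩
      by_contra h
      exact h2 (hiso y h1 (not_le.1 h))
    · rintro y ⟨h1, h2, h3⟩
      refine ⟨?_, pow_ne_zero _ h2, ?_⟩
      · have := hS.Q y h1
        convert this using 1
        push_cast; ring
      · simp only [norm_pow]
        have : ‖y‖ ^ 2 ≤ 1 := by nlinarith [norm_nonneg y]
        nlinarith [norm_nonneg y]
    · rintro y ⟨h1, h2, h3⟩
      simp only [norm_pow]
      have : ‖y‖ ^ 2 ≤ ‖x‖ ^ 2 := by gcongr
      nlinarith [norm_nonneg y]
  by_cases h : ‖x‖ < 1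
  · rw [hole x hx h]
    exact ⟨by simp, by simp, by simp⟩
  · apply Seg_symm
    have h2 : ‖-1 - x‖ < 1 := by
      have : ‖-1 - x‖ = ‖1 + x‖ := by rw [← norm_neg]; congr 1; ring
      rw [this]; linarith
    rw [hole _ (hS.symm x hx) h2]
    exact ⟨by simp, by simp, by simp⟩

lemma key7 {S : Set ℂ} {σ : ℝ} (hσ : 0 < σ) (hS : Sys S σ) (hne : ∀ x ∈ S, σ * x * (1 + x) ≠ -1)
    {x : ℂ} (hx : x ∈ S) (hF : ‖x‖ + ‖1 + x‖ < 2 / σ - 1) : Seg x := by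
  by_contra hs
  have hx0 : x ≠ 0 := by
    rintro rfl
    exact hs ⟨by simp, by simp, by simp⟩
  have hx1 : x ≠ -1 := by
    rintro rfl
    exact hs ⟨by simp, by simp, by simp⟩
  obtain ⟨e, he, hiso⟩ := hS.iso
  set D := ‖x‖ + ‖1 + x‖ with hD
  have hσD : σ * (D + 1) / 2 < 1 := by
    have : D + 1 < 2 / σ := by linarith
    rw [lt_div_iff₀ hσ] at this
    linarith
  have hD0 : 0 ≤ D := by positivity
  have tri : ∀ y : ℂ, ‖1 + y‖ ≤ 1 + ‖y‖ := fun y => by simpa using norm_add_le 1 y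
  have tri2 : ∀ y : ℂ, 1 ≤ ‖y‖ + ‖1 + y‖ := fun y => by
    have := norm_sub_le (1 + y) y
    simp at this
    linarith
  refine contraction {y | y ∈ S ∧ y ≠ 0 ∧ y ≠ -1 ∧ ‖y‖ + ‖1 + y‖ ≤ D} e he ?_ (fun y => σ * y * (1 + y)) ?_
    (σ * (D + 1) / 2) (by positivity) hσD ?_ x ⟨hx, hx0, hx1, le_rfl⟩
  · rintro y ⟨h1, h2, h3⟩
    by_contra h
    exact h2 (hiso y h1 (not_le.1 h))
  · rintro y ⟨h1, h2, h3, h4⟩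
    have h3' : 1 + y ≠ 0 := fun h => h3 (by linear_combination h)
    refine ⟨hS.P y h1, mul_ne_zero (mul_ne_zero (by exact_mod_cast hσ.ne') h2) h3', hne y h1, ?_⟩
    have e1 : ‖(σ : ℂ) * y * (1 + y)‖ = σ * ‖y‖ * ‖1 + y‖ := by
      rw [norm_mul, norm_mul, Complex.norm_real, Real.norm_of_nonneg hσ.le]
    have hσ2 : σ < 2 := by nlinarith [tri2 x]
    have e2 : ‖1 + (σ : ℂ) * y * (1 + y)‖ ≤ 1 - σ / 4 + σ / 4 * ‖1 + 2 * y‖ ^ 2 := by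
      have : 1 + (σ : ℂ) * y * (1 + y) = ((1 - σ / 4 : ℝ) : ℂ) + ((σ / 4 : ℝ) : ℂ) * (1 + 2 * y) ^ 2 := by
        push_cast; ring
      rw [this]
      refine (norm_add_le _ _).trans ?_
      rw [norm_mul, Complex.norm_real, Complex.norm_real, Real.norm_of_nonneg (by linarith),
        Real.norm_of_nonneg (by positivity), norm_pow]
    have e3 : ‖1 + 2 * y‖ ^ 2 = 2 * ‖y‖ ^ 2 + 2 * ‖1 + y‖ ^ 2 - 1 := by
      rw [nsq, nsq, nsq]; simp; ring
    rw [e3] at e2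
    rw [e1]
    have := tri2 y
    set u := ‖y‖
    set v := ‖1 + y‖
    have h5 : σ * (u + v + 1) / 2 ≤ 1 := by nlinarith
    have h6 : 0 ≤ (u + v - 1) * (1 - σ * (u + v + 1) / 2) := mul_nonneg (by linarith) (by linarith)
    nlinarith
  · rintro y ⟨h1, h2, h3, h4⟩
    have e1 : ‖(σ : ℂ) * y * (1 + y)‖ = σ * ‖y‖ * ‖1 + y‖ := by
      rw [norm_mul, norm_mul, Complex.norm_real, Real.norm_of_nonneg hσ.le]
    rw [e1]
    have h5 : ‖1 + y‖ ≤ (D + 1) / 2 := by linarith [tri y]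
    have : σ * ‖y‖ * ‖1 + y‖ ≤ σ * ‖y‖ * ((D + 1) / 2) := by gcongr
    linarith

lemma quad_root {z : ℂ} {b c : ℝ} (h : z ^ 2 + b * z + c = 0) (hd : b ^ 2 < 4 * c) :
    ‖z‖ ^ 2 = c ∧ z.re = - b / 2 := by
  have h1 := congrArg Complex.re h
  have h2 := congrArg Complex.im h
  simp [pow_two] at h1 h2
  rw [nsq]
  have h3 : z.im * (2 * z.re + b) = 0 := by linarith
  rcases mul_eq_zero.1 h3 with h4 | h4
  · rw [h4] at h1
    nlinarith [sq_nonneg (2 * z.re + b)]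
  · have : b = -2 * z.re := by linarith
    subst this
    constructor <;> nlinarith

lemma key5_aux {a κ : ℝ} (ha0 : 0 ≤ a) (ha1 : a < 1) (hκa : 0.38 < κ) (hκb : κ < 0.383) :
    a * (a ^ 2 + κ * (2 - a) ^ 2 - (1 + κ) * κ) < (1 + κ) * (1 - κ) := by
  have h4 : 0 < (1 + κ) * (1 - κ) + a * (1 - 3 * κ) + (1 + κ) * a ^ 2 := by
    have e1 : κ ^ 2 < 0.383 ^ 2 := by gcongr
    have e2 : a * (3 * κ - 1) ≤ 1 * (3 * κ - 1) := by
      apply mul_le_mul_of_nonneg_right ha1.le; linarith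
    have e3 : 0 ≤ (1 + κ) * a ^ 2 := by positivity
    nlinarith
  have h3 := mul_pos (sub_pos.2 ha1) h4
  linarith [show (1 + κ) * (1 - κ) - a * (a ^ 2 + κ * (2 - a) ^ 2 - (1 + κ) * κ) = (1 - a) * ((1 + κ) * (1 - κ) + a * (1 - 3 * κ) + (1 + κ) * a ^ 2) by ring]

set_option maxHeartbeats 800000 in
lemma key5 {S : Set ℂ} {σ : ℝ} (hσ : σ = (5 - √5) / 2) (hS : Sys S σ)
    {x : ℂ} (hx : x ∈ S) (hF : σ * (‖x‖ + ‖1 + x‖) < 2) : Seg x := by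
  have h5 : √5 ^ 2 = 5 := Real.sq_sqrt (by norm_num)
  have h5a : (2.236 : ℝ) < √5 := by rw [Real.lt_sqrt] <;> norm_num
  have h5b : √5 < (2.237 : ℝ) := by rw [Real.sqrt_lt'] <;> norm_num
  set κ : ℝ := (3 - √5) / 2 with hκ
  have hκ2 : κ ^ 2 = 3 * κ - 1 := by rw [hκ]; nlinarith
  have hσκ : σ = 1 + κ := by rw [hσ, hκ]; ring
  have hκa : 0.38 < κ := by rw [hκ]; linarith
  have hκb : κ < 0.383 := by rw [hκ]; linarith
  have hσ0 : 0 < σ := by linarith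
  have hfac : ∀ γ : ℂ, γ * (γ + κ) ^ 2 = -κ → γ = -1 ∨ (‖γ‖ ^ 2 = κ ∧ γ.re = -(2 * κ - 1) / 2) := by
    intro γ h
    have hk : (κ : ℂ) ^ 2 = 3 * κ - 1 := by exact_mod_cast hκ2
    have : (γ + 1) * (γ ^ 2 + (2 * κ - 1 : ℝ) * γ + κ) = 0 := by
      push_cast
      linear_combination h - γ * hk
    rcases mul_eq_zero.1 this with h1 | h1
    · left; linear_combination h1
    · right
      exact quad_root h1 (by nlinarith)
  have hQ : ∀ x ∈ S, ∃ x' ∈ S, σ * x' = (σ * x) * (σ * x + κ) ^ 2 := by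
    intro x hx
    refine ⟨_, hS.Q x hx, ?_⟩
    rw [hσκ]; push_cast; ring
  have hnr : ∀ x : ℂ, ‖(σ : ℂ) * x‖ = σ * ‖x‖ := by
    intro x
    rw [norm_mul, Complex.norm_real, Real.norm_of_nonneg hσ0.le]
  have hole : ∀ x ∈ S, ‖σ * x‖ < 1 - κ → σ * x = 0 ∨ σ * x = -κ := by
    intro x hx hx1
    by_contra hcon
    rw [not_or] at hcon
    obtain ⟨e, he, hiso⟩ := hS.iso
    refine contraction {y | (∃ x ∈ S, y = σ * x) ∧ y ≠ 0 ∧ y ≠ -κ ∧ ‖y‖ ≤ ‖σ * x‖} (σ * e) (by positivity) ?_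
      (fun y => y * (y + κ) ^ 2) ?_ ((‖σ * x‖ + κ) ^ 2) (by positivity)
      (by nlinarith [norm_nonneg (σ * x)]) ?_ (σ * x) ⟨⟨x, hx, rfl⟩, hcon.1, hcon.2, le_rfl⟩
    · rintro y ⟨⟨x, h1, rfl⟩, h2, h3⟩
      by_contra h
      rw [hnr] at h
      have : ‖x‖ < e := by nlinarith
      exact h2 (by rw [hiso x h1 this, mul_zero])
    · rintro y ⟨⟨x', h1, rfl⟩, h2, h3, h4⟩
      refine ⟨?_, ?_, ?_, ?_⟩
      · obtain ⟨x'', h5, h6⟩ := hQ x' h1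
        exact ⟨x'', h5, h6.symm⟩
      · exact mul_ne_zero h2 (pow_ne_zero _ (fun h => h3 (by linear_combination h)))
      · intro h
        rcases hfac _ h with h7 | ⟨h7, -⟩
        · rw [h7] at h4
          simp at h4
          rw [hnr] at hx1
          have : σ * ‖x‖ = |σ| * ‖x‖ := by rw [abs_of_pos hσ0]
          linarith
        · have : ‖(σ : ℂ) * x'‖ < 1 - κ := h4.trans_lt hx1
          nlinarith [norm_nonneg ((σ : ℂ) * x')]
      · have e1 : ‖(σ : ℂ) * x' + κ‖ ≤ 1 := by
          refine (norm_add_le _ _).trans ?_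
          rw [Complex.norm_real, Real.norm_of_nonneg (by linarith)]
          linarith
        simp only [norm_mul (_ * _) (_ ^ 2), norm_pow]
        have : ‖(σ : ℂ) * x' + κ‖ ^ 2 ≤ 1 := by nlinarith [norm_nonneg ((σ : ℂ) * x' + κ)]
        nlinarith [norm_nonneg ((σ : ℂ) * x')]
    · rintro y ⟨-, h2, h3, h4⟩
      have e1 : ‖y + κ‖ ≤ ‖σ * x‖ + κ := by
        refine (norm_add_le _ _).trans ?_
        rw [Complex.norm_real, Real.norm_of_nonneg (by linarith)]
        linarith
      simp only [norm_mul y, norm_pow]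
      have : ‖y + κ‖ ^ 2 ≤ (‖σ * x‖ + κ) ^ 2 := by gcongr
      nlinarith [norm_nonneg y]
  have main : ∀ x ∈ S, ‖x‖ ≤ ‖1 + x‖ → σ * (‖x‖ + ‖1 + x‖) < 2 → Seg x := by
    intro x hx hle hF
    obtain ⟨x', hx', hxx⟩ := hQ x hx
    have hb : ‖σ * x + σ‖ = σ * ‖1 + x‖ := by rw [← hnr]; congr 1; ring
    have ha := hnr x
    set γ : ℂ := σ * x with hγ
    set a := ‖γ‖
    set b := ‖γ + σ‖
    have ha1 : a < 1 := by nlinarith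
    have ha0 : 0 ≤ a := norm_nonneg _
    have hb0 : 0 ≤ b := norm_nonneg _
    have hab : a + b < 2 := by rw [ha, hb]; linarith
    have hst : σ * ‖γ + κ‖ ^ 2 = a ^ 2 + κ * b ^ 2 - σ * κ := by
      simp only [a, b, nsq]
      simp
      rw [hσκ]; ring
    have hlt : ‖σ * x'‖ < 1 - κ := by
      rw [hxx, norm_mul, norm_pow]
      have h1 : b ^ 2 ≤ (2 - a) ^ 2 := by nlinarith
      have h2 : a * (σ * ‖γ + κ‖ ^ 2) < σ * (1 - κ) := by
        rw [hst, hσκ]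
        have : a * (a ^ 2 + κ * b ^ 2 - (1 + κ) * κ) ≤ a * (a ^ 2 + κ * (2 - a) ^ 2 - (1 + κ) * κ) := by
          have : κ * b ^ 2 ≤ κ * (2 - a) ^ 2 := by nlinarith
          nlinarith
        linarith [key5_aux ha0 ha1 hκa hκb]
      show a * ‖γ + κ‖ ^ 2 < _
      have h4 : σ * (a * ‖γ + κ‖ ^ 2) < σ * (1 - κ) := by linarith
      exact lt_of_mul_lt_mul_left h4 hσ0.le
    have hc : ∀ r : ℝ, σ * x = r → -1 ≤ r → r ≤ 0 → Seg x := by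
      intro r hr h1 h2
      have : x = ((r / σ : ℝ) : ℂ) := by
        push_cast
        rw [← hr]
        field_simp [hσ0.ne']
      rw [this]
      apply Seg_real
      · rw [le_div_iff₀ hσ0]; nlinarith
      · exact div_nonpos_of_nonpos_of_nonneg h2 hσ0.le
    rcases hole x' hx' hlt with h | h
    · rw [hxx] at h
      rcases mul_eq_zero.1 h with h | h
      · exact hc 0 (by rw [← hγ, h]; simp) (by norm_num) le_rfl
      · have := pow_eq_zero_iff (two_ne_zero) |>.1 h
        exact hc (-κ) (by rw [← hγ]; push_cast; linear_combination this) (by linarith) (by linarith)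
    · rw [hxx] at h
      rcases hfac _ h with h | ⟨h, h'⟩
      · exact hc (-1) (by rw [← hγ, h]; simp) le_rfl (by norm_num)
      · exfalso
        have hb2 : b ^ 2 = 3 - κ := by
          have : b ^ 2 = a ^ 2 + 2 * γ.re * σ + σ ^ 2 := by
            simp only [a, b, nsq]; simp; ring
          rw [this, h', hσκ]
          have h9 : a ^ 2 = κ := h
          linear_combination h9 - hκ2
        have h6 : a ^ 2 = κ := h
        have h7 : 0.616 < a := by
          by_contra hc
          have : a ^ 2 ≤ 0.616 ^ 2 := by gcongr; linarith
          linarith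
        have h8 : 1.617 < b := by
          by_contra hc
          have : b ^ 2 ≤ 1.617 ^ 2 := by gcongr; linarith
          linarith
        linarith
  rcases le_total ‖x‖ ‖1 + x‖ with h | h
  · exact main x hx h hF
  · apply Seg_symm
    have e1 : ‖-1 - x‖ = ‖1 + x‖ := by rw [← norm_neg]; congr 1; ring
    have e2 : 1 + (-1 - x) = -x := by ring
    apply main _ (hS.symm x hx)
    · rw [e1, e2, norm_neg]; exact h
    · rw [e1, e2, norm_neg]; linarith

lemma key4_aux {N d : ℝ} (hN : 0.38 ≤ N) (hN1 : N < 1) (hd0 : 0 ≤ d) (hd1 : d ≤ 0.22)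
    (hd2 : d ≤ 0.35 * (1 - N)) :
    0 < N*(1-N)*(4-N)+d*(-6*N^2+10*N-2)+d^2*(8*N-8)-8*d^3 := by
  have h1 : 0 ≤ d * (-6*N^2+10*N-2) := by
    apply mul_nonneg hd0; nlinarith
  have h2 : d ^ 2 ≤ 0.0484 := by nlinarith
  have h3 : d ^ 2 * (1 - N + d) ≤ 0.0484 * (1.35 * (1 - N)) := by
    apply mul_le_mul h2 (by linarith) (by linarith) (by norm_num)
  have h4 : 1.2 * (1 - N) ≤ N * (4 - N) * (1 - N) := by
    apply mul_le_mul_of_nonneg_right _ (by linarith)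
    nlinarith
  nlinarith

set_option maxHeartbeats 1600000 in
lemma key4 {S : Set ℂ} (hS : Sys S 2) {x : ℂ} (hx : x ∈ S)
    (hF : ‖x‖ + ‖1 + x‖ < (1 + √3) / 2) : Seg x := by
  have h3 : √3 ^ 2 = 3 := Real.sq_sqrt (by norm_num)
  have h3a : (1.732 : ℝ) < √3 := by rw [Real.lt_sqrt] <;> norm_num
  have h3b : √3 < (1.733 : ℝ) := by rw [Real.sqrt_lt'] <;> norm_num
  set W : Set ℂ := {y | -y / 2 ∈ S} with hW
  have wsym : ∀ y ∈ W, 2 - y ∈ W := by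
    intro y hy
    have := hS.symm _ hy
    show -(2 - y) / 2 ∈ S
    convert this using 1; ring
  have wP : ∀ y ∈ W, y * (2 - y) ∈ W := by
    intro y hy
    have := hS.P _ hy
    show -(y * (2 - y)) / 2 ∈ S
    convert this using 1; push_cast; ring
  have wQ : ∀ y ∈ W, y * (y - 1) ^ 2 ∈ W := by
    intro y hy
    have := hS.Q _ hy
    show -(y * (y - 1) ^ 2) / 2 ∈ S
    convert this using 1; push_cast; ring
  have wR : ∀ y ∈ W, y ^ 3 * (2 - y) ∈ W := by
    intro y hy
    have := hS.R3 _ hy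
    show -(y ^ 3 * (2 - y)) / 2 ∈ S
    convert this using 1; push_cast; ring
  have H1 : ∀ y ∈ W, ‖y‖ < 0.618 → y = 0 := by
    intro y hy hy1
    by_contra hy0
    obtain ⟨e, he, hiso⟩ := hS.iso
    have hy' := norm_nonneg y
    have hth : ‖y‖ ^ 2 * (2 + ‖y‖) < 1 := by
      calc ‖y‖ ^ 2 * (2 + ‖y‖) ≤ 0.618 ^ 2 * (2 + 0.618) := by gcongr
        _ < 1 := by norm_num
    have hb : ∀ z : ℂ, ‖z‖ ≤ ‖y‖ → ‖z ^ 3 * (2 - z)‖ ≤ ‖y‖ ^ 2 * (2 + ‖y‖) * ‖z‖ := by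
      intro z hz
      rw [norm_mul, norm_pow]
      have e1 : ‖2 - z‖ ≤ 2 + ‖y‖ := by
        refine (norm_sub_le _ _).trans ?_
        have : ‖(2:ℂ)‖ = 2 := by simp
        linarith
      calc ‖z‖ ^ 3 * ‖2 - z‖ = ‖z‖ ^ 2 * ‖2 - z‖ * ‖z‖ := by ring
        _ ≤ _ := by gcongr
    refine contraction {y' | y' ∈ W ∧ y' ≠ 0 ∧ ‖y'‖ ≤ ‖y‖} (2 * e) (by positivity) ?_ (fun y => y ^ 3 * (2 - y)) ?_ (‖y‖ ^ 2 * (2 + ‖y‖)) (by positivity)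
      hth ?_ y ⟨hy, hy0, le_rfl⟩
    · rintro z ⟨h1, h2, -⟩
      by_contra h
      have := hiso _ h1 (by rw [norm_div, norm_neg]; simp; linarith)
      apply h2
      linear_combination -2 * this
    · rintro z ⟨h1, h2, h4⟩
      refine ⟨wR z h1, mul_ne_zero (pow_ne_zero _ h2) ?_, (hb z h4).trans ?_⟩
      · intro h
        have : z = 2 := by linear_combination -h
        rw [this] at h4
        simp at h4; linarith
      · nlinarith [norm_nonneg z]
    · rintro z ⟨h1, h2, h4⟩
      exact hb z h4
  have H2 : ∀ y ∈ W, ‖y - 1‖ < 1 → y = 1 := by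
    have A : ∀ y ∈ W, ‖y - 1‖ < 1 / 2 → y = 1 := by
      intro y hy hy1
      have h0 := norm_nonneg (y - 1)
      have h1 : ‖y * (y - 1) ^ 2‖ < 0.618 := by
        rw [norm_mul, norm_pow]
        have : ‖y‖ ≤ 3 / 2 := by
          have := norm_add_le (y - 1) 1
          simp at this
          linarith
        calc ‖y‖ * ‖y - 1‖ ^ 2 ≤ 3 / 2 * (1 / 2) ^ 2 := by gcongr
          _ < _ := by norm_num
      rcases mul_eq_zero.1 (H1 _ (wQ y hy) h1) with h | h
      · rw [h] at hy1; norm_num at hy1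
      · have := pow_eq_zero_iff two_ne_zero |>.1 h
        linear_combination this
    intro y hy hy1
    by_contra hy0
    refine contraction {z | 1 + z ∈ W ∧ z ≠ 0 ∧ ‖z‖ ≤ ‖y - 1‖} (1 / 2) (by norm_num) ?_ (fun z => - z ^ 2) ?_ ‖y - 1‖ (by positivity)
      hy1 ?_ (y - 1) ⟨by convert hy using 1; ring, sub_ne_zero.2 hy0, le_rfl⟩
    · rintro z ⟨h1, h2, -⟩
      by_contra h
      apply h2
      have := A _ h1 (by simpa using h)
      linear_combination this
    · rintro z ⟨h1, h2, h4⟩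
      refine ⟨?_, neg_ne_zero.2 (pow_ne_zero _ h2), ?_⟩
      · convert wP _ h1 using 1; ring
      · simp only [norm_neg, norm_pow]
        nlinarith [norm_nonneg z]
    · rintro z ⟨h1, h2, h4⟩
      simp only [norm_neg, norm_pow]
      nlinarith [norm_nonneg z]
  have H3 : ∀ y ∈ W, ‖y‖ ≤ ‖y - 2‖ → ‖y‖ + ‖y - 2‖ < 1 + √3 → y = 0 ∨ y = 1 := by
    intro y hy hle hF
    by_contra hcon
    rw [not_or] at hcon
    have hn : 0.618 ≤ ‖y‖ := by
      by_contra h; exact hcon.1 (H1 y hy (not_le.1 h))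
    have hn1 : 1 ≤ ‖y - 1‖ := by
      by_contra h; exact hcon.2 (H2 y hy (not_le.1 h))
    obtain ⟨n, hnn⟩ : ∃ n, n = ‖y‖ := ⟨_, rfl⟩
    obtain ⟨d, hd⟩ : ∃ d, d = n ^ 2 / 2 - y.re := ⟨_, rfl⟩
    have hN : n ^ 2 = y.re ^ 2 + y.im ^ 2 := by rw [hnn, nsq]
    have hA1 : ‖y - 1‖ ^ 2 = 1 + 2 * d := by
      rw [nsq, hd, hN]; simp; ring
    have hA2 : ‖y - 2‖ ^ 2 = 4 * d - n ^ 2 + 4 := by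
      rw [nsq, hd, hN]; simp; ring
    rw [← hnn] at hn hle hF
    have hd0 : 0 ≤ d := by nlinarith
    have hd1 : d < (1 - n) * (√3 - n) / 2 := by
      have : ‖y - 2‖ ^ 2 < (1 + √3 - n) ^ 2 := by
        apply pow_lt_pow_left₀ (by linarith) (norm_nonneg _) two_ne_zero
      nlinarith
    have hnlt : n < 1.37 := by linarith
    have hn1' : n < 1 := by
      by_contra h
      nlinarith
    have hw : ‖y * (y - 1) ^ 2 - 1‖ < 1 := by
      have e1 : ‖y * (y - 1) ^ 2 - 1‖ ^ 2 = 1 - (n ^ 2*(1-n ^ 2)*(4-n ^ 2)+d*(-6*(n ^ 2)^2+10*n ^ 2-2)+d^2*(8*n ^ 2-8)-8*d^3) := by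
        rw [nsq, hd, hN]
        simp [pow_two, Complex.mul_re, Complex.mul_im]
        ring
      have f1 : (1 - n) * (√3 - n) ≤ (1 - n) * 1.115 :=
        mul_le_mul_of_nonneg_left (by linarith) (by linarith)
      have f2 : (1 - n) * 1.618 ≤ (1 - n) * (1 + n) :=
        mul_le_mul_of_nonneg_left (by linarith) (by linarith)
      have f3 : 0.618 ^ 2 ≤ n ^ 2 := by gcongr
      have f4 : (1 - n) * (1 + n) = 1 - n ^ 2 := by ring
      have e2 := key4_aux (N := n ^ 2) (d := d) (by linarith) (by linarith) hd0
        (by linarith) (by linarith)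
      have e3 : ‖y * (y - 1) ^ 2 - 1‖ ^ 2 < 1 := by linarith
      nlinarith [norm_nonneg (y * (y - 1) ^ 2 - 1)]
    have hw1 := H2 _ (wQ y hy) hw
    have hw2 : n * (1 + 2 * d) = 1 := by
      rw [← hA1, hnn, ← norm_pow, ← norm_mul, hw1]; simp
    have h5 : n * (2 * d) < n * ((1 - n) * (√3 - n)) := by
      apply mul_lt_mul_of_pos_left _ (by linarith); linarith
    have h6 : (1 - n) * 1 < (1 - n) * (n * (√3 - n)) := by linarith
    have h7 : 1 < n * (√3 - n) := lt_of_mul_lt_mul_left h6 (by linarith)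
    nlinarith [sq_nonneg (n - √3 / 2)]
  have main : ∀ x ∈ S, ‖x‖ ≤ ‖1 + x‖ → ‖x‖ + ‖1 + x‖ < (1 + √3) / 2 → Seg x := by
    intro x hx hle hF
    have e1 : ‖-2 * x‖ = 2 * ‖x‖ := by rw [norm_mul]; simp
    have e2 : ‖-2 * x - 2‖ = 2 * ‖1 + x‖ := by
      rw [show -2 * x - 2 = -2 * (1 + x) by ring, norm_mul]; simp
    rcases H3 (-2 * x) (by show -(-2 * x) / 2 ∈ S; convert hx using 1; ring)
      (by rw [e1, e2]; linarith) (by rw [e1, e2]; linarith) with h | h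
    · have : x = ((0 : ℝ) : ℂ) := by push_cast; linear_combination (-1/2) * h
      rw [this]; exact Seg_real (by norm_num) (by norm_num)
    · have : x = ((-1/2 : ℝ) : ℂ) := by push_cast; linear_combination (-1/2) * h
      rw [this]; exact Seg_real (by norm_num) (by norm_num)
  rcases le_total ‖x‖ ‖1 + x‖ with h | h
  · exact main x hx h hF
  · apply Seg_symm
    have e1 : ‖-1 - x‖ = ‖1 + x‖ := by rw [← norm_neg]; congr 1; ring
    have e2 : 1 + (-1 - x) = -x := by ring
    apply main _ (hS.symm x hx)
    · rw [e1, e2, norm_neg]; exact h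
    · rw [e1, e2, norm_neg]; linarith

/-- the golden conjugate -/
def gc : ℝ := (1 - √5) / 2

lemma gc_sq : gc ^ 2 = gc + 1 := by
  have h5 : √5 ^ 2 = 5 := Real.sq_sqrt (by norm_num)
  unfold gc; linear_combination h5 / 4

lemma gc_lo : -0.6180340 < gc := by
  have : √5 < (2.236068 : ℝ) := by rw [Real.sqrt_lt'] <;> norm_num
  unfold gc; linarith

lemma gc_hi : gc < -0.6180339 := by
  have : (2.2360678 : ℝ) < √5 := by rw [Real.lt_sqrt] <;> norm_num
  unfold gc; linarith

/-- closure properties in the coordinate `T = -1 - 3 * x`. -/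
structure Sys3 (U : Set ℂ) : Prop where
  sym : ∀ T ∈ U, 1 - T ∈ U
  wP : ∀ T ∈ U, T * T - T ∈ U
  wQ : ∀ T ∈ U, (T + 1) * ((T - 1) * (T - 1)) - 1 ∈ U
  w3 : ∀ T ∈ U, (T + 1) * (2 - T) * (T * T) - 1 ∈ U
  w4 : ∀ T ∈ U, (T + 1) * ((T * T - T - 1) * (T * T - T - 1)) - 1 ∈ U
  wC : ∀ T ∈ U, (T + 1) * ((T - 1) * (T - 1) * ((T - 1) * (T - 1)) - (T * T - T - 1) * (2 - T)) - 1 ∈ U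
  h1 : ∀ T ∈ U, ‖T + 1‖ < 0.245 → T = -1
  h2 : ∀ T ∈ U, ‖T‖ < 0.28 → T = 0
  h3 : ∀ T ∈ U, ‖T - gc‖ < 0.25 → T = gc

lemma Sys3_of_Sys {S : Set ℂ} (hS : Sys S 3)
    (hC : ∀ x ∈ S, ∀ T : ℂ, T = -1 - 3 * x → x * ((T - 1) ^ 4 - (T ^ 2 - T - 1) * (2 - T)) ∈ S) :
    Sys3 {T | -(1 + T) / 3 ∈ S} := by
  have hsym : ∀ T : ℂ, -(1 + T) / 3 ∈ S → -(1 + (1 - T)) / 3 ∈ S := by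
    intro T hT
    have := hS.symm _ hT
    convert this using 1; ring
  have h3 : ∀ T : ℂ, -(1 + T) / 3 ∈ S → -(1 + ((T + 1) * (2 - T) * (T * T) - 1)) / 3 ∈ S := by
    intro T hT
    have := hS.R3 _ hT
    convert this using 1; push_cast; ring
  have h4 : ∀ T : ℂ, -(1 + T) / 3 ∈ S → -(1 + ((T + 1) * ((T * T - T - 1) * (T * T - T - 1)) - 1)) / 3 ∈ S := by
    intro T hT
    have := hS.w14 _ hT
    convert this using 1; push_cast; ring
  have H1 : ∀ T : ℂ, -(1 + T) / 3 ∈ S → ‖T + 1‖ < 0.245 → T = -1 := by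
    intro y hy hy1
    by_contra hy0
    obtain ⟨e, he, hiso⟩ := hS.iso
    set ρ := ‖y + 1‖ with hρ
    have hy' : 0 ≤ ρ := norm_nonneg _
    have hth : ρ ^ 2 * (3 + ρ) * (2 + ρ) ^ 2 < 1 := by
      calc ρ ^ 2 * (3 + ρ) * (2 + ρ) ^ 2 ≤ 0.245 ^ 2 * (3 + 0.245) * (2 + 0.245) ^ 2 := by gcongr
        _ < 1 := by norm_num
    have hb : ∀ z : ℂ, ‖z‖ ≤ ρ → ‖z ^ 3 * (3 - z) * (2 - z) ^ 2‖ ≤ ρ ^ 2 * (3 + ρ) * (2 + ρ) ^ 2 * ‖z‖ := by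
      intro z hz
      rw [norm_mul, norm_mul, norm_pow, norm_pow]
      have e1 : ‖2 - z‖ ≤ 2 + ρ := by
        refine (norm_sub_le _ _).trans ?_
        have : ‖(2:ℂ)‖ = 2 := by simp
        linarith
      have e2 : ‖3 - z‖ ≤ 3 + ρ := by
        refine (norm_sub_le _ _).trans ?_
        have : ‖(3:ℂ)‖ = 3 := by simp
        linarith
      calc ‖z‖ ^ 3 * ‖3 - z‖ * ‖2 - z‖ ^ 2 = ‖z‖ ^ 2 * ‖3 - z‖ * ‖2 - z‖ ^ 2 * ‖z‖ := by ring
        _ ≤ _ := by gcongr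
    refine contraction {z | -z / 3 ∈ S ∧ z ≠ 0 ∧ ‖z‖ ≤ ρ} (3 * e) (by positivity) ?_
      (fun z => z ^ 3 * (3 - z) * (2 - z) ^ 2) ?_ (ρ ^ 2 * (3 + ρ) * (2 + ρ) ^ 2) (by positivity)
      hth ?_ (y + 1) ⟨by convert hy using 1; ring, fun h => hy0 (by linear_combination h), le_rfl⟩
    · rintro z ⟨h1, h2, -⟩
      by_contra h
      have := hiso _ h1 (by rw [norm_div, norm_neg]; simp; linarith)
      apply h2
      linear_combination -3 * this
    · rintro z ⟨h1, h2, h4⟩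
      have ne : ∀ k : ℝ, 1 ≤ k → (k : ℂ) - z ≠ 0 := by
        intro k hk h
        have : z = k := by linear_combination -h
        rw [this, Complex.norm_real, Real.norm_of_nonneg (by linarith)] at h4
        linarith
      have ne3 := ne 3 (by norm_num)
      have ne2 := ne 2 (by norm_num)
      refine ⟨?_, ?_, (hb z h4).trans ?_⟩
      · have := hS.w15 _ h1
        convert this using 1; push_cast; ring
      · exact mul_ne_zero (mul_ne_zero (pow_ne_zero _ h2) (by exact_mod_cast ne3)) (pow_ne_zero _ (by exact_mod_cast ne2))
      · nlinarith [norm_nonneg z]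
    · rintro z ⟨h1, h2, h4⟩
      exact hb z h4
  refine ⟨hsym, ?_, ?_, h3, h4, ?_, H1, ?_, ?_⟩
  · intro T hT
    have := hsym _ (show -(1 + (1 + T - T * T)) / 3 ∈ S by
      have := hS.P _ hT
      convert this using 1; push_cast; ring)
    show -(1 + (T * T - T)) / 3 ∈ S
    convert this using 1; ring
  · intro T hT
    have := hS.Q _ hT
    show -(1 + ((T + 1) * ((T - 1) * (T - 1)) - 1)) / 3 ∈ S
    convert this using 1; push_cast; ring
  · intro T hT
    have := hC _ hT T (by ring)
    show -(1 + _) / 3 ∈ S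
    convert this using 1; ring
  · intro T hT hT1
    have h0 := norm_nonneg T
    have key : ‖(T + 1) * (2 - T) * (T * T) - 1 + 1‖ < 0.245 := by
      rw [sub_add_cancel, norm_mul, norm_mul, norm_mul]
      have e1 : ‖2 - T‖ ≤ 2.28 := by
        refine (norm_sub_le _ _).trans ?_
        have : ‖(2:ℂ)‖ = 2 := by simp
        linarith
      have e2 : ‖T + 1‖ ≤ 1.28 := by
        refine (norm_add_le _ _).trans ?_
        simp; linarith
      calc ‖T + 1‖ * ‖2 - T‖ * (‖T‖ * ‖T‖) ≤ 1.28 * 2.28 * (0.28 * 0.28) := by gcongr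
        _ < _ := by norm_num
    have := H1 _ (h3 T hT) key
    have h5 : (T + 1) * (2 - T) * (T * T) = 0 := by linear_combination this
    have ne1 : T + 1 ≠ 0 := by
      intro h
      have : T = -1 := by linear_combination h
      rw [this] at hT1; norm_num at hT1
    have ne2 : 2 - T ≠ 0 := by
      intro h
      have : T = 2 := by linear_combination -h
      rw [this] at hT1; norm_num at hT1
    simpa [ne1, ne2] using h5
  · intro T hT hT1
    have g1 := gc_lo
    have g2 := gc_hi
    have hg : (gc : ℂ) ^ 2 = gc + 1 := by exact_mod_cast gc_sq
    have hfac : (T + 1) * ((T * T - T - 1) * (T * T - T - 1)) = (T + 1) * (((T - gc) * (T - 1 + gc)) * ((T - gc) * (T - 1 + gc))) := by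
      have : T * T - T - 1 = (T - gc) * (T - 1 + gc) := by linear_combination hg
      rw [this]
    have n1 : ∀ k : ℝ, ‖T + k‖ ≤ 0.25 + |gc + k| := by
      intro k
      have := norm_add_le (T - gc) ((gc + k : ℝ) : ℂ)
      rw [Complex.norm_real, Real.norm_eq_abs] at this
      have e : T - gc + ((gc + k : ℝ) : ℂ) = T + k := by push_cast; ring
      rw [e] at this
      linarith
    have a1 : |gc + 1| ≤ 0.382 := by rw [abs_le]; constructor <;> linarith
    have a2 : |gc + (gc - 1)| ≤ 2.2361 := by rw [abs_le]; constructor <;> linarith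
    have e1 : ‖T + 1‖ ≤ 0.632 := by have := n1 1; push_cast at this; linarith
    have e2 : ‖T - 1 + gc‖ ≤ 2.4861 := by
      have := n1 (gc - 1)
      push_cast at this
      rw [show T + (gc - 1) = T - 1 + gc by ring] at this
      linarith
    have key : ‖(T + 1) * ((T * T - T - 1) * (T * T - T - 1)) - 1 + 1‖ < 0.245 := by
      rw [sub_add_cancel, hfac]
      simp only [norm_mul]
      calc ‖T + 1‖ * (‖T - gc‖ * ‖T - 1 + gc‖ * (‖T - gc‖ * ‖T - 1 + gc‖)) ≤ 0.632 * (0.25 * 2.4861 * (0.25 * 2.4861)) := by gcongr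
        _ < _ := by norm_num
    have := H1 _ (h4 T hT) key
    have h5 : (T + 1) * (((T - gc) * (T - 1 + gc)) * ((T - gc) * (T - 1 + gc))) = 0 := by
      rw [← hfac]; linear_combination this
    have ne1 : T + 1 ≠ 0 := by
      intro h
      have : T = ((-1 : ℝ) : ℂ) := by push_cast; linear_combination h
      rw [this, ← Complex.ofReal_sub, Complex.norm_real, Real.norm_eq_abs, abs_lt] at hT1
      linarith [hT1.1, hT1.2]
    have ne2 : T - 1 + gc ≠ 0 := by
      intro h
      have : T = ((1 - gc : ℝ) : ℂ) := by push_cast; linear_combination h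
      rw [this, ← Complex.ofReal_sub, Complex.norm_real, Real.norm_eq_abs, abs_lt] at hT1
      linarith [hT1.1, hT1.2]
    have h6 : T - gc = 0 := by simpa [ne1, ne2] using h5
    linear_combination h6

/-- upper bound for the absolute value of a Gaussian integer -/
def nA (a b : ℤ) : ℕ :=
  let x := a.natAbs
  let y := b.natAbs
  let s := max x y + min x y * min x y / (2 * max x y + 1) + 1
  (s + (x * x + y * y) / s) / 2 + 2

/-- first order Taylor models in fixed point arithmetic (unit `2^-20`) -/
structure TM where
  a : ℤ
  b : ℤ
  p : ℤ
  q : ℤ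
  R : ℕ

def TM.add (x y : TM) : TM := ⟨x.a + y.a, x.b + y.b, x.p + y.p, x.q + y.q, x.R + y.R⟩
def TM.sub (x y : TM) : TM := ⟨x.a - y.a, x.b - y.b, x.p - y.p, x.q - y.q, x.R + y.R⟩
def TM.con (k : ℤ) : TM := ⟨k * 1048576, 0, 0, 0, 0⟩
def TM.B (x : TM) (r : ℕ) : ℕ := nA x.p x.q * r / 1048576 + 1
def TM.mul (r : ℕ) (x y : TM) : TM :=
  ⟨(x.a * y.a - x.b * y.b) / 1048576, (x.a * y.b + x.b * y.a) / 1048576,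
    (x.a * y.p - x.b * y.q + x.p * y.a - x.q * y.b) / 1048576,
    (x.a * y.q + x.b * y.p + x.p * y.b + x.q * y.a) / 1048576,
    (nA x.a x.b * y.R + nA y.a y.b * x.R + x.B r * y.B r + x.B r * y.R + y.B r * x.R + x.R * y.R)
      / 1048576 + 5⟩

def step (r : ℕ) (T : TM) : ℕ → TM
  | 0 => (TM.con 1).sub T
  | 1 => (T.mul r T).sub T
  | 2 => ((T.add (.con 1)).mul r ((T.sub (.con 1)).mul r (T.sub (.con 1)))).sub (.con 1)
  | 3 => (((T.add (.con 1)).mul r ((TM.con 2).sub T)).mul r (T.mul r T)).sub (.con 1)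
  | 4 => ((T.add (.con 1)).mul r ((((T.mul r T).sub T).sub (.con 1)).mul r
      (((T.mul r T).sub T).sub (.con 1)))).sub (.con 1)
  | _ => ((T.add (.con 1)).mul r ((((T.sub (.con 1)).mul r (T.sub (.con 1))).mul r
      ((T.sub (.con 1)).mul r (T.sub (.con 1)))).sub
      ((((T.mul r T).sub T).sub (.con 1)).mul r ((TM.con 2).sub T)))).sub (.con 1)

def stepC (T : ℂ) : ℕ → ℂ
  | 0 => 1 - T
  | 1 => T * T - T
  | 2 => (T + 1) * ((T - 1) * (T - 1)) - 1
  | 3 => (T + 1) * (2 - T) * (T * T) - 1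
  | 4 => (T + 1) * ((T * T - T - 1) * (T * T - T - 1)) - 1
  | _ => (T + 1) * ((T - 1) * (T - 1) * ((T - 1) * (T - 1)) - (T * T - T - 1) * (2 - T)) - 1

def gi (a b : ℤ) : ℂ := ⟨a, b⟩

lemma gi_norm (a b : ℤ) : ‖gi a b‖ ≤ nA a b := by
  have h0 : ‖gi a b‖ ^ 2 = (a : ℝ) ^ 2 + (b : ℝ) ^ 2 := by rw [nsq]; rfl
  unfold nA
  simp only
  set x := a.natAbs with hx
  set y := b.natAbs with hy
  have hx2 : (x : ℝ) ^ 2 = (a : ℝ) ^ 2 := by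
    have : (x : ℝ) = |(a : ℝ)| := by rw [hx, ← Int.cast_abs]; simp
    rw [this, sq_abs]
  have hy2 : (y : ℝ) ^ 2 = (b : ℝ) ^ 2 := by
    have : (y : ℝ) = |(b : ℝ)| := by rw [hy, ← Int.cast_abs]; simp
    rw [this, sq_abs]
  obtain ⟨s, hs⟩ : ∃ s, s = max x y + min x y * min x y / (2 * max x y + 1) + 1 := ⟨_, rfl⟩
  rw [← hs]
  have hs1 : (1 : ℝ) ≤ s := by
    have : 1 ≤ s := by rw [hs]; exact Nat.le_add_left _ _
    exact_mod_cast this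
  have h1 : ((x * x + y * y : ℕ) : ℝ) / s < ((x * x + y * y) / s : ℕ) + 1 := by
    rw [div_lt_iff₀ (by linarith)]
    have : x * x + y * y < ((x * x + y * y) / s + 1) * s := by
      have h3 : 0 < s := by exact_mod_cast (lt_of_lt_of_le one_pos hs1)
      have h6 := Nat.lt_mul_div_succ (x * x + y * y) h3
      rw [mul_comm s] at h6
      exact h6
    exact_mod_cast this
  set Q := (x * x + y * y) / s
  have h2 : s + Q ≤ 2 * ((s + Q) / 2 + 1) := by omega
  have h2' : (s : ℝ) + Q ≤ 2 * (((s + Q) / 2 : ℕ) + 1) := by exact_mod_cast h2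
  push_cast at h1
  push_cast
  have h4 : ‖gi a b‖ ^ 2 / s < Q + 1 := by
    rw [h0, ← hx2, ← hy2]
    convert h1 using 2; ring
  have h5 : 2 * ‖gi a b‖ ≤ s + ‖gi a b‖ ^ 2 / s := by
    have : 0 ≤ (s - ‖gi a b‖) ^ 2 / s := by positivity
    have e : (s - ‖gi a b‖) ^ 2 / s = s - 2 * ‖gi a b‖ + ‖gi a b‖ ^ 2 / s := by
      field_simp
      ring
    linarith
  linarith

def TRep (T : TM) (h z : ℂ) : Prop := ‖1048576 * z - gi T.a T.b - gi T.p T.q * h‖ ≤ T.R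

lemma gi_add (a b c d : ℤ) : gi (a + c) (b + d) = gi a b + gi c d := by
  apply Complex.ext <;> simp [gi]
lemma gi_sub (a b c d : ℤ) : gi (a - c) (b - d) = gi a b - gi c d := by
  apply Complex.ext <;> simp [gi]

lemma TRep_add {x y : TM} {h z w : ℂ} (hx : TRep x h z) (hy : TRep y h w) : TRep (x.add y) h (z + w) := by
  unfold TRep at *
  simp only [TM.add, gi_add]
  push_cast
  refine le_trans (le_of_eq ?_) ((norm_add_le _ _).trans (add_le_add hx hy))
  congr 1; ring

lemma TRep_sub {x y : TM} {h z w : ℂ} (hx : TRep x h z) (hy : TRep y h w) : TRep (x.sub y) h (z - w) := by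
  unfold TRep at *
  simp only [TM.sub, gi_sub]
  push_cast
  refine le_trans (le_of_eq ?_) ((norm_sub_le _ _).trans (add_le_add hx hy))
  congr 1; ring

lemma TRep_con (k : ℤ) (h : ℂ) : TRep (.con k) h k := by
  unfold TRep
  have e1 : gi 0 0 = 0 := by apply Complex.ext <;> simp [gi]
  have e2 : gi (k * 1048576) 0 = 1048576 * k := by
    apply Complex.ext <;> simp [gi]; ring
  simp [TM.con, e1, e2]

lemma round_err (A B : ℤ) : ‖gi A B - 1048576 * gi (A / 1048576) (B / 1048576)‖ ≤ 2 * 1048576 := by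
  refine (Complex.norm_le_abs_re_add_abs_im _).trans ?_
  have h1 : ∀ A : ℤ, |(A : ℝ) - 1048576 * ((A / 1048576 : ℤ) : ℝ)| ≤ 1048576 := by
    intro A
    have h1 : 1048576 * (A / 1048576) ≤ A := by omega
    have h2 : A ≤ 1048576 * (A / 1048576) + 1048576 := by omega
    have h1' : (1048576 : ℝ) * ((A / 1048576 : ℤ) : ℝ) ≤ A := by exact_mod_cast h1
    have h2' : (A : ℝ) ≤ 1048576 * ((A / 1048576 : ℤ) : ℝ) + 1048576 := by exact_mod_cast h2
    rw [abs_le]; constructor <;> linarith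
  have e1 := h1 A
  have e2 := h1 B
  have : (gi A B - 1048576 * gi (A / 1048576) (B / 1048576)).re = (A : ℝ) - 1048576 * ((A / 1048576 : ℤ) : ℝ) := by
    simp [gi]
  rw [this]
  have : (gi A B - 1048576 * gi (A / 1048576) (B / 1048576)).im = (B : ℝ) - 1048576 * ((B / 1048576 : ℤ) : ℝ) := by
    simp [gi]
  rw [this]
  linarith

lemma B_bound {x : TM} {r : ℕ} {h : ℂ} (hh : 1048576 * ‖h‖ ≤ r) : ‖gi x.p x.q * h‖ ≤ x.B r := by
  rw [norm_mul]
  unfold TM.B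
  have h1 := gi_norm x.p x.q
  have h2 : nA x.p x.q * r ≤ 1048576 * (nA x.p x.q * r / 1048576 + 1) := by omega
  have h3 : (nA x.p x.q : ℝ) * r ≤ 1048576 * ((nA x.p x.q * r / 1048576 + 1 : ℕ) : ℝ) := by exact_mod_cast h2
  have h4 : ‖gi x.p x.q‖ * (1048576 * ‖h‖) ≤ nA x.p x.q * r := by gcongr
  linarith

lemma TRep_mul {x y : TM} {r : ℕ} {h z w : ℂ} (hh : 1048576 * ‖h‖ ≤ r) (hr : r ≤ 1048576)
    (hx : TRep x h z) (hy : TRep y h w) : TRep (x.mul r y) h (z * w) := by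
  unfold TRep at hx hy
  have bx := B_bound (x := x) hh
  have bY := B_bound (x := y) hh
  have ax := gi_norm x.a x.b
  have ay := gi_norm y.a y.b
  have hh1 : ‖h‖ ≤ 1 := by
    have : (r : ℝ) ≤ 1048576 := by exact_mod_cast hr
    linarith
  unfold TRep
  simp only [TM.mul]
  have r1 := round_err (x.a * y.a - x.b * y.b) (x.a * y.b + x.b * y.a)
  have r2 := round_err (x.a * y.p - x.b * y.q + x.p * y.a - x.q * y.b)
    (x.a * y.q + x.b * y.p + x.p * y.b + x.q * y.a)
  have g1 : gi (x.a * y.a - x.b * y.b) (x.a * y.b + x.b * y.a) = gi x.a x.b * gi y.a y.b := by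
    apply Complex.ext <;> simp [gi]
  have g2 : gi (x.a * y.p - x.b * y.q + x.p * y.a - x.q * y.b)
    (x.a * y.q + x.b * y.p + x.p * y.b + x.q * y.a) = gi x.a x.b * gi y.p y.q + gi x.p x.q * gi y.a y.b := by
    apply Complex.ext <;> simp [gi] <;> ring
  rw [g1] at r1
  rw [g2] at r2
  generalize gi ((x.a * y.a - x.b * y.b) / 1048576) ((x.a * y.b + x.b * y.a) / 1048576) = V at *
  generalize gi ((x.a * y.p - x.b * y.q + x.p * y.a - x.q * y.b) / 1048576)
    ((x.a * y.q + x.b * y.p + x.p * y.b + x.q * y.a) / 1048576) = d at *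
  generalize gi x.a x.b = V1 at *
  generalize gi y.a y.b = V2 at *
  generalize gi x.p x.q = d1 at *
  generalize gi y.p y.q = d2 at *
  generalize nA x.a x.b = A1 at *
  generalize nA y.a y.b = A2 at *
  generalize x.B r = B1 at *
  generalize y.B r = B2 at *
  obtain ⟨E1, hE1⟩ : ∃ E1, E1 = 1048576 * z - V1 - d1 * h := ⟨_, rfl⟩
  obtain ⟨E2, hE2⟩ : ∃ E2, E2 = 1048576 * w - V2 - d2 * h := ⟨_, rfl⟩
  rw [← hE1] at hx
  rw [← hE2] at hy
  generalize x.R = R1 at *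
  generalize y.R = R2 at *
  have key : 1048576 * (1048576 * (z * w) - V - d * h) = (V1 * V2 - 1048576 * V) +
    (V1 * d2 + d1 * V2 - 1048576 * d) * h + (V1 * E2 + V2 * E1 + (d1 * h) * (d2 * h) + (d1 * h) * E2
      + (d2 * h) * E1 + E1 * E2) := by
    rw [hE1, hE2]; ring
  have n1 : ‖1048576 * (1048576 * (z * w) - V - d * h)‖ ≤ 2 * 1048576 + 2 * 1048576 * 1 +
      (A1 * R2 + A2 * R1 + B1 * B2 + B1 * R2 + B2 * R1 + R1 * R2 : ℝ) := by
    rw [key]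
    refine (norm_add_le _ _).trans (add_le_add ((norm_add_le _ _).trans (add_le_add r1 ?_)) ?_)
    · rw [norm_mul]; gcongr
    · refine (norm_add_le _ _).trans (add_le_add ?_ (by rw [norm_mul]; gcongr))
      refine (norm_add_le _ _).trans (add_le_add ?_ (by rw [norm_mul]; gcongr))
      refine (norm_add_le _ _).trans (add_le_add ?_ (by rw [norm_mul]; gcongr))
      refine (norm_add_le _ _).trans (add_le_add ?_ (by rw [norm_mul (d1 * h)]; gcongr))
      refine (norm_add_le _ _).trans (add_le_add ?_ ?_) <;> rw [norm_mul] <;> gcongr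
  rw [norm_mul] at n1
  have n2 : ‖(1048576 : ℂ)‖ = 1048576 := by simp
  rw [n2] at n1
  have h2 : A1 * R2 + A2 * R1 + B1 * B2 + B1 * R2 + B2 * R1 + R1 * R2 + 4 * 1048576 ≤
    1048576 * ((A1 * R2 + A2 * R1 + B1 * B2 + B1 * R2 + B2 * R1 + R1 * R2) / 1048576 + 5) := by omega
  have h3 : (A1 * R2 + A2 * R1 + B1 * B2 + B1 * R2 + B2 * R1 + R1 * R2 + 4 * 1048576 : ℝ) ≤
    1048576 * (((A1 * R2 + A2 * R1 + B1 * B2 + B1 * R2 + B2 * R1 + R1 * R2) / 1048576 + 5 : ℕ) : ℝ) := by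
    exact_mod_cast h2
  linarith

lemma TRep_step {x : TM} {r : ℕ} {h z : ℂ} (hh : 1048576 * ‖h‖ ≤ r) (hr : r ≤ 1048576)
    (hx : TRep x h z) (c : ℕ) : TRep (step r x c) h (stepC z c) := by
  have h1 : TRep (.con 1) h 1 := by simpa using TRep_con 1 h
  have h2 : TRep (.con 2) h 2 := by simpa using TRep_con 2 h
  unfold step stepC
  have M : ∀ {x y : TM} {z w : ℂ}, TRep x h z → TRep y h w → TRep (TM.mul r x y) h (z * w) :=
    fun h1 h2 => TRep_mul hh hr h1 h2
  have e1 := TRep_sub hx h1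
  have e2 := TRep_sub (TRep_sub (M hx hx) hx) h1
  have e3 := TRep_add hx h1
  have e4 := TRep_sub h2 hx
  split
  · exact TRep_sub h1 hx
  · exact TRep_sub (M hx hx) hx
  · exact TRep_sub (M e3 (M e1 e1)) h1
  · exact TRep_sub (M (M e3 e4) (M hx hx)) h1
  · exact TRep_sub (M e3 (M e2 e2)) h1
  · exact TRep_sub (M e3 (TRep_sub (M (M e1 e1) (M e1 e1)) (M e2 e4))) h1

lemma stepC_mem {U : Set ℂ} (hU : Sys3 U) {z : ℂ} (hz : z ∈ U) (c : ℕ) : stepC z c ∈ U := by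
  unfold stepC
  split
  · exact hU.sym z hz
  · exact hU.wP z hz
  · exact hU.wQ z hz
  · exact hU.w3 z hz
  · exact hU.w4 z hz
  · exact hU.wC z hz

/-- certificates: `O` outside of the ellipse, `L k i` the path `k` leads to hole `i`, `N` subdivide -/
inductive Ct where
  | O : Ct
  | L : ℕ → ℕ → Ct
  | N : Ct → Ct → Ct → Ct → Ct

def pathOf : ℕ → List ℕ
  | 0 => []
  | 1 => [1]
  | 2 => [5]
  | 3 => [2, 1, 3]
  | 4 => [1, 2, 1]
  | 5 => [3, 2, 1]
  | 6 => [1, 2, 5]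
  | 7 => [4, 3, 0, 3]
  | 8 => [1, 1, 1]
  | 9 => [2]
  | 10 => [3]
  | 11 => [4]
  | _ => [1, 3]

def holeE : ℕ → ℤ
  | 0 => -1048576
  | 1 => -648056
  | 2 => 0
  | 3 => 1048576
  | 4 => 1696632
  | _ => 2097152

def holeR : ℕ → ℕ
  | 0 => 256898
  | 1 => 262141
  | 2 => 293598
  | 3 => 293598
  | 4 => 262141
  | _ => 256898

def inHole (T : TM) (r i : ℕ) : Bool :=
  Nat.ble (nA (T.a - holeE i) T.b + T.B r + T.R + 1) (holeR i)

def avoid (T : TM) (r i : ℕ) : Bool :=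
  Nat.ble ((T.B r + T.R + 3) * (T.B r + T.R + 3)) ((T.a - holeE i).natAbs ^ 2 + T.b.natAbs ^ 2)

def leafOK (X Y : ℤ) (s k i : ℕ) : Bool :=
  let r := s * 1415 / 1000 + 1
  let T := (pathOf k).foldl (step r) ⟨X, Y, 1048576, 0, 0⟩
  Nat.ble r 1048576 && inHole T r i && (Nat.beq k 0 || (Nat.beq k 1 && Nat.beq i 1) || avoid T r i)

def outOK (X Y : ℤ) (s : ℕ) : Bool :=
  decide (0 ≤ 524288 - X - s) && decide (0 ≤ Y - s) &&
    decide (36804 * 261804 * 1048576 ^ 2 ≤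
      ((524288 - X - s) ^ 2 * 36804 + (Y - s) ^ 2 * 261804) * 100000)

def chk (X Y : ℤ) (s : ℕ) : Ct → Bool
  | .O => outOK X Y s
  | .L k i => leafOK X Y s k i
  | .N a b c d => Nat.beq s (2 * (s / 2)) &&
      chk (X - (s / 2 : ℕ)) (Y - (s / 2 : ℕ)) (s / 2) a && chk (X + (s / 2 : ℕ)) (Y - (s / 2 : ℕ)) (s / 2) b &&
      chk (X - (s / 2 : ℕ)) (Y + (s / 2 : ℕ)) (s / 2) c && chk (X + (s / 2 : ℕ)) (Y + (s / 2 : ℕ)) (s / 2) d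

def certs : List Ct := [
    (.L 4 2),
    (.N (.L 4 2) (.L 2 5) (.L 4 2) (.L 4 2)),
    (.N (.L 4 2) (.L 1 1) (.N (.L 4 2) (.L 1 1) (.L 12 1) (.L 1 1)) (.L 1 1)),
    (.N (.L 0 2) (.L 4 2) (.L 4 2) (.L 4 2)),
    (.N (.L 4 2) (.L 4 2) (.N (.L 2 5) (.L 2 5) (.L 2 5) (.L 2 5)) (.L 4 2)),
    (.N (.N (.L 2 5) (.L 2 5) (.L 2 5) (.L 2 5)) (.N (.L 2 5) (.L 2 5) (.L 2 5) (.L 2 5)) (.N (.L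
    2 5) (.N (.L 2 5) (.L 2 5) (.L 2 5) (.L 2 5)) (.N (.L 4 2) (.L 8 0) (.L 8 0) (.N (.L 4 2) (.L
    6 5) .O .O)) (.N (.L 6 5) (.L 6 5) (.L 8 0) (.L 6 5))) (.N (.N (.L 2 5) (.L 2 5) (.L 8 1) (.L
    4 2)) (.N (.L 2 5) (.L 4 2) (.L 4 2) (.L 4 2)) (.N (.L 8 1) (.N (.L 6 5) (.L 6 5) (.L 6 5) (.L
    6 5)) (.L 6 5) (.N (.L 6 5) (.L 6 5) (.L 6 5) (.L 6 5))) (.N (.N (.L 4 2) (.L 4 2) (.L 6 5)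
    (.L 6 5)) (.L 12 1) (.N (.L 6 5) (.L 6 5) (.L 6 5) (.L 6 5)) (.N (.L 6 5) (.L 6 5) (.L 6 5)
    (.L 6 5))))),
    (.L 0 2),
    (.N (.L 10 0) (.L 10 0) (.N (.L 3 0) (.N (.L 2 5) (.L 2 5) (.L 2 5) (.L 2 5)) (.L 2 5) (.L 2
    5)) (.N (.N (.L 2 5) (.L 2 5) (.L 2 5) (.L 2 5)) (.N (.L 2 5) (.L 2 5) (.L 2 5) (.L 2 5)) (.L
    2 5) (.L 2 5))),
    (.N (.N (.L 2 5) (.L 2 5) (.L 2 5) (.L 2 5)) (.N (.L 2 5) (.L 2 5) (.L 2 5) (.L 2 5)) (.N (.N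
    (.L 2 5) (.L 2 5) (.L 2 4) (.L 2 4)) (.L 2 5) (.L 2 4) (.L 2 4)) (.N (.L 2 5) (.L 2 5) (.N (.L
    2 4) (.L 2 4) .O .O) (.N (.L 4 2) (.L 4 2) (.L 4 2) (.L 4 2)))),
    (.N (.L 3 0) (.L 0 2) (.L 3 0) (.L 9 2)),
    (.N (.L 3 0) (.N (.L 3 0) (.L 3 0) (.L 3 0) (.L 3 0)) (.L 3 0) (.N (.L 2 5) (.L 2 5) (.L 2 5)
    (.L 2 5))),
    (.N (.N (.L 2 5) (.L 2 5) (.L 3 0) (.L 3 0)) (.N (.L 2 5) (.L 2 5) (.L 2 5) (.L 2 5)) (.N (.L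
    3 0) (.N (.L 3 0) (.L 3 0) (.L 3 0) (.N (.L 3 0) (.L 3 1) .O .O)) .O .O) (.N (.N (.L 3 1) (.L
    2 5) (.L 3 1) (.L 3 1)) (.N (.L 2 5) (.L 2 5) (.L 3 1) (.N (.L 2 5) (.L 2 5) (.L 2 5) (.L 2
    4))) .O (.N .O (.N (.L 3 1) (.L 2 4) .O .O) .O .O))),
    (.N (.L 0 1) (.L 3 0) (.L 10 1) (.L 3 0)),
    (.N (.N (.L 3 0) (.L 2 5) (.L 3 0) (.L 3 0)) (.L 3 0) (.N (.L 3 0) (.L 3 0) (.L 3 0) (.L 3 0))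
    (.L 3 0)),
    (.N (.N (.L 3 0) (.L 3 0) (.L 3 0) (.L 3 0)) (.N (.L 3 0) (.L 3 0) (.L 3 0) (.L 3 0)) .O (.N
    (.N .O (.L 3 0) .O .O) (.L 3 0) .O .O)),
    (.L 0 1),
    (.N (.N (.L 5 2) (.L 5 2) (.L 5 2) (.L 5 2)) (.N (.L 3 0) (.L 3 0) (.N (.L 3 0) (.L 3 0) (.L 5
    2) (.L 3 0)) (.L 3 0)) (.N (.L 5 2) (.N (.L 5 2) (.L 5 2) (.L 5 2) (.L 3 1)) (.N (.L 5 2) (.L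
    5 2) (.L 5 2) (.L 5 2)) (.N (.L 3 1) (.L 3 1) (.N (.L 3 1) (.L 3 1) (.L 3 1) (.L 3 1)) (.L 3
    1))) (.N (.N (.L 5 2) (.L 3 0) (.L 3 1) (.L 3 1)) (.L 3 0) (.N (.L 3 1) (.L 3 1) (.L 3 1) (.L
    3 1)) (.N (.L 3 0) (.L 3 0) (.L 3 0) (.L 3 0)))),
    (.N (.N (.N (.N .O (.L 3 1) .O .O) (.N (.L 3 1) (.L 3 1) .O (.L 3 1)) .O .O) (.N (.N (.L 3 1)
    (.L 3 1) (.N (.L 3 1) (.L 3 1) .O .O) (.N (.L 3 1) (.L 3 1) (.N (.L 3 1) (.L 3 1) .O .O) (.L 3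
    1))) (.N (.L 3 1) (.L 3 1) (.L 3 1) (.L 3 1)) .O (.N (.L 3 1) (.L 3 1) .O .O)) .O .O) (.N (.N
    (.L 3 1) (.L 3 1) (.L 3 1) (.L 3 1)) (.N (.L 3 1) (.L 3 0) (.L 3 1) (.L 3 0)) .O (.N (.N (.L 3
    1) (.L 3 0) .O .O) (.L 3 0) .O .O)) .O .O),
    (.N (.L 0 0) (.L 0 1) (.L 11 0) (.N (.L 5 2) (.L 0 1) (.L 5 2) (.L 5 2))),
    (.N (.N (.N (.L 11 0) (.L 11 0) (.L 11 1) (.N (.L 11 0) (.L 5 2) (.L 5 2) (.L 5 2))) (.L 11 0)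
    (.N (.L 11 1) (.N (.L 5 2) (.L 5 2) (.L 5 2) (.L 5 2)) (.L 11 1) (.N (.L 5 2) (.L 5 2) (.L 7
    5) (.L 5 2))) (.N (.L 5 2) (.L 5 2) (.L 5 2) (.L 5 2))) (.N (.L 5 2) (.L 5 2) (.L 5 2) (.L 5
    2)) (.N (.N (.N .O (.N .O (.L 7 4) .O .O) .O .O) (.N (.N (.L 7 4) (.L 7 4) .O (.L 7 4)) (.N
    (.L 5 2) (.L 5 2) (.L 5 2) (.L 5 2)) .O (.N (.L 7 4) (.L 5 2) .O .O)) .O .O) (.N (.N (.L 5 2)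
    (.L 5 2) (.L 5 2) (.L 5 2)) (.L 5 2) (.N .O (.L 5 2) .O .O) (.L 5 2)) .O .O) (.N (.N (.L 5 2)
    (.L 5 2) (.L 5 2) (.L 5 2)) (.L 5 2) (.N (.L 5 2) (.L 5 2) .O .O) (.L 10 2))),
    .O,
    (.N (.L 0 0) (.L 0 0) (.L 0 0) (.L 0 0)),
    (.N (.N .O (.N .O (.L 0 0) .O .O) .O .O) (.N (.L 11 1) (.L 11 1) .O (.N (.L 11 1) (.L 11 1) .O
    (.L 11 1))) .O .O),
    .O]

theorem chkAll_true : ∀ i : ℕ, i < 8 → ∀ j : ℕ, j < 3 → chk (524288 - (2 * (i : ℤ) + 1) * 106496)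
    ((2 * (j : ℤ) + 1) * 106496) 106496 (certs.getD (3 * i + j) .O) = true := by decide +kernel

/-- `T` is a real number of `[-1,2]`. -/
def Good (T : ℂ) : Prop := T.im = 0 ∧ -1 ≤ T.re ∧ T.re ≤ 2

lemma hole_sound {U : Set ℂ} (hU : Sys3 U) {z : ℂ} (hz : z ∈ U) (i : ℕ)
    (h : ‖1048576 * z - holeE i‖ < holeR i) : ‖1048576 * z - holeE i‖ ≤ 1 ∧ Good z ∧ (i = 1 → z = gc) := by
  have g1 := gc_lo
  have g2 := gc_hi
  have n2 : ‖(1048576 : ℂ)‖ = 1048576 := by simp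
  -- rational centers
  have main : ∀ (c : ℝ) (ρ : ℝ), (‖z - c‖ < ρ → z = c) → |1048576 * c - (holeE i : ℝ)| ≤ 1 →
      (holeR i : ℝ) + 1 ≤ 1048576 * ρ → -1 ≤ c → c ≤ 2 → (i = 1 → c = gc) →
      ‖1048576 * z - holeE i‖ ≤ 1 ∧ Good z ∧ (i = 1 → z = gc) := by
    intro c ρ h1 h2 h3 h4 h5 h6
    have e1 : ‖((1048576 * c - (holeE i : ℝ) : ℝ) : ℂ)‖ ≤ 1 := by
      rw [Complex.norm_real]; exact h2
    have e2 : ‖1048576 * (z - c)‖ ≤ ‖1048576 * z - holeE i‖ + 1 := by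
      refine le_trans (le_of_eq ?_) ((norm_sub_le _ _).trans (add_le_add le_rfl e1))
      congr 1; push_cast; ring
    rw [norm_mul, n2] at e2
    have hzc : z = c := h1 (by linarith)
    refine ⟨?_, ?_, ?_⟩
    · rw [hzc]
      convert e1 using 2; push_cast; ring
    · rw [hzc]; exact ⟨by simp, by simpa using h4, by simpa using h5⟩
    · intro hi; rw [hzc, h6 hi]
  have hs := hU.sym z hz
  match i, h, main with
  | 0, h, main =>
    refine main (-1) 0.245 ?_ ?_ ?_ ?_ ?_ ?_ <;> norm_num [holeE, holeR]
    intro h; exact hU.h1 z hz (by norm_num at h ⊢; exact h)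
  | 1, h, main =>
    refine main gc 0.25 ?_ ?_ ?_ ?_ ?_ ?_
    · exact hU.h3 z hz
    · rw [abs_le]; simp only [holeE]; push_cast; constructor <;> linarith
    · norm_num [holeR]
    · linarith
    · linarith
    · simp
  | 2, h, main =>
    refine main 0 0.28 ?_ ?_ ?_ ?_ ?_ ?_ <;> norm_num [holeE, holeR]
    intro h; exact hU.h2 z hz (by norm_num at h ⊢; exact h)
  | 3, h, main =>
    refine main 1 0.28 ?_ ?_ ?_ ?_ ?_ ?_ <;> norm_num [holeE, holeR]
    intro h
    have := hU.h2 _ hs (by rw [← norm_neg]; norm_num at h ⊢; exact h)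
    linear_combination -this
  | 4, h, main =>
    refine main (1 - gc) 0.25 ?_ ?_ ?_ ?_ ?_ ?_
    · intro h
      have := hU.h3 _ hs (by
        have e : -(1 - z - gc) = z - ((1 - gc : ℝ) : ℂ) := by push_cast; ring
        rw [← norm_neg, e]; exact h)
      push_cast
      linear_combination -this
    · rw [abs_le]; simp only [holeE]; push_cast; constructor <;> linarith
    · norm_num [holeR]
    · linarith
    · linarith
    · simp
  | (k + 5), h, main =>
    have e5 : holeE (k + 5) = 2097152 := rfl
    have r5 : holeR (k + 5) = 256898 := rfl
    refine main 2 0.245 ?_ ?_ ?_ ?_ ?_ ?_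
    · intro h
      have := hU.h1 _ hs (by
        have e : -(1 - z + 1) = z - (2 : ℝ) := by push_cast; ring
        rw [← norm_neg, e]; exact h)
      push_cast
      linear_combination -this
    · rw [e5]; norm_num
    · rw [r5]; norm_num
    · norm_num
    · norm_num
    · intro h; omega

lemma walk_sound {U : Set ℂ} (hU : Sys3 U) {r : ℕ} {h : ℂ} (hh : 1048576 * ‖h‖ ≤ r) (hr : r ≤ 1048576)
    (l : List ℕ) : ∀ {x : TM} {z : ℂ}, TRep x h z → z ∈ U →
    TRep (l.foldl (step r) x) h (l.foldl stepC z) ∧ l.foldl stepC z ∈ U := by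
  induction l with
  | nil => intro x z h1 h2; exact ⟨h1, h2⟩
  | cons c l ih =>
    intro x z h1 h2
    exact ih (TRep_step hh hr h1 c) (stepC_mem hU h2 c)

lemma inHole_sound {T : TM} {r i : ℕ} {h z : ℂ} (hh : 1048576 * ‖h‖ ≤ r) (hT : TRep T h z)
    (hi : inHole T r i = true) : ‖1048576 * z - holeE i‖ < holeR i := by
  unfold inHole at hi
  have h1 := Nat.le_of_ble_eq_true hi
  have h2 : (nA (T.a - holeE i) T.b + T.B r + T.R + 1 : ℝ) ≤ holeR i := by exact_mod_cast h1
  have h3 := gi_norm (T.a - holeE i) T.b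
  have h4 := B_bound (x := T) hh
  unfold TRep at hT
  have e : 1048576 * z - holeE i = (1048576 * z - gi T.a T.b - gi T.p T.q * h) + gi T.p T.q * h
      + gi (T.a - holeE i) T.b := by
    have : gi (T.a - holeE i) T.b = gi T.a T.b - holeE i := by
      apply Complex.ext <;> simp [gi]
    rw [this]; ring
  rw [e]
  have := norm_add₃_le (a := 1048576 * z - gi T.a T.b - gi T.p T.q * h) (b := gi T.p T.q * h) (c := gi (T.a - holeE i) T.b)
  linarith

lemma avoid_sound {T : TM} {r i : ℕ} {h z : ℂ} (hh : 1048576 * ‖h‖ ≤ r) (hT : TRep T h z)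
    (hi : avoid T r i = true) : 2 < ‖1048576 * z - holeE i‖ := by
  unfold avoid at hi
  have h1 := Nat.le_of_ble_eq_true hi
  have h2 : ((T.B r + T.R + 3) * (T.B r + T.R + 3) : ℝ) ≤
      ((T.a - holeE i).natAbs : ℝ) ^ 2 + (T.b.natAbs : ℝ) ^ 2 := by exact_mod_cast h1
  have cs : ∀ a : ℤ, (a.natAbs : ℝ) ^ 2 = (a : ℝ) ^ 2 := by
    intro a
    have : (a.natAbs : ℝ) = |(a : ℝ)| := by rw [← Int.cast_abs]; simp
    rw [this, sq_abs]
  rw [cs, cs] at h2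
  have h0 : ‖gi (T.a - holeE i) T.b‖ ^ 2 = ((T.a - holeE i : ℤ) : ℝ) ^ 2 + (T.b : ℝ) ^ 2 := by rw [nsq]; rfl
  rw [← h0, ← sq] at h2
  have h3 : (T.B r + T.R + 3 : ℝ) ≤ ‖gi (T.a - holeE i) T.b‖ :=
    le_of_sq_le_sq h2 (norm_nonneg _)
  have h4 := B_bound (x := T) hh
  unfold TRep at hT
  have e : gi (T.a - holeE i) T.b = (1048576 * z - holeE i) - (1048576 * z - gi T.a T.b - gi T.p T.q * h)
      - gi T.p T.q * h := by
    have : gi (T.a - holeE i) T.b = gi T.a T.b - holeE i := by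
      apply Complex.ext <;> simp [gi]
    rw [this]; ring
  have h5 : ‖gi (T.a - holeE i) T.b‖ ≤ ‖1048576 * z - holeE i‖ + ‖1048576 * z - gi T.a T.b - gi T.p T.q * h‖ + ‖gi T.p T.q * h‖ := by
    conv_lhs => rw [e]
    exact (norm_sub_le _ _).trans (add_le_add (norm_sub_le _ _) le_rfl)
  linarith

lemma leaf_sound {U : Set ℂ} (hU : Sys3 U) {X Y : ℤ} {s k i : ℕ} (hl : leafOK X Y s k i = true)
    {z : ℂ} (hz : z ∈ U) (h1 : |1048576 * z.re - X| ≤ s) (h2 : |1048576 * z.im - Y| ≤ s)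
    (hP : z * z - z ≠ gc) : Good z := by
  unfold leafOK at hl
  simp only [Bool.and_eq_true, Bool.or_eq_true] at hl
  obtain ⟨⟨hr, hin⟩, hor⟩ := hl
  have hr := Nat.le_of_ble_eq_true hr
  obtain ⟨r, hrr⟩ : ∃ r, r = s * 1415 / 1000 + 1 := ⟨_, rfl⟩
  rw [← hrr] at hr hin hor
  obtain ⟨h, hh⟩ : ∃ h : ℂ, h = z - gi X Y / 1048576 := ⟨_, rfl⟩
  have n2 : ‖(1048576 : ℂ)‖ = 1048576 := by simp
  have hb : 1048576 * ‖h‖ ≤ r := by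
    have e : 1048576 * ‖h‖ = ‖1048576 * z - gi X Y‖ := by
      conv_lhs => rw [← n2, ← norm_mul, hh]
      congr 1; ring
    rw [e]
    have h3 : ‖1048576 * z - gi X Y‖ ^ 2 = (1048576 * z.re - X) ^ 2 + (1048576 * z.im - Y) ^ 2 := by
      rw [nsq]; simp [gi]
    have h4 : (1048576 * z.re - X) ^ 2 ≤ (s : ℝ) ^ 2 := by
      rw [← sq_abs]; gcongr
    have h5 : (1048576 * z.im - Y) ^ 2 ≤ (s : ℝ) ^ 2 := by
      rw [← sq_abs]; gcongr
    have h6 : s * 1415 ≤ 1000 * r := by omega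
    have h7 : (s : ℝ) * 1415 ≤ 1000 * r := by exact_mod_cast h6
    have h8 : ‖1048576 * z - gi X Y‖ ^ 2 ≤ (1.415 * s) ^ 2 := by
      rw [h3]; nlinarith [sq_nonneg (s : ℝ)]
    have := le_of_sq_le_sq h8 (by positivity)
    linarith
  have rep : TRep ⟨X, Y, 1048576, 0, 0⟩ h z := by
    unfold TRep
    have : gi 1048576 0 = 1048576 := by apply Complex.ext <;> simp [gi]
    simp only [this, hh]
    simp
    ring_nf
  obtain ⟨q1, q2⟩ := walk_sound hU hb hr (pathOf k) rep hz
  have q3 := hole_sound hU q2 i (inHole_sound hb q1 hin)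
  rcases hor with (hk | hk) | hk
  · have : k = 0 := Nat.eq_of_beq_eq_true hk
    subst this
    exact q3.2.1
  · have hk1 : k = 1 := Nat.eq_of_beq_eq_true hk.1
    have hi1 : i = 1 := Nat.eq_of_beq_eq_true hk.2
    subst hk1
    exact absurd (q3.2.2 hi1) hP
  · have := avoid_sound hb q1 hk
    linarith [q3.1]

lemma out_sound {X Y : ℤ} {s : ℕ} (hl : outOK X Y s = true)
    {z : ℂ} (h1 : |1048576 * z.re - X| ≤ s) (h2 : |1048576 * z.im - Y| ≤ s)
    (hE : (1 / 2 - z.re) ^ 2 * 0.36804 + z.im ^ 2 * 2.61804 < 0.36804 * 2.61804) : False := by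
  unfold outOK at hl
  simp only [Bool.and_eq_true, decide_eq_true_eq] at hl
  obtain ⟨⟨e1, e2⟩, e3⟩ := hl
  have e1' : (0 : ℝ) ≤ 524288 - X - s := by exact_mod_cast e1
  have e2' : (0 : ℝ) ≤ Y - s := by exact_mod_cast e2
  have e3' : (36804 * 261804 * 1048576 ^ 2 : ℝ) ≤
      ((524288 - X - s) ^ 2 * 36804 + (Y - s) ^ 2 * 261804) * 100000 := by exact_mod_cast e3
  rw [abs_le] at h1 h2
  have f1 : (524288 - X - s : ℝ) ^ 2 ≤ (1048576 * (1 / 2 - z.re)) ^ 2 := by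
    apply pow_le_pow_left₀ e1'; linarith
  have f2 : (Y - s : ℝ) ^ 2 ≤ (1048576 * z.im) ^ 2 := by
    apply pow_le_pow_left₀ e2'; linarith
  rw [mul_pow] at f1 f2
  linarith

lemma chk_sound {U : Set ℂ} (hU : Sys3 U) {z : ℂ} (hz : z ∈ U) (hP : z * z - z ≠ gc)
    (hE : (1 / 2 - z.re) ^ 2 * 0.36804 + z.im ^ 2 * 2.61804 < 0.36804 * 2.61804) (t : Ct) :
    ∀ {X Y : ℤ} {s : ℕ}, chk X Y s t = true → |1048576 * z.re - X| ≤ s → |1048576 * z.im - Y| ≤ s →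
    Good z := by
  induction t with
  | O => intro X Y s h h1 h2; exact (out_sound h h1 h2 hE).elim
  | L k i => intro X Y s h h1 h2; exact leaf_sound hU h hz h1 h2 hP
  | N a b c d iha ihb ihc ihd =>
    intro X Y s h h1 h2
    simp only [chk, Bool.and_eq_true] at h
    obtain ⟨⟨⟨⟨h0, ha⟩, hb⟩, hc⟩, hd⟩ := h
    have h0 := Nat.eq_of_beq_eq_true h0
    have h0' : (s : ℝ) = 2 * (s / 2 : ℕ) := by exact_mod_cast h0
    generalize s / 2 = u at *
    rw [abs_le] at h1 h2
    rcases le_total (1048576 * z.re) X with hx | hx <;> rcases le_total (1048576 * z.im) Y with hy | hy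
    · apply iha ha <;> rw [abs_le] <;> push_cast at * <;> constructor <;> linarith
    · apply ihc hc <;> rw [abs_le] <;> push_cast at * <;> constructor <;> linarith
    · apply ihb hb <;> rw [abs_le] <;> push_cast at * <;> constructor <;> linarith
    · apply ihd hd <;> rw [abs_le] <;> push_cast at * <;> constructor <;> linarith

lemma ellipse {T : ℂ} (hF : ‖T + 1‖ + ‖T - 2‖ < 1 + √5) :
    (T.re - 1 / 2) ^ 2 * (√5 / 2 - 3 / 4) + T.im ^ 2 * ((3 + √5) / 2) <
      (√5 / 2 - 3 / 4) * ((3 + √5) / 2) := by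
  have h5 : √5 ^ 2 = 5 := Real.sq_sqrt (by norm_num)
  have ha := norm_nonneg (T + 1)
  have hb := norm_nonneg (T - 2)
  have ha2 : ‖T + 1‖ ^ 2 = (T.re + 1) ^ 2 + T.im ^ 2 := by rw [nsq]; simp
  have hb2 : ‖T - 2‖ ^ 2 = (T.re - 2) ^ 2 + T.im ^ 2 := by rw [nsq]; simp
  generalize ‖T + 1‖ = a at *
  generalize ‖T - 2‖ = b at *
  generalize T.re = x at *
  generalize T.im = y at *
  have h1 : (a + b) ^ 2 < (1 + √5) ^ 2 := by gcongr
  have h2 : 2 * (a * b) < (1 + √5) ^ 2 - a ^ 2 - b ^ 2 := by linarith [show (a + b) ^ 2 = a ^ 2 + b ^ 2 + 2 * (a * b) by ring]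
  have h3 : (2 * (a * b)) ^ 2 < ((1 + √5) ^ 2 - a ^ 2 - b ^ 2) ^ 2 := by gcongr
  have h4 : (2 * (a * b)) ^ 2 = 4 * (a ^ 2 * b ^ 2) := by ring
  rw [h4, ha2, hb2] at h3
  have h6 : (1 + √5) ^ 2 = 6 + 2 * √5 := by linear_combination h5
  rw [h6] at h3
  generalize √5 = w at *
  have e1 : w ^ 2 = 5 := h5
  nlinarith

lemma quarter {U : Set ℂ} (hU : Sys3 U) {T : ℂ} (hT : T ∈ U) (hF : ‖T + 1‖ + ‖T - 2‖ < 1 + √5)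
    (hre : T.re ≤ 1 / 2) (him : 0 ≤ T.im) : Good T := by
  have h5 : √5 ^ 2 = 5 := Real.sq_sqrt (by norm_num)
  have h5a : (2.236 : ℝ) < √5 := by rw [Real.lt_sqrt] <;> norm_num
  have h5b : √5 < (2.23607 : ℝ) := by rw [Real.sqrt_lt'] <;> norm_num
  have hE0 := ellipse hF
  have hP : T * T - T ≠ gc := by
    intro h
    have h1 := congrArg Complex.re h
    have h2 := congrArg Complex.im h
    simp at h1 h2
    unfold gc at h1
    have h3 : T.im * (2 * T.re - 1) = 0 := by linarith
    rcases mul_eq_zero.1 h3 with h4 | h4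
    · rw [h4] at h1
      nlinarith [sq_nonneg (T.re - 1 / 2)]
    · have h6 : T.re = 1 / 2 := by linarith
      rw [h6] at h1 hE0
      have h7 : T.im ^ 2 = √5 / 2 - 3 / 4 := by linarith
      rw [h7] at hE0
      linarith
  obtain ⟨α, hα⟩ : ∃ α, α = (3 + √5) / 2 := ⟨_, rfl⟩
  obtain ⟨β, hβ⟩ : ∃ β, β = √5 / 2 - 3 / 4 := ⟨_, rfl⟩
  rw [← hα, ← hβ] at hE0
  have hα0 : 2 < α := by rw [hα]; linarith
  have hα1 : α < 2.61804 := by rw [hα]; linarith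
  have hβ0 : 0.3 < β := by rw [hβ]; linarith
  have hβ1 : β < 0.36804 := by rw [hβ]; linarith
  have hE1 : (1 / 2 - T.re) ^ 2 / α + T.im ^ 2 / β < 1 := by
    rw [div_add_div _ _ (by linarith) (by linarith), div_lt_one (by positivity)]
    linarith
  have hE2 : (1 / 2 - T.re) ^ 2 / 2.61804 + T.im ^ 2 / 0.36804 < 1 := by
    refine lt_of_le_of_lt ?_ hE1
    gcongr
  have hE : (1 / 2 - T.re) ^ 2 * 0.36804 + T.im ^ 2 * 2.61804 < 0.36804 * 2.61804 := by
    rw [div_add_div _ _ (by norm_num) (by norm_num), div_lt_one (by norm_num)] at hE2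
    linarith
  have b1 : 1 / 2 - T.re < 1.62 := by nlinarith [sq_nonneg T.im]
  have b2 : T.im < 0.607 := by nlinarith [sq_nonneg (1 / 2 - T.re)]
  obtain ⟨i, hi, hi1, hi2⟩ : ∃ i : ℕ, i < 8 ∧ (i : ℝ) * 212992 ≤ 1048576 * (1 / 2 - T.re) ∧
      1048576 * (1 / 2 - T.re) < ((i : ℝ) + 1) * 212992 := by
    refine ⟨⌊1048576 * (1 / 2 - T.re) / 212992⌋₊, ?_, ?_, ?_⟩
    · rw [Nat.floor_lt (by apply div_nonneg <;> linarith)]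
      rw [div_lt_iff₀ (by norm_num)]; push_cast; linarith
    · have := Nat.floor_le (a := 1048576 * (1 / 2 - T.re) / 212992) (by apply div_nonneg <;> linarith)
      rwa [le_div_iff₀ (by norm_num)] at this
    · have := Nat.lt_floor_add_one (1048576 * (1 / 2 - T.re) / 212992)
      rwa [div_lt_iff₀ (by norm_num)] at this
  obtain ⟨j, hj, hj1, hj2⟩ : ∃ j : ℕ, j < 3 ∧ (j : ℝ) * 212992 ≤ 1048576 * T.im ∧
      1048576 * T.im < ((j : ℝ) + 1) * 212992 := by
    refine ⟨⌊1048576 * T.im / 212992⌋₊, ?_, ?_, ?_⟩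
    · rw [Nat.floor_lt (by apply div_nonneg <;> linarith)]
      rw [div_lt_iff₀ (by norm_num)]; push_cast; linarith
    · have := Nat.floor_le (a := 1048576 * T.im / 212992) (by apply div_nonneg <;> linarith)
      rwa [le_div_iff₀ (by norm_num)] at this
    · have := Nat.lt_floor_add_one (1048576 * T.im / 212992)
      rwa [div_lt_iff₀ (by norm_num)] at this
  refine chk_sound hU hT hP hE _ (chkAll_true i hi j hj) ?_ ?_
  · rw [abs_le]; push_cast; constructor <;> linarith
  · rw [abs_le]; push_cast; constructor <;> linarith

lemma Sys3_conj {U : Set ℂ} (hU : Sys3 U) : Sys3 {T | (starRingEnd ℂ) T ∈ U} := by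
  have c2 : (starRingEnd ℂ) 2 = 2 := map_ofNat _ 2
  have cn : ∀ z w : ℂ, (starRingEnd ℂ) z = w → z = (starRingEnd ℂ) w := by
    rintro z w rfl; simp
  refine ⟨?_, ?_, ?_, ?_, ?_, ?_, ?_, ?_, ?_⟩
  · intro T hT; have := hU.sym _ hT; simpa using this
  · intro T hT; have := hU.wP _ hT; simpa using this
  · intro T hT; have := hU.wQ _ hT; simpa [c2] using this
  · intro T hT; have := hU.w3 _ hT; simpa [c2] using this
  · intro T hT; have := hU.w4 _ hT; simpa [c2] using this
  · intro T hT; have := hU.wC _ hT; simpa [c2] using this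
  · intro T hT h
    have := hU.h1 _ hT (by rw [← Complex.norm_conj]; simpa using h)
    simpa using cn _ _ this
  · intro T hT h
    have := hU.h2 _ hT (by rw [← Complex.norm_conj]; simpa using h)
    simpa using cn _ _ this
  · intro T hT h
    have := hU.h3 _ hT (by rw [← Complex.norm_conj]; simpa using h)
    simpa using cn _ _ this

lemma half {U : Set ℂ} (hU : Sys3 U) {T : ℂ} (hT : T ∈ U) (hF : ‖T + 1‖ + ‖T - 2‖ < 1 + √5)
    (hre : T.re ≤ 1 / 2) : Good T := by
  rcases le_total 0 T.im with h | h
  · exact quarter hU hT hF hre h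
  · have e1 : ‖(starRingEnd ℂ) T + 1‖ = ‖T + 1‖ := by rw [← Complex.norm_conj]; simp
    have e2 : ‖(starRingEnd ℂ) T - 2‖ = ‖T - 2‖ := by
      rw [← Complex.norm_conj]; simp [show (starRingEnd ℂ) 2 = 2 from map_ofNat _ 2]
    have := quarter (Sys3_conj hU) (T := (starRingEnd ℂ) T) (by simpa using hT) (by rw [e1, e2]; exact hF)
      (by simpa using hre) (by simpa using h)
    simpa [Good] using this

lemma key3 {S : Set ℂ} (hS : Sys S 3)
    (hC : ∀ x ∈ S, ∀ T : ℂ, T = -1 - 3 * x → x * ((T - 1) ^ 4 - (T ^ 2 - T - 1) * (2 - T)) ∈ S)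
    {x : ℂ} (hx : x ∈ S) (hF : ‖x‖ + ‖1 + x‖ < (1 + √5) / 3) : Seg x := by
  have hU := Sys3_of_Sys hS hC
  have hT : -1 - 3 * x ∈ {T | -(1 + T) / 3 ∈ S} := by
    show -(1 + (-1 - 3 * x)) / 3 ∈ S
    convert hx using 1; ring
  have e1 : ‖-1 - 3 * x + 1‖ = 3 * ‖x‖ := by
    rw [show -1 - 3 * x + 1 = -3 * x by ring, norm_mul]; simp
  have e2 : ‖-1 - 3 * x - 2‖ = 3 * ‖1 + x‖ := by
    rw [show -1 - 3 * x - 2 = -3 * (1 + x) by ring, norm_mul]; simp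
  have hF' : ‖-1 - 3 * x + 1‖ + ‖-1 - 3 * x - 2‖ < 1 + √5 := by rw [e1, e2]; linarith
  have hg : Good (-1 - 3 * x) := by
    rcases le_total (-1 - 3 * x).re (1 / 2) with h | h
    · exact half hU hT hF' h
    · have := half hU (hU.sym _ hT) (by
        rw [show 1 - (-1 - 3 * x) + 1 = - (-1 - 3 * x - 2) by ring,
          show 1 - (-1 - 3 * x) - 2 = - (-1 - 3 * x + 1) by ring, norm_neg, norm_neg]; linarith)
        (by rw [Complex.sub_re, Complex.one_re]; linarith)
      obtain ⟨h1, h2, h3⟩ := this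
      rw [Complex.sub_re, Complex.one_re] at h2 h3
      rw [Complex.sub_im, Complex.one_im] at h1
      exact ⟨by linarith, by linarith, by linarith⟩
  obtain ⟨h1, h2, h3⟩ := hg
  simp at h1 h2 h3
  exact ⟨h1, by linarith, by linarith⟩

/-- half of the squared Frobenius norm. -/
def cN (g : SL2C) : ℝ := (‖mf g 0 0‖ ^ 2 + ‖mf g 0 1‖ ^ 2 + ‖mf g 1 0‖ ^ 2 + ‖mf g 1 1‖ ^ 2) / 2

lemma fnorm_sq (g : SL2C) : fnorm (g : Matrix (Fin 2) (Fin 2) ℂ) ^ 2 = 2 * cN g := by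
  have h : fnorm (g : Matrix (Fin 2) (Fin 2) ℂ) = (∑ i, ∑ j, ‖g i j‖ ^ (2 : ℝ)) ^ (1 / 2 : ℝ) :=
    Matrix.frobenius_norm_def _
  rw [h, ← Real.sqrt_eq_rpow, Real.sq_sqrt (by positivity)]
  simp only [Fin.sum_univ_two, Real.rpow_two, cN, mf]
  ring

lemma cN_ge (g : SL2C) : ‖mf g 0 1 * mf g 1 0‖ + ‖1 + mf g 0 1 * mf g 1 0‖ ≤ cN g := by
  have hd := mf_det g
  rw [show 1 + mf g 0 1 * mf g 1 0 = mf g 0 0 * mf g 1 1 by linear_combination -hd, norm_mul, norm_mul]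
  unfold cN
  nlinarith [sq_nonneg (‖mf g 0 1‖ - ‖mf g 1 0‖), sq_nonneg (‖mf g 0 0‖ - ‖mf g 1 1‖)]

lemma one_le_cN (g : SL2C) : 1 ≤ cN g := by
  refine le_trans ?_ (cN_ge g)
  have := norm_add_le (1 + mf g 0 1 * mf g 1 0) (-(mf g 0 1 * mf g 1 0))
  rw [norm_neg] at this
  simp only [add_neg_cancel_right, norm_one] at this
  linarith

lemma cN_inv (g : SL2C) : cN g⁻¹ = cN g := by
  obtain ⟨h1, h2, h3, h4⟩ := mf_inv g
  simp only [cN, h1, h2, h3, h4, norm_neg]; ring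

lemma CS3 {a b c a' b' c' s s' : ℝ} (hs : 0 ≤ s) (hs' : 0 ≤ s') (h : s ^ 2 = a ^ 2 + b ^ 2 + c ^ 2)
    (h' : s' ^ 2 = a' ^ 2 + b' ^ 2 + c' ^ 2) : a * a' + b * b' + c * c' ≤ s * s' := by
  apply le_of_sq_le_sq _ (by positivity)
  rw [mul_pow, h, h']
  nlinarith [sq_nonneg (a * b' - b * a'), sq_nonneg (a * c' - c * a'), sq_nonneg (b * c' - c * b')]

lemma cN_mul (X Y : SL2C) {r s : ℝ} (hr : 0 ≤ r) (hs : 0 ≤ s) (hX : cN X = cosh r) (hY : cN Y = cosh s) :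
    cN (X * Y) ≤ cosh (r + s) := by
  rw [Real.cosh_add, ← hX, ← hY]
  have hr' : 0 ≤ sinh r := Real.sinh_nonneg_iff.2 hr
  have hs' : 0 ≤ sinh s := Real.sinh_nonneg_iff.2 hs
  have h1 : sinh r ^ 2 = cN X ^ 2 - 1 := by rw [hX, Real.cosh_sq]; ring
  have h2 : sinh s ^ 2 = cN Y ^ 2 - 1 := by rw [hY, Real.cosh_sq]; ring
  have dX := mf_det X
  have dY := mf_det Y
  have eXY : cN (X * Y) = (‖mf X 0 0 * mf Y 0 0 + mf X 0 1 * mf Y 1 0‖ ^ 2 +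
     ‖mf X 0 0 * mf Y 0 1 + mf X 0 1 * mf Y 1 1‖ ^ 2 + ‖mf X 1 0 * mf Y 0 0 + mf X 1 1 * mf Y 1 0‖ ^ 2 +
     ‖mf X 1 0 * mf Y 0 1 + mf X 1 1 * mf Y 1 1‖ ^ 2) / 2 := by
    simp only [cN, mf_mul]
  rw [eXY]
  unfold cN at *
  generalize sinh r = S at *
  generalize sinh s = S' at *
  clear hX hY eXY
  generalize mf X 0 0 = x0 at *
  generalize mf X 0 1 = x1 at *
  generalize mf X 1 0 = x2 at *
  generalize mf X 1 1 = x3 at *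
  generalize mf Y 0 0 = y0 at *
  generalize mf Y 0 1 = y1 at *
  generalize mf Y 1 0 = y2 at *
  generalize mf Y 1 1 = y3 at *
  simp only [nsq, Complex.add_re, Complex.add_im, Complex.mul_re, Complex.mul_im] at *
  have dX1 := congrArg Complex.re dX
  have dX2 := congrArg Complex.im dX
  have dY1 := congrArg Complex.re dY
  have dY2 := congrArg Complex.im dY
  simp only [Complex.sub_re, Complex.sub_im, Complex.mul_re, Complex.mul_im, Complex.one_re, Complex.one_im] at dX1 dX2 dY1 dY2
  clear dX dY
  obtain ⟨a0, b0⟩ := x0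
  obtain ⟨a1, b1⟩ := x1
  obtain ⟨a2, b2⟩ := x2
  obtain ⟨a3, b3⟩ := x3
  obtain ⟨c0, d0⟩ := y0
  obtain ⟨c1, d1⟩ := y1
  obtain ⟨c2, d2⟩ := y2
  obtain ⟨c3, d3⟩ := y3
  dsimp only at *
  have := CS3 (a := (a0 ^ 2 + b0 ^ 2 + a2 ^ 2 + b2 ^ 2 - a1 ^ 2 - b1 ^ 2 - a3 ^ 2 - b3 ^ 2) / 2)
    (b := a0 * a1 + b0 * b1 + a2 * a3 + b2 * b3) (c := a0 * b1 - b0 * a1 + a2 * b3 - b2 * a3)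
    (a' := (c0 ^ 2 + d0 ^ 2 + c1 ^ 2 + d1 ^ 2 - c2 ^ 2 - d2 ^ 2 - c3 ^ 2 - d3 ^ 2) / 2)
    (b' := c0 * c2 + d0 * d2 + c1 * c3 + d1 * d3) (c' := d0 * c2 - c0 * d2 + d1 * c3 - c1 * d3) hr' hs' (by
      rw [h1]
      linear_combination (a0 * a3 - b0 * b3 - (a1 * a2 - b1 * b2) + 1) * dX1 + (a0 * b3 + b0 * a3 - (a1 * b2 + b1 * a2)) * dX2) (by
      rw [h2]
      linear_combination (c0 * c3 - d0 * d3 - (c1 * c2 - d1 * d2) + 1) * dY1 + (c0 * d3 + d0 * c3 - (c1 * d2 + d1 * c2)) * dY2)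
  linarith

lemma exists_cosh {c : ℝ} (h : 1 ≤ c) : ∃ r, 0 ≤ r ∧ cosh r = c :=
  ⟨arcosh c, Real.arcosh_nonneg h, Real.cosh_arcosh h⟩

lemma cosh_bound {r d c t : ℝ} (hr : 0 ≤ r) (hd : 0 ≤ d) (h1 : cosh r < c) (h2 : cosh d < t) :
    cosh (r + d) < t * c + √(t ^ 2 - 1) * √(c ^ 2 - 1) := by
  rw [Real.cosh_add]
  have a1 := Real.one_le_cosh r
  have a2 := Real.one_le_cosh d
  have b1 : sinh r ≤ √(c ^ 2 - 1) := by
    apply Real.le_sqrt_of_sq_le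
    rw [Real.sinh_sq]; nlinarith
  have b2 : sinh d ≤ √(t ^ 2 - 1) := by
    apply Real.le_sqrt_of_sq_le
    rw [Real.sinh_sq]; nlinarith
  have := Real.sinh_nonneg_iff.2 hr
  have := Real.sinh_nonneg_iff.2 hd
  have c1 : sinh r * sinh d ≤ √(c ^ 2 - 1) * √(t ^ 2 - 1) := by gcongr
  have c2 : cosh r * cosh d < c * t := by
    apply mul_lt_mul'' h1 h2 <;> linarith
  linarith

lemma disp (M B' : SL2C) {c t : ℝ}
    (hc : 2 * ((‖mf M 0 0‖ ^ 2 + ‖mf M 1 0‖ ^ 2) * (‖mf M 0 1‖ ^ 2 + ‖mf M 1 1‖ ^ 2)) - 1 < c)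
    (ht : cN B' < t) {x : ℂ} (hx : x = mf (M⁻¹ * B' * M) 0 1 * mf (M⁻¹ * B' * M) 1 0) :
    ‖x‖ + ‖1 + x‖ < t * c + √(t ^ 2 - 1) * √(c ^ 2 - 1) := by
  have hdet := mf_det M
  obtain ⟨u, hu⟩ : ∃ u, u = ‖mf M 0 0‖ ^ 2 + ‖mf M 1 0‖ ^ 2 := ⟨_, rfl⟩
  obtain ⟨v, hv⟩ : ∃ v, v = ‖mf M 0 1‖ ^ 2 + ‖mf M 1 1‖ ^ 2 := ⟨_, rfl⟩
  rw [← hu, ← hv] at hc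
  have hu0 : 0 < u := by
    rw [hu]
    by_contra h
    have h1 : ‖mf M 0 0‖ = 0 := by nlinarith [sq_nonneg ‖mf M 0 0‖, sq_nonneg ‖mf M 1 0‖]
    have h2 : ‖mf M 1 0‖ = 0 := by nlinarith [sq_nonneg ‖mf M 0 0‖, sq_nonneg ‖mf M 1 0‖]
    rw [norm_eq_zero] at h1 h2
    simp [h1, h2] at hdet
  have hv0 : 0 < v := by
    rw [hv]
    by_contra h
    have h1 : ‖mf M 0 1‖ = 0 := by nlinarith [sq_nonneg ‖mf M 0 1‖, sq_nonneg ‖mf M 1 1‖]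
    have h2 : ‖mf M 1 1‖ = 0 := by nlinarith [sq_nonneg ‖mf M 0 1‖, sq_nonneg ‖mf M 1 1‖]
    rw [norm_eq_zero] at h1 h2
    simp [h1, h2] at hdet
  obtain ⟨s, hs0, hs⟩ : ∃ s : ℝ, 0 < s ∧ s ^ 2 * s ^ 2 * u = v := by
    refine ⟨√√(v / u), by positivity, ?_⟩
    rw [Real.sq_sqrt (by positivity), Real.mul_self_sqrt (by positivity)]
    field_simp
  have hsc : (s : ℂ) ≠ 0 := by exact_mod_cast hs0.ne'
  obtain ⟨E, hE⟩ : ∃ E : SL2C, IsDg E s (s : ℂ)⁻¹ := by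
    refine ⟨mkSL s 0 0 (s : ℂ)⁻¹ (by field_simp; ring), ?_, ?_, ?_, ?_⟩
    all_goals simp [mf_mk]
  have hE' := hE.inv
  have e1 : cN (M * E) = s ^ 2 * u := by
    simp only [cN, mf_mul, hE.h00, hE.h01, hE.h10, hE.h11, mul_zero, zero_add, add_zero, norm_mul,
      norm_inv, Complex.norm_real, Real.norm_eq_abs, abs_of_pos hs0, mul_pow]
    have : s⁻¹ ^ 2 * v = s ^ 2 * u := by
      rw [← hs]; field_simp
    rw [hu, hv] at this
    rw [hu]
    linarith
  have hxg : x = mf ((M * E)⁻¹ * B' * (M * E)) 0 1 * mf ((M * E)⁻¹ * B' * (M * E)) 1 0 := by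
    rw [show (M * E)⁻¹ * B' * (M * E) = E⁻¹ * (M⁻¹ * B' * M) * E by group, hx]
    generalize M⁻¹ * B' * M = g
    simp only [mf_mul, hE.h00, hE.h01, hE.h10, hE.h11, hE'.h00, hE'.h01, hE'.h10, hE'.h11]
    field_simp
    ring
  rw [hxg]
  refine lt_of_le_of_lt (cN_ge _) ?_
  obtain ⟨r, hr0, hr⟩ := exists_cosh (one_le_cN (M * E))
  obtain ⟨d, hd0, hd⟩ := exists_cosh (one_le_cN B')
  have h1 := cN_mul (M * E)⁻¹ B' hr0 hd0 (by rw [cN_inv, hr]) hd.symm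
  obtain ⟨w, hw0, hw⟩ := exists_cosh (one_le_cN ((M * E)⁻¹ * B'))
  have h2 := cN_mul ((M * E)⁻¹ * B') (M * E) hw0 hr0 hw.symm hr.symm
  rw [← hw, Real.cosh_le_cosh, abs_of_nonneg hw0, abs_of_nonneg (by linarith)] at h1
  have h3 : cosh (w + r) ≤ cosh (2 * r + d) := by
    rw [Real.cosh_le_cosh, abs_of_nonneg (by linarith), abs_of_nonneg (by linarith)]; linarith
  refine lt_of_le_of_lt (h2.trans h3) (cosh_bound (by linarith) hd0 ?_ (by rw [hd]; exact ht))
  rw [Real.cosh_two_mul, Real.sinh_sq, hr, e1]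
  have : (s ^ 2 * u) ^ 2 = u * v := by rw [← hs]; ring
  linarith

/-- displacement of a rotation. -/
lemma cN_rot (M D : SL2C) {l m : ℂ} (hD : IsDg D l m) (hl : ‖l‖ = 1) :
    2 * cN (M * D * M⁻¹) = 2 + ‖l - m‖ ^ 2 *
      ((‖mf M 0 0‖ ^ 2 + ‖mf M 1 0‖ ^ 2) * (‖mf M 0 1‖ ^ 2 + ‖mf M 1 1‖ ^ 2) - 1) := by
  have hm : m = (starRingEnd ℂ) l := by
    have h1 := hD.mul_eq
    have h2 : l * (starRingEnd ℂ) l = 1 := by rw [Complex.mul_conj, Complex.normSq_eq_norm_sq, hl]; simp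
    have h3 : l ≠ 0 := by intro h; simp [h] at hl
    exact mul_left_cancel₀ h3 (h1.trans h2.symm)
  have hl2 : l.re ^ 2 + l.im ^ 2 = 1 := by rw [← nsq, hl]; norm_num
  obtain ⟨c0, c1, c2, c3⟩ := conj_entries (g := M) hD
  have hdet := mf_det M
  have key : ‖mf M 0 0‖ ^ 2 * ‖mf M 1 1‖ ^ 2 = ‖1 + mf M 0 1 * mf M 1 0‖ ^ 2 := by
    rw [← mul_pow, ← norm_mul]; congr 2; linear_combination hdet
  have key2 : ‖mf M 0 1‖ ^ 2 * ‖mf M 1 0‖ ^ 2 = ‖mf M 0 1 * mf M 1 0‖ ^ 2 := by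
    rw [← mul_pow, ← norm_mul]
  have hy1 : ‖1 + mf M 0 1 * mf M 1 0‖ ^ 2 = 1 + 2 * (mf M 0 1 * mf M 1 0).re + ‖mf M 0 1 * mf M 1 0‖ ^ 2 := by
    rw [nsq, nsq]; simp only [Complex.add_re, Complex.add_im, Complex.one_re, Complex.one_im]; ring
  have hd : ‖l - m‖ ^ 2 = 4 * l.im ^ 2 := by
    rw [nsq, hm]; simp; ring
  have e0 : ‖mf (M * D * M⁻¹) 0 0‖ ^ 2 + ‖mf (M * D * M⁻¹) 1 1‖ ^ 2 =
      2 + ‖l - m‖ ^ 2 * (2 * ‖mf M 0 1 * mf M 1 0‖ ^ 2 + 2 * (mf M 0 1 * mf M 1 0).re) := by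
    rw [c0, c3, hd, hm]
    generalize mf M 0 1 * mf M 1 0 = y
    simp only [nsq, Complex.add_re, Complex.add_im, Complex.mul_re, Complex.mul_im, Complex.sub_re,
      Complex.sub_im, Complex.one_re, Complex.one_im, Complex.conj_re, Complex.conj_im]
    linear_combination 2 * hl2
  have e1 : ‖mf (M * D * M⁻¹) 0 1‖ ^ 2 = ‖mf M 0 0‖ ^ 2 * ‖mf M 0 1‖ ^ 2 * ‖l - m‖ ^ 2 := by
    rw [c1, norm_mul, norm_mul, norm_sub_rev]; ring
  have e2 : ‖mf (M * D * M⁻¹) 1 0‖ ^ 2 = ‖mf M 1 0‖ ^ 2 * ‖mf M 1 1‖ ^ 2 * ‖l - m‖ ^ 2 := by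
    rw [c2, norm_mul, norm_mul]; ring
  unfold cN
  linear_combination e0 + e1 + e2 - ‖l - m‖ ^ 2 * (key + key2 + hy1)

lemma mf_neg_one (i j : Fin 2) : mf (-1) i j = if i = j then -1 else 0 := by
  simp only [mf, Matrix.SpecialLinearGroup.coe_neg, Matrix.SpecialLinearGroup.coe_one, Matrix.neg_apply, Matrix.one_apply]
  split_ifs <;> simp

lemma exists_eigvec (A : SL2C) : ∃ (μ p q : ℂ), (p ≠ 0 ∨ q ≠ 0) ∧
    mf A 0 0 * p + mf A 0 1 * q = μ * p ∧ mf A 1 0 * p + mf A 1 1 * q = μ * q := by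
  obtain ⟨μ, hμ⟩ : ∃ μ : ℂ, μ * μ - (mf A 0 0 + mf A 1 1) * μ + 1 = 0 := by
    obtain ⟨s, hs⟩ := IsAlgClosed.exists_pow_nat_eq ((mf A 0 0 + mf A 1 1) ^ 2 - 4) (n := 2) (by norm_num)
    exact ⟨(mf A 0 0 + mf A 1 1 + s) / 2, by linear_combination hs / 4⟩
  have hd := mf_det A
  by_cases h1 : mf A 0 1 = 0
  · by_cases h2 : mf A 0 0 = μ
    · by_cases h3 : mf A 1 0 = 0
      · exact ⟨μ, 1, 0, by simp, by linear_combination h2, by linear_combination h3⟩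
      · refine ⟨μ, μ - mf A 1 1, mf A 1 0, Or.inr h3, ?_, by ring⟩
        rw [h1, h2]; ring
    · refine ⟨μ, 0, 1, by simp, by rw [h1]; ring, ?_⟩
      have h5 : (mf A 0 0 - μ) * (mf A 1 1 - μ) = 0 := by
        linear_combination hμ + hd + h1 * mf A 1 0
      rcases mul_eq_zero.1 h5 with h | h
      · exact absurd (sub_eq_zero.1 h) h2
      · linear_combination h
  · exact ⟨μ, mf A 0 1, μ - mf A 0 0, Or.inl h1, by ring, by linear_combination -hμ - hd⟩

lemma exists_tri (A : SL2C) : ∃ P : SL2C, mf (P⁻¹ * A * P) 1 0 = 0 := by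
  obtain ⟨μ, p, q, hpq, h1, h2⟩ := exists_eigvec A
  obtain ⟨P, hp, hq⟩ : ∃ P : SL2C, mf P 0 0 = p ∧ mf P 1 0 = q := by
    by_cases hp : p = 0
    · have hq : q ≠ 0 := by tauto
      refine ⟨mkSL 0 (-q⁻¹) q 0 (by field_simp; ring), ?_⟩
      simp [mf_mk, hp]
    · refine ⟨mkSL p 0 q p⁻¹ (by field_simp; ring), ?_⟩
      simp [mf_mk]
  refine ⟨P, ?_⟩
  obtain ⟨i1, i2, i3, i4⟩ := mf_inv P
  simp only [mf_mul, i3, i4, hp, hq]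
  linear_combination -q * h1 + p * h2

lemma tri_pow (T : SL2C) (h : mf T 1 0 = 0) (k : ℕ) : mf (T ^ k) 1 0 = 0 ∧ mf (T ^ k) 0 0 = mf T 0 0 ^ k ∧
    mf (T ^ k) 1 1 = mf T 1 1 ^ k ∧
    (mf T 0 0 = mf T 1 1 → mf (T ^ k) 0 1 * mf T 0 0 = k * mf T 0 0 ^ k * mf T 0 1) := by
  induction k with
  | zero => simp [mf_one]
  | succ k ih =>
    obtain ⟨a, b, c, d⟩ := ih
    rw [pow_succ]
    simp only [mf_mul, a, b, c, h]
    refine ⟨by ring, by ring, by ring, fun he => ?_⟩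
    have := d he
    rw [← he]; push_cast
    linear_combination mf T 0 0 * this

lemma Dg_pow {D : SL2C} {l m : ℂ} (h : IsDg D l m) (k : ℕ) : IsDg (D ^ k) (l ^ k) (m ^ k) := by
  induction k with
  | zero => constructor <;> simp [mf_one]
  | succ k ih =>
    constructor <;> rw [pow_succ] <;> simp [mf_mul, ih.h00, ih.h01, ih.h10, ih.h11, h.h00, h.h01, h.h10, h.h11, pow_succ]

lemma elliptic_conj {A : SL2C} {n : ℕ} (hA : IsEllipticOfOrder A n) (P : SL2C) :
    IsEllipticOfOrder (P⁻¹ * A * P) n := by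
  have hp : ∀ k : ℕ, (P⁻¹ * A * P) ^ k = P⁻¹ * A ^ k * P := by
    intro k
    have := conj_pow (a := P⁻¹) (b := A) (i := k)
    simpa using this
  have e1 : ∀ k : ℕ, (P⁻¹ * A * P) ^ k = 1 ↔ A ^ k = 1 := by
    intro k; rw [hp]
    constructor
    · intro h
      have : A ^ k = P * (P⁻¹ * A ^ k * P) * P⁻¹ := by group
      rw [this, h]; group
    · intro h; rw [h]; group
  have e2 : ∀ k : ℕ, (P⁻¹ * A * P) ^ k = -1 ↔ A ^ k = -1 := by
    intro k; rw [hp]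
    constructor
    · intro h
      have : A ^ k = P * (P⁻¹ * A ^ k * P) * P⁻¹ := by group
      rw [this, h]; simp
    · intro h; rw [h]; simp
  unfold IsEllipticOfOrder at *
  simpa only [e1, e2, ne_eq] using hA

lemma exists_diag {A : SL2C} {n : ℕ} (hn : 3 ≤ n) (hA : IsEllipticOfOrder A n) :
    ∃ (P : SL2C) (l m : ℂ), IsDg (P⁻¹ * A * P) l m := by
  obtain ⟨P, hP⟩ := exists_tri A
  have hE := elliptic_conj hA P
  generalize hT : P⁻¹ * A * P = T at *
  have hd := mf_det T
  rw [hP] at hd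
  by_cases h : mf T 0 0 = mf T 1 1
  · exfalso
    obtain ⟨h1, h2, h3, h4⟩ := tri_pow T hP n
    have h5 := h4 h
    have h6 : mf (T ^ n) 0 1 = 0 := by
      rcases hE.1 with h | h <;> rw [h] <;> simp [mf_one, mf_neg_one]
    have h7 : mf T 0 0 ≠ 0 := by intro h0; rw [h0] at hd; simp at hd
    have hn0 : (n : ℂ) ≠ 0 := by norm_cast; omega
    rw [h6, zero_mul] at h5
    have h8 : mf T 0 1 = 0 := by
      rcases mul_eq_zero.1 h5.symm with h | h
      · exact absurd h (by positivity)
      · exact h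
    have h9 := hE.2 1 le_rfl (by omega)
    rw [pow_one] at h9
    rw [← h] at hd
    have h10 : (mf T 0 0 - 1) * (mf T 0 0 + 1) = 0 := by linear_combination hd
    rcases mul_eq_zero.1 h10 with h11 | h11
    · apply h9.1
      apply mf_ext <;> simp [mf_one, h8, hP, ← h]
      · linear_combination h11
      · linear_combination h11
    · apply h9.2
      apply mf_ext <;> simp [mf_neg_one, h8, hP, ← h]
      · linear_combination h11
      · linear_combination h11
  · have h' : mf T 1 1 - mf T 0 0 ≠ 0 := fun h0 => h (by linear_combination -h0)
    obtain ⟨z, hz⟩ : ∃ z, z * (mf T 1 1 - mf T 0 0) = mf T 0 1 := ⟨mf T 0 1 / (mf T 1 1 - mf T 0 0), by field_simp⟩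
    refine ⟨P * mkSL 1 z 0 1 (by ring), mf T 0 0, mf T 1 1, ?_⟩
    rw [show (P * mkSL 1 z 0 1 (by ring))⁻¹ * A * (P * mkSL 1 z 0 1 (by ring)) =
      (mkSL 1 z 0 1 (by ring))⁻¹ * (P⁻¹ * A * P) * mkSL 1 z 0 1 (by ring) by group, hT]
    obtain ⟨e1, e2, e3, e4⟩ := mf_mk 1 z 0 1 (by ring)
    obtain ⟨i1, i2, i3, i4⟩ := mf_inv (mkSL 1 z 0 1 (by ring))
    constructor <;> simp only [mf_mul, i1, i2, i3, i4, e1, e2, e3, e4, hP]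
    · ring
    · linear_combination -hz
    · ring
    · ring

/-- the squared eigenvalue is a primitive root of unity. -/
lemma prim {D : SL2C} {l m : ℂ} {n : ℕ} (hn : 3 ≤ n) (hD : IsDg D l m) (hE : IsEllipticOfOrder D n) :
    IsPrimitiveRoot (l ^ 2) n ∧ ‖l‖ = 1 := by
  have hlm := hD.mul_eq
  have h1 : (l ^ 2) ^ n = 1 := by
    have := (Dg_pow hD n).h00
    rw [← pow_mul, mul_comm, pow_mul, ← this]
    rcases hE.1 with h | h <;> rw [h] <;> simp [mf_one, mf_neg_one]
  constructor
  · refine IsPrimitiveRoot.mk_of_lt _ (by omega) h1 ?_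
    intro k hk0 hk h
    have hp := Dg_pow hD k
    have hpm := hp.mul_eq
    have h2 : (l ^ k - 1) * (l ^ k + 1) = 0 := by
      rw [← pow_mul, mul_comm, pow_mul] at h; linear_combination h
    have h9 := hE.2 k hk0 hk
    rcases mul_eq_zero.1 h2 with h3 | h3
    · have h4 : l ^ k = 1 := by linear_combination h3
      rw [h4, one_mul] at hpm
      apply h9.1
      apply mf_ext <;> simp [mf_one, hp.h00, hp.h01, hp.h10, hp.h11, h4, hpm]
    · have h4 : l ^ k = -1 := by linear_combination h3
      have h5 : m ^ k = -1 := by rw [h4] at hpm; linear_combination -hpm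
      apply h9.2
      apply mf_ext <;> simp [mf_neg_one, hp.h00, hp.h01, hp.h10, hp.h11, h4, h5]
  · rw [← pow_mul] at h1
    have := congrArg norm h1
    rw [norm_pow, norm_one] at this
    exact (pow_eq_one_iff_of_nonneg (norm_nonneg _) (by omega)).1 this

lemma disc_conj {Γ : Subgroup SL2C} (h : IsDiscreteSubgroup Γ) (Q : SL2C) :
    IsDiscreteSubgroup (Γ.comap (MulAut.conj Q).toMonoidHom) := by
  unfold IsDiscreteSubgroup at *
  have hmem : ∀ g : Γ.comap (MulAut.conj Q).toMonoidHom, Q * g * Q⁻¹ ∈ Γ := by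
    rintro ⟨g, hg⟩
    simpa using hg
  refine DiscreteTopology.of_continuous_injective (f := fun g => (⟨Q * g * Q⁻¹, hmem g⟩ : Γ)) ?_ ?_
  · apply Continuous.subtype_mk
    apply continuous_induced_rng.2
    have : Continuous (fun g : Γ.comap (MulAut.conj Q).toMonoidHom => ((g : SL2C) : Matrix (Fin 2) (Fin 2) ℂ)) :=
      continuous_induced_dom.comp continuous_subtype_val
    have h2 : Continuous (fun g : Γ.comap (MulAut.conj Q).toMonoidHom =>
      (Q : Matrix (Fin 2) (Fin 2) ℂ) * ((g : SL2C) : Matrix (Fin 2) (Fin 2) ℂ) *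
        ((Q⁻¹ : SL2C) : Matrix (Fin 2) (Fin 2) ℂ)) := by fun_prop
    convert h2 using 1
    ext g i j
    simp only [Function.comp, Matrix.SpecialLinearGroup.coe_mul]
  · intro g k hgk
    have := congrArg Subtype.val hgk
    simpa using this

lemma unit_crit (g : SL2C) (h1 : mf g 1 1 = (starRingEnd ℂ) (mf g 0 0))
    (h2 : mf g 0 1 = - (starRingEnd ℂ) (mf g 1 0)) :
    (g : Matrix (Fin 2) (Fin 2) ℂ) ∈ Matrix.unitaryGroup (Fin 2) ℂ := by
  have hd := mf_det g
  rw [Matrix.mem_unitaryGroup_iff]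
  have e1 : (starRingEnd ℂ) (mf g 0 1) = - mf g 1 0 := by rw [h2]; simp
  have e2 : (starRingEnd ℂ) (mf g 1 1) = mf g 0 0 := by rw [h1]; simp
  have e3 : (starRingEnd ℂ) (mf g 0 0) = mf g 1 1 := h1.symm
  have e4 : (starRingEnd ℂ) (mf g 1 0) = - mf g 0 1 := by rw [h2]; simp
  simp only [mf] at hd e1 e2 e3 e4
  ext i j
  fin_cases i <;> fin_cases j <;>
    simp [Matrix.mul_apply, Fin.sum_univ_two, Matrix.star_apply, e1, e2, e3, e4]
  · linear_combination hd
  · ring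
  · ring
  · linear_combination hd

lemma not_Seg {A B Q : SL2C} {l m : ℂ} (hD : IsDg (Q⁻¹ * A * Q) l m) (hl : ‖l‖ = 1)
    (hfix : ¬ HasCommonEigenvector A (B * A * B⁻¹))
    (hax : ¬ ∃ C : SL2C,
      ((C * A * C⁻¹ : SL2C) : Matrix (Fin 2) (Fin 2) ℂ) ∈ Matrix.unitaryGroup (Fin 2) ℂ ∧
      ((C * (B * A * B⁻¹) * C⁻¹ : SL2C) : Matrix (Fin 2) (Fin 2) ℂ) ∈
        Matrix.unitaryGroup (Fin 2) ℂ)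
    {x : ℂ} (hx : x = mf (Q⁻¹ * B * Q) 0 1 * mf (Q⁻¹ * B * Q) 1 0) : ¬ Seg x := by
  rintro ⟨him, hre1, hre2⟩
  obtain ⟨c0, c1, c2, c3⟩ := conj_entries (g := Q⁻¹ * B * Q) hD
  have hgd := mf_det (Q⁻¹ * B * Q)
  rw [← hx] at c0 c3 hgd
  have hA : A = Q * (Q⁻¹ * A * Q) * Q⁻¹ := by group
  have hB : B * A * B⁻¹ = Q * ((Q⁻¹ * B * Q) * (Q⁻¹ * A * Q) * (Q⁻¹ * B * Q)⁻¹) * Q⁻¹ := by group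
  obtain ⟨g, hg⟩ : ∃ g, g = Q⁻¹ * B * Q := ⟨_, rfl⟩
  obtain ⟨D, hDd⟩ : ∃ D, D = Q⁻¹ * A * Q := ⟨_, rfl⟩
  rw [← hDd] at hA hD hB c0 c1 c2 c3
  rw [← hg] at hB c0 c1 c2 c3 hgd hx
  obtain ⟨h, hh⟩ : ∃ h, h = g * D * g⁻¹ := ⟨_, rfl⟩
  rw [← hh] at hB c0 c1 c2 c3
  have hm : m = (starRingEnd ℂ) l := by
    have h1 := hD.mul_eq
    have h2 : l * (starRingEnd ℂ) l = 1 := by rw [Complex.mul_conj, Complex.normSq_eq_norm_sq, hl]; simp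
    have h3 : l ≠ 0 := by intro h; simp [h] at hl
    exact mul_left_cancel₀ h3 (h1.trans h2.symm)
  -- common eigenvectors
  have hev : ∀ (X Y : SL2C) (v : Fin 2 → ℂ) (a : ℂ), X = Q * Y * Q⁻¹ →
      (Y : Matrix (Fin 2) (Fin 2) ℂ).mulVec v = a • v →
      (X : Matrix (Fin 2) (Fin 2) ℂ).mulVec ((Q : Matrix (Fin 2) (Fin 2) ℂ).mulVec v) =
        a • ((Q : Matrix (Fin 2) (Fin 2) ℂ).mulVec v) := by
    intro X Y v a hX hY
    rw [Matrix.mulVec_mulVec, ← Matrix.SpecialLinearGroup.coe_mul, show X * Q = Q * Y by rw [hX]; group,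
      Matrix.SpecialLinearGroup.coe_mul, ← Matrix.mulVec_mulVec, hY, Matrix.mulVec_smul]
  have hnz : ∀ v : Fin 2 → ℂ, v ≠ 0 → (Q : Matrix (Fin 2) (Fin 2) ℂ).mulVec v ≠ 0 := by
    intro v hv h0
    apply hv
    have : ((Q⁻¹ * Q : SL2C) : Matrix (Fin 2) (Fin 2) ℂ).mulVec v = 0 := by
      rw [Matrix.SpecialLinearGroup.coe_mul, ← Matrix.mulVec_mulVec, h0, Matrix.mulVec_zero]
    simpa using this
  have n01 : mf h 0 1 ≠ 0 := by
    intro h0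
    apply hfix
    refine ⟨(Q : Matrix (Fin 2) (Fin 2) ℂ).mulVec ![0, 1], hnz _ (by simp), ⟨m, hev _ _ _ _ hA ?_⟩,
      ⟨mf h 1 1, hev _ _ _ _ hB ?_⟩⟩
    · have e1 := hD.h01
      have e2 := hD.h11
      simp only [mf] at e1 e2
      ext i; fin_cases i <;> simp [Matrix.mulVec, dotProduct, Fin.sum_univ_two, e1, e2]
    · simp only [mf] at h0 ⊢
      ext i; fin_cases i <;> simp [Matrix.mulVec, dotProduct, Fin.sum_univ_two, h0]
  have n10 : mf h 1 0 ≠ 0 := by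
    intro h0
    apply hfix
    refine ⟨(Q : Matrix (Fin 2) (Fin 2) ℂ).mulVec ![1, 0], hnz _ (by simp), ⟨l, hev _ _ _ _ hA ?_⟩,
      ⟨mf h 0 0, hev _ _ _ _ hB ?_⟩⟩
    · have e1 := hD.h10
      have e2 := hD.h00
      simp only [mf] at e1 e2
      ext i; fin_cases i <;> simp [Matrix.mulVec, dotProduct, Fin.sum_univ_two, e1, e2]
    · simp only [mf] at h0 ⊢
      ext i; fin_cases i <;> simp [Matrix.mulVec, dotProduct, Fin.sum_univ_two, h0]
  -- unitary
  have hxr : x = (x.re : ℂ) := by apply Complex.ext <;> simp [him]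
  have hcx : (starRingEnd ℂ) x = x := by rw [hxr]; simp
  have hprod : mf h 0 1 * mf h 1 0 = ((x.re * (1 + x.re) * (4 * l.im ^ 2) : ℝ) : ℂ) := by
    have h1 : mf h 0 1 * mf h 1 0 = x * (1 + x) * -(l - m) ^ 2 := by
      rw [c1, c2, hx]
      linear_combination -(mf g 0 1 * mf g 1 0) * (l - m) ^ 2 * (hgd + hx)
    have h2 : (l - m) ^ 2 = ((-(4 * l.im ^ 2) : ℝ) : ℂ) := by
      rw [hm, Complex.sub_conj, mul_pow, Complex.I_sq]; push_cast; ring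
    rw [h1, h2, hxr]; push_cast; simp
  have hneg : x.re * (1 + x.re) * (4 * l.im ^ 2) ≤ 0 := by
    apply mul_nonpos_of_nonpos_of_nonneg
    · apply mul_nonpos_of_nonpos_of_nonneg hre2; linarith
    · positivity
  have hnp : mf h 0 1 * mf h 1 0 = -((‖mf h 0 1‖ * ‖mf h 1 0‖ : ℝ) : ℂ) := by
    rw [← norm_mul, hprod, Complex.norm_real, Real.norm_eq_abs, abs_of_nonpos hneg]; push_cast; ring
  have p01 : 0 < ‖mf h 0 1‖ := norm_pos_iff.2 n01
  have p10 : 0 < ‖mf h 1 0‖ := norm_pos_iff.2 n10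
  obtain ⟨s, hs0, hs⟩ : ∃ s : ℝ, 0 < s ∧ s ^ 2 * s ^ 2 * ‖mf h 0 1‖ = ‖mf h 1 0‖ := by
    refine ⟨√√(‖mf h 1 0‖ / ‖mf h 0 1‖), by positivity, ?_⟩
    rw [Real.sq_sqrt (by positivity), Real.mul_self_sqrt (by positivity)]
    field_simp
  have hsc : (s : ℂ) ≠ 0 := by exact_mod_cast hs0.ne'
  obtain ⟨E, hE⟩ : ∃ E : SL2C, IsDg E s (s : ℂ)⁻¹ := by
    refine ⟨mkSL s 0 0 (s : ℂ)⁻¹ (by field_simp; ring), ?_, ?_, ?_, ?_⟩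
    all_goals simp [mf_mk]
  have hE' := hE.inv
  apply hax
  refine ⟨E * Q⁻¹, ?_, ?_⟩
  · rw [show E * Q⁻¹ * A * (E * Q⁻¹)⁻¹ = E * D * E⁻¹ by rw [hDd]; group]
    apply unit_crit
    · simp only [mf_mul, hE.h00, hE.h01, hE.h10, hE.h11, hE'.h00, hE'.h01, hE'.h10, hE'.h11, hD.h00, hD.h01, hD.h10, hD.h11, hm]
      simp
      field_simp
    · simp only [mf_mul, hE.h00, hE.h01, hE.h10, hE.h11, hE'.h00, hE'.h01, hE'.h10, hE'.h11, hD.h00, hD.h01, hD.h10, hD.h11, hm]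
      simp
  · rw [show E * Q⁻¹ * (B * A * B⁻¹) * (E * Q⁻¹)⁻¹ = E * h * E⁻¹ by rw [hB]; group]
    apply unit_crit
    · simp only [mf_mul, hE.h00, hE.h01, hE.h10, hE.h11, hE'.h00, hE'.h01, hE'.h10, hE'.h11, c0, c3, hm]
      simp [hcx]
      field_simp
    · simp only [mf_mul, hE.h00, hE.h01, hE.h10, hE.h11, hE'.h00, hE'.h01, hE'.h10, hE'.h11]
      simp
      have h1 : mf h 1 0 * (starRingEnd ℂ) (mf h 1 0) = ((‖mf h 1 0‖ ^ 2 : ℝ) : ℂ) := by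
        rw [Complex.mul_conj, Complex.normSq_eq_norm_sq]
      have h2 : (s : ℂ) ^ 2 * s ^ 2 * (‖mf h 0 1‖ : ℂ) = (‖mf h 1 0‖ : ℂ) := by exact_mod_cast hs
      have h3 : (s : ℂ) ^ 2 * s ^ 2 * mf h 0 1 = -(starRingEnd ℂ) (mf h 1 0) := by
        apply mul_left_cancel₀ n10
        push_cast at h1 hnp
        linear_combination (s : ℂ) ^ 2 * s ^ 2 * hnp + h1 - (‖mf h 1 0‖ : ℂ) * h2
      field_simp
      linear_combination h3

lemma root_data {n : ℕ} (hn : 3 ≤ n) {l m : ℂ} (hlm : l * m = 1)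
    (hl : l ^ 2 = Complex.exp (2 * π * Complex.I / n)) :
    ‖l‖ = 1 ∧ ‖m‖ = 1 ∧ l ^ 2 ≠ m ^ 2 ∧ l ^ 2 - m ^ 2 ≠ 1 ∧ m ^ 2 - l ^ 2 ≠ 1 ∧
    (((4 * sin (π / n) ^ 2 : ℝ) : ℂ) = 2 - l ^ 2 - m ^ 2) ∧ l ^ 2 ≠ 1 ∧ m ^ 2 ≠ 1 ∧
    ‖1 - l ^ 2‖ ^ 2 = 4 * sin (π / n) ^ 2 ∧ ‖1 - m ^ 2‖ ^ 2 = 4 * sin (π / n) ^ 2 := by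
  have hn0 : (0 : ℝ) < n := by norm_cast; omega
  have hn3 : (3 : ℝ) ≤ n := by exact_mod_cast hn
  have hθ : l ^ 2 = Complex.exp (((2 * π / n : ℝ) : ℂ) * Complex.I) := by
    rw [hl]; congr 1; push_cast; ring
  have hs0 : 0 < sin (2 * π / n) := by
    apply Real.sin_pos_of_pos_of_lt_pi (by positivity)
    rw [div_lt_iff₀ hn0]; nlinarith [Real.pi_pos]
  have hcs : cos (2 * π / n) = 1 - 2 * sin (π / n) ^ 2 := by
    rw [show 2 * π / n = 2 * (π / n) by ring, Real.cos_two_mul, Real.cos_sq']; ring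
  have hsc := Real.sin_sq_add_cos_sq (2 * π / n)
  obtain ⟨θ, hθd⟩ : ∃ θ, θ = 2 * π / n := ⟨_, rfl⟩
  rw [← hθd] at hθ hs0 hcs hsc
  have hnl2 : ‖l ^ 2‖ = 1 := by rw [hθ]; exact Complex.norm_exp_ofReal_mul_I θ
  have hnl : ‖l‖ = 1 := by
    rw [norm_pow] at hnl2
    exact (pow_eq_one_iff_of_nonneg (norm_nonneg _) (by norm_num)).1 hnl2
  have hnm : ‖m‖ = 1 := by
    have := congrArg norm hlm
    rwa [norm_mul, hnl, one_mul, norm_one] at this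
  have hm : m = (starRingEnd ℂ) l := by
    have h2 : l * (starRingEnd ℂ) l = 1 := by rw [Complex.mul_conj, Complex.normSq_eq_norm_sq, hnl]; simp
    have h3 : l ≠ 0 := by intro h; simp [h] at hnl
    exact mul_left_cancel₀ h3 (hlm.trans h2.symm)
  have hm2 : m ^ 2 = (starRingEnd ℂ) (l ^ 2) := by rw [hm, map_pow]
  have hre : (l ^ 2).re = cos θ := by rw [hθ, Complex.exp_ofReal_mul_I_re]
  have him : (l ^ 2).im = sin θ := by rw [hθ, Complex.exp_ofReal_mul_I_im]
  rw [hm2]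
  generalize l ^ 2 = w at *
  refine ⟨hnl, hnm, ?_, ?_, ?_, ?_, ?_, ?_, ?_, ?_⟩
  · intro h
    have := congrArg Complex.im h
    simp at this; linarith
  · intro h
    have := congrArg Complex.re h
    simp at this
  · intro h
    have := congrArg Complex.re h
    simp at this
  · apply Complex.ext
    · rw [Complex.ofReal_re]; simp only [Complex.sub_re, Complex.conj_re, hre]; simp; linarith
    · rw [Complex.ofReal_im]; simp
  · intro h
    have := congrArg Complex.im h
    simp at this; linarith
  · intro h
    have := congrArg Complex.im h
    simp at this; linarith
  · rw [nsq]; simp only [Complex.sub_re, Complex.sub_im, Complex.one_re, Complex.one_im, hre, him]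
    linear_combination hsc - 2 * hcs
  · rw [nsq]; simp only [Complex.sub_re, Complex.sub_im, Complex.one_re, Complex.one_im, Complex.conj_re, Complex.conj_im, hre, him]
    linear_combination hsc - 2 * hcs

lemma rot_lower {n : ℕ} (hn : 3 ≤ n) {l m : ℂ} (hlm : l * m = 1) (hl1 : ‖l‖ = 1)
    (hp : IsPrimitiveRoot (l ^ 2) n) : 4 * sin (π / n) ^ 2 ≤ ‖l - m‖ ^ 2 := by
  have hn0 : (0 : ℝ) < n := by norm_cast; omega
  have hn3 : (3 : ℝ) ≤ n := by exact_mod_cast hn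
  have : NeZero n := ⟨by omega⟩
  obtain ⟨k, hk, hk1⟩ := (Complex.isPrimitiveRoot_exp n (by omega)).eq_pow_of_pow_eq_one hp.pow_eq_one
  have hk0 : k ≠ 0 := by
    rintro rfl
    rw [pow_zero] at hk1
    have := hp.unique (hk1 ▸ IsPrimitiveRoot.one)
    omega
  have hm : m = (starRingEnd ℂ) l := by
    have h2 : l * (starRingEnd ℂ) l = 1 := by rw [Complex.mul_conj, Complex.normSq_eq_norm_sq, hl1]; simp
    have h3 : l ≠ 0 := by intro h; simp [h] at hl1
    exact mul_left_cancel₀ h3 (hlm.trans h2.symm)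
  have hθ : l ^ 2 = Complex.exp (((k * (2 * π / n) : ℝ) : ℂ) * Complex.I) := by
    rw [← hk1, ← Complex.exp_nat_mul]; congr 1; push_cast; ring
  have hre : (l ^ 2).re = cos (k * (2 * π / n)) := by rw [hθ, Complex.exp_ofReal_mul_I_re]
  have e1 : ‖l - m‖ ^ 2 = 2 - 2 * (l ^ 2).re := by
    have hl2 : l.re ^ 2 + l.im ^ 2 = 1 := by rw [← nsq, hl1]; norm_num
    rw [nsq, hm, pow_two l]; simp; linear_combination 2 * hl2
  have hcs : cos (2 * π / n) = 1 - 2 * sin (π / n) ^ 2 := by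
    rw [show 2 * π / n = 2 * (π / n) by ring, Real.cos_two_mul, Real.cos_sq']; ring
  have hk1' : (1 : ℝ) ≤ k := by exact_mod_cast Nat.one_le_iff_ne_zero.2 hk0
  have hk2' : (k : ℝ) + 1 ≤ n := by exact_mod_cast hk
  have hθ0 : 0 < 2 * π / n := by have := Real.pi_pos; positivity
  have hnθ : n * (2 * π / n) = 2 * π := by field_simp
  have : cos (k * (2 * π / n)) ≤ cos (2 * π / n) := by
    rcases le_total (k * (2 * π / n)) π with h | h
    · apply Real.cos_le_cos_of_nonneg_of_le_pi hθ0.le h; nlinarith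
    · rw [show cos (k * (2 * π / n)) = cos (2 * π - k * (2 * π / n)) by rw [Real.cos_two_pi_sub]]
      apply Real.cos_le_cos_of_nonneg_of_le_pi hθ0.le (by linarith)
      nlinarith
  rw [e1, hre]; linarith

lemma core (A B : SL2C) (n : ℕ) (hn : 3 ≤ n)
    (hd : IsDiscreteSubgroup (Subgroup.closure {A, B}))
    (hA : IsEllipticOfOrder A n)
    (hfix : ¬ HasCommonEigenvector A (B * A * B⁻¹))
    (hax : ¬ ∃ C : SL2C,
      ((C * A * C⁻¹ : SL2C) : Matrix (Fin 2) (Fin 2) ℂ) ∈ Matrix.unitaryGroup (Fin 2) ℂ ∧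
      ((C * (B * A * B⁻¹) * C⁻¹ : SL2C) : Matrix (Fin 2) (Fin 2) ℂ) ∈
        Matrix.unitaryGroup (Fin 2) ℂ) :
    ∃ (S : Set ℂ) (x : ℂ), Sys S (4 * sin (π / n) ^ 2) ∧
      (n = 3 → ∀ x ∈ S, ∀ T : ℂ, T = -1 - 3 * x → x * ((T - 1) ^ 4 - (T ^ 2 - T - 1) * (2 - T)) ∈ S) ∧
      (7 ≤ n → ∀ x ∈ S, ((4 * sin (π / n) ^ 2 : ℝ) : ℂ) * x * (1 + x) ≠ -1) ∧ x ∈ S ∧ ¬ Seg x ∧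
      ∀ (C : SL2C) (t : ℝ), max (fnorm ((C * A * C⁻¹ : SL2C) : Matrix (Fin 2) (Fin 2) ℂ) ^ 2)
        (fnorm ((C * B * C⁻¹ : SL2C) : Matrix (Fin 2) (Fin 2) ℂ) ^ 2) < 2 * t →
        ∀ c, sin (π / n) ^ 2 * (c - 1) = t - 1 →
        ‖x‖ + ‖1 + x‖ < t * c + √(t ^ 2 - 1) * √(c ^ 2 - 1) := by
  have hn0 : (0 : ℝ) < n := by norm_cast; omega
  have hn3 : (3 : ℝ) ≤ n := by exact_mod_cast hn
  have hsp : 0 < sin (π / n) := by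
    apply Real.sin_pos_of_pos_of_lt_pi (by have := Real.pi_pos; positivity)
    rw [div_lt_iff₀ hn0]; nlinarith [Real.pi_pos]
  obtain ⟨Q, l, m, hD⟩ := exists_diag hn hA
  have hE := elliptic_conj hA Q
  obtain ⟨hp, hl1⟩ := prim hn hD hE
  have : NeZero n := ⟨by omega⟩
  obtain ⟨j, -, hj⟩ := hp.eq_pow_of_pow_eq_one (Complex.isPrimitiveRoot_exp n (by omega)).pow_eq_one
  have hf := Dg_pow hD j
  have hfl : (l ^ j) ^ 2 = Complex.exp (2 * π * Complex.I / n) := by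
    rw [← hj, ← pow_mul, ← pow_mul, mul_comm]
  obtain ⟨r1, r2, r3, r4, r5, r6, r7, r8, r9, r10⟩ := root_data hn hf.mul_eq hfl
  have hΓ := disc_conj hd Q
  have mem : ∀ g, g ∈ Subgroup.closure {A, B} →
      Q⁻¹ * g * Q ∈ (Subgroup.closure {A, B}).comap (MulAut.conj Q).toMonoidHom := by
    intro g hg
    rw [Subgroup.mem_comap]
    have : (MulAut.conj Q).toMonoidHom (Q⁻¹ * g * Q) = g := by simp; group
    rw [this]; exact hg
  have hDΓ := mem A (Subgroup.subset_closure (by simp))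
  have hgΓ := mem B (Subgroup.subset_closure (by simp))
  have hfΓ := Subgroup.pow_mem _ hDΓ j
  refine ⟨SS ((Subgroup.closure {A, B}).comap (MulAut.conj Q).toMonoidHom) ((Q⁻¹ * A * Q) ^ j),
    mf (Q⁻¹ * B * Q) 0 1 * mf (Q⁻¹ * B * Q) 1 0, Sys_SS _ hΓ hf hfΓ r1 r2 r3 r4 r5 _ r6, ?_, ?_,
    SS_of_mem hfΓ hgΓ, not_Seg hD hl1 hfix hax rfl, ?_⟩
  · rintro rfl x hx T hT
    refine SS_C hf hfΓ ?_ hx hT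
    have : (4 * sin (π / (3 : ℕ)) ^ 2 : ℝ) = 3 := by
      push_cast
      rw [Real.sin_pi_div_three, div_pow, Real.sq_sqrt] <;> norm_num
    rw [this] at r6
    push_cast at r6
    linear_combination r6
  · intro h7 x hx
    have h7' : (7 : ℝ) ≤ n := by exact_mod_cast h7
    have hs2 : sin (π / n) < 1 / 2 := by
      have h1 : sin (π / n) < π / n := Real.sin_lt (by have := Real.pi_pos; positivity)
      have h2 : π / n < 1 / 2 := by
        rw [div_lt_iff₀ hn0]; linarith [Real.pi_lt_d2]
      linarith
    have hlt : 4 * sin (π / n) ^ 2 < 1 := by nlinarith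
    rw [r6]
    refine no_P_neg_one _ hΓ hf hfΓ r3 r7 r8 ?_ ?_ hx
    · nlinarith [norm_nonneg (1 - (l ^ j) ^ 2)]
    · nlinarith [norm_nonneg (1 - (m ^ j) ^ 2)]
  · intro C t hmax c hc
    rw [fnorm_sq, fnorm_sq, max_lt_iff] at hmax
    obtain ⟨h1, h2⟩ := hmax
    have hM : (C * Q)⁻¹ * (C * B * C⁻¹) * (C * Q) = Q⁻¹ * B * Q := by group
    refine disp (C * Q) (C * B * C⁻¹) ?_ (by linarith) (by rw [hM])
    have hM2 : C * A * C⁻¹ = (C * Q) * (Q⁻¹ * A * Q) * (C * Q)⁻¹ := by group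
    rw [hM2] at h1
    have h1' := cN_rot (C * Q) _ hD hl1
    rw [h1'] at h1
    have hlow := rot_lower hn hD.mul_eq hl1 hp
    generalize (‖mf (C * Q) 0 0‖ ^ 2 + ‖mf (C * Q) 1 0‖ ^ 2) * (‖mf (C * Q) 0 1‖ ^ 2 + ‖mf (C * Q) 1 1‖ ^ 2) = u at *
    have hge := one_le_cN ((C * Q) * (Q⁻¹ * A * Q) * (C * Q)⁻¹)
    have hpos : 0 < 4 * sin (π / n) ^ 2 := by positivity
    generalize ‖l - m‖ ^ 2 = δ at *
    have hu : 0 ≤ u - 1 := by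
      have : 0 ≤ δ * (u - 1) := by linarith
      exact nonneg_of_mul_nonneg_right this (by linarith)
    have h3 : 4 * sin (π / n) ^ 2 * (u - 1) ≤ δ * (u - 1) := by gcongr
    have h4 : 2 * sin (π / n) ^ 2 * (2 * (u - 1)) < 2 * sin (π / n) ^ 2 * (c - 1) := by linarith
    have h5 := lt_of_mul_lt_mul_left h4 (by positivity)
    linarith

lemma bound_of {t c K : ℝ} (ht : 1 ≤ t) (hK : t * c ≤ K)
    (hQ : K ^ 2 - 2 * K * (t * c) + t ^ 2 + c ^ 2 - 1 = 0) :
    t * c + √(t ^ 2 - 1) * √(c ^ 2 - 1) = K := by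
  rw [← Real.sqrt_mul (by nlinarith), show (t ^ 2 - 1) * (c ^ 2 - 1) = (K - t * c) ^ 2 by
    linear_combination -hQ, Real.sqrt_sq (by linarith)]
  ring

lemma tOf_ge {n : ℕ} (h : 7 ≤ n) : tOf n = (5 - 2 * Real.sin (π / n) ^ 2) / (4 + 2 * Real.sin (π / n) ^ 2) := by
  unfold tOf
  split <;> first | omega | rfl

lemma const3 {t : ℝ} (ht : t = (2 * √(8 + 2 * √5) - (1 + √5)) / (6 - √5)) :
    t * ((4 * t - 1) / 3) + √(t ^ 2 - 1) * √(((4 * t - 1) / 3) ^ 2 - 1) = (1 + √5) / 3 := by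
  have h5 : √5 ^ 2 = 5 := Real.sq_sqrt (by norm_num)
  have h5a : (2.236 : ℝ) < √5 := by rw [Real.lt_sqrt] <;> norm_num
  have h5b : √5 < (2.237 : ℝ) := by rw [Real.sqrt_lt'] <;> norm_num
  have hv : √(8 + 2 * √5) ^ 2 = 8 + 2 * √5 := Real.sq_sqrt (by positivity)
  have hva : (3.531 : ℝ) < √(8 + 2 * √5) := by rw [Real.lt_sqrt] <;> norm_num; linarith
  have hvb : √(8 + 2 * √5) < (3.532 : ℝ) := by rw [Real.sqrt_lt'] <;> norm_num; linarith
  generalize √(8 + 2 * √5) = v at *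
  generalize √5 = w at *
  have ht1 : 1 ≤ t := by rw [ht, le_div_iff₀ (by linarith)]; linarith
  have ht2 : t ≤ 1.02 := by rw [ht, div_le_iff₀ (by linarith)]; linarith
  have h : t * (6 - w) + 1 + w = 2 * v := by rw [ht]; field_simp [show (6 - w) ≠ 0 by linarith]; ring
  have h2 : (t * (6 - w) + 1 + w) ^ 2 = 32 + 8 * w := by rw [h]; linear_combination 4 * hv
  apply bound_of ht1
  · nlinarith
  · have h3 : t ^ 2 * (41 - 12 * w) + 2 * t * (1 + 5 * w) - 26 - 6 * w = 0 := by
      linear_combination h2 - (t ^ 2 - 2 * t + 1) * h5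
    linear_combination (7 - 4 * w) / 279 * h3 + (1/9 - t ^ 2 * 48 / 279 + 40 * t / 279 - 24 / 279) * h5

lemma const4 {t : ℝ} (ht : t = (√(6 + 2 * √3) - √3) / (3 - √3)) :
    t * (2 * t - 1) + √(t ^ 2 - 1) * √((2 * t - 1) ^ 2 - 1) = (1 + √3) / 2 := by
  have h5 : √3 ^ 2 = 3 := Real.sq_sqrt (by norm_num)
  have h5a : (1.732 : ℝ) < √3 := by rw [Real.lt_sqrt] <;> norm_num
  have h5b : √3 < (1.733 : ℝ) := by rw [Real.sqrt_lt'] <;> norm_num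
  have hv : √(6 + 2 * √3) ^ 2 = 6 + 2 * √3 := Real.sq_sqrt (by positivity)
  have hva : (3.07 : ℝ) < √(6 + 2 * √3) := by rw [Real.lt_sqrt] <;> norm_num; linarith
  have hvb : √(6 + 2 * √3) < (3.08 : ℝ) := by rw [Real.sqrt_lt'] <;> norm_num; linarith
  generalize √(6 + 2 * √3) = v at *
  generalize √3 = w at *
  have ht1 : 1 ≤ t := by rw [ht, le_div_iff₀ (by linarith)]; linarith
  have ht2 : t ≤ 1.08 := by rw [ht, div_le_iff₀ (by linarith)]; linarith
  have h : t * (3 - w) + w = v := by rw [ht]; field_simp [show (3 - w) ≠ 0 by linarith]; ring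
  have h2 : (t * (3 - w) + w) ^ 2 = 6 + 2 * w := by rw [h]; linear_combination hv
  apply bound_of ht1
  · nlinarith
  · have h3 : t ^ 2 * (12 - 6 * w) + 2 * t * (3 * w - 3) - 3 - 2 * w = 0 := by
      linear_combination h2 - (t ^ 2 - 2 * t + 1) * h5
    linear_combination -w / 6 * h3 + (1/4 - t ^ 2 + t - 1/3) * h5

lemma const6 {t : ℝ} (ht : t = 6 - √24) :
    t * (4 * t - 3) + √(t ^ 2 - 1) * √((4 * t - 3) ^ 2 - 1) = 2 := by
  have h5 : √24 ^ 2 = 24 := Real.sq_sqrt (by norm_num)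
  have h5a : (4.89 : ℝ) < √24 := by rw [Real.lt_sqrt] <;> norm_num
  have h5b : √24 < (4.9 : ℝ) := by rw [Real.sqrt_lt'] <;> norm_num
  generalize √24 = w at *
  apply bound_of (by linarith)
  · rw [ht]; nlinarith
  · rw [ht]; linear_combination h5

lemma const7 {t q : ℝ} (hq : 0 < q) (hq1 : q ≤ 1 / 4) (ht : t = (5 - 2 * q) / (4 + 2 * q)) :
    t * ((1 + 2 * q ^ 2) / (q * (4 + 2 * q))) + √(t ^ 2 - 1) * √(((1 + 2 * q ^ 2) / (q * (4 + 2 * q))) ^ 2 - 1)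
      = 2 / (4 * q) - 1 := by
  have h0 : 0 < 4 + 2 * q := by linarith
  apply bound_of
  · rw [ht, le_div_iff₀ h0]; linarith
  · rw [ht, ← sub_nonneg]
    have : 2 / (4 * q) - 1 - (5 - 2 * q) / (4 + 2 * q) * ((1 + 2 * q ^ 2) / (q * (4 + 2 * q))) =
      (3 * (1 - 4 * q) * (1 + 2 * q)) / (q * (4 + 2 * q) ^ 2) := by
      field_simp; ring
    rw [this]
    have : 0 ≤ 1 - 4 * q := by linarith
    positivity
  · rw [ht]; field_simp; ring

lemma const5 {t k q : ℝ} (ht : 1 < t) (hq : 0 < q) (hk : k = 1 - q)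
    (h : t * (t - k) + (t - 1) * √((t + 1) * (t + 1 - 2 * k)) = 1 / 2) :
    q * (t * ((t - k) / q) + √(t ^ 2 - 1) * √(((t - k) / q) ^ 2 - 1)) = 1 / 2 := by
  have h1 : (t ^ 2 - 1) * (((t - k) / q) ^ 2 - 1) = ((t - 1) / q) ^ 2 * ((t + 1) * (t + 1 - 2 * k)) := by
    rw [hk]; field_simp; ring
  rw [← Real.sqrt_mul (by nlinarith), h1, Real.sqrt_mul (by positivity), Real.sqrt_sq (by apply div_nonneg <;> linarith), ← h]
  field_simp

/-- Theorem 3.2: displacement bound when the axes of `A` and `B·A·B⁻¹` are disjoint. -/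
theorem margulis_disjoint_axes (A B : SL2C) (n : ℕ) (hn : 3 ≤ n)
    (hd : IsDiscreteSubgroup (Subgroup.closure {A, B}))
    (hA : IsEllipticOfOrder A n)
    (hfix : ¬ HasCommonEigenvector A (B * A * B⁻¹))
    (hax : ¬ ∃ C : SL2C,
      ((C * A * C⁻¹ : SL2C) : Matrix (Fin 2) (Fin 2) ℂ) ∈ Matrix.unitaryGroup (Fin 2) ℂ ∧
      ((C * (B * A * B⁻¹) * C⁻¹ : SL2C) : Matrix (Fin 2) (Fin 2) ℂ) ∈
        Matrix.unitaryGroup (Fin 2) ℂ) :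
    ∀ C : SL2C,
      max (fnorm ((C * A * C⁻¹ : SL2C) : Matrix (Fin 2) (Fin 2) ℂ) ^ 2)
      (fnorm ((C * B * C⁻¹ : SL2C) : Matrix (Fin 2) (Fin 2) ℂ) ^ 2) ≥ 2 * dOf n := by
  intro C
  by_contra hlt
  rw [ge_iff_le, not_le] at hlt
  obtain ⟨S, x, hS, hC, hne, hx, hseg, hdisp⟩ := core A B n hn hd hA hfix hax
  have hdisp := hdisp C _ hlt
  apply hseg
  by_cases h7 : 7 ≤ n
  · have e : dOf n = (5 - 2 * Real.sin (π / n) ^ 2) / (4 + 2 * Real.sin (π / n) ^ 2) := by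
      rw [dOf, if_neg (by omega), tOf_ge h7]
    have hn0 : (0 : ℝ) < n := by norm_cast; omega
    have hsp : 0 < sin (π / n) := by
      apply Real.sin_pos_of_pos_of_lt_pi (by have := Real.pi_pos; positivity)
      have h3 : (7 : ℝ) ≤ n := by exact_mod_cast h7
      rw [div_lt_iff₀ hn0]; nlinarith [Real.pi_pos]
    have hs2 : sin (π / n) < 1 / 2 := by
      have h1 : sin (π / n) < π / n := Real.sin_lt (by have := Real.pi_pos; positivity)
      have h3 : (7 : ℝ) ≤ n := by exact_mod_cast h7
      have h2 : π / n < 1 / 2 := by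
        rw [div_lt_iff₀ hn0]; linarith [Real.pi_lt_d2]
      linarith
    have hq0 : 0 < sin (π / n) ^ 2 := by positivity
    have hq1 : sin (π / n) ^ 2 ≤ 1 / 4 := by nlinarith
    have hne' := hne h7
    generalize sin (π / n) ^ 2 = q at *
    have h := hdisp ((1 + 2 * q ^ 2) / (q * (4 + 2 * q))) (by rw [e]; field_simp; ring)
    rw [const7 hq0 hq1 e] at h
    exact key7 (by linarith) hS hne' hx h
  · have hn' : n = 3 ∨ n = 4 ∨ n = 5 ∨ n = 6 := by omega
    rcases hn' with rfl | rfl | rfl | rfl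
    · have e : dOf 3 = (2 * √(8 + 2 * √5) - (1 + √5)) / (6 - √5) := by
        rw [dOf, if_neg (by norm_num)]; rfl
      have hs : sin (π / (3 : ℕ)) ^ 2 = 3 / 4 := by
        push_cast
        rw [Real.sin_pi_div_three, div_pow, Real.sq_sqrt] <;> norm_num
      rw [hs] at hS hdisp
      have h := hdisp ((4 * dOf 3 - 1) / 3) (by ring)
      rw [const3 e] at h
      exact key3 (by convert hS using 1; norm_num) (hC rfl) hx h
    · have e : dOf 4 = (√(6 + 2 * √3) - √3) / (3 - √3) := by
        rw [dOf, if_neg (by norm_num)]; rfl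
      have hs : sin (π / (4 : ℕ)) ^ 2 = 1 / 2 := by
        push_cast
        rw [Real.sin_pi_div_four, div_pow, Real.sq_sqrt] <;> norm_num
      rw [hs] at hS hdisp
      have h := hdisp (2 * dOf 4 - 1) (by ring)
      rw [const4 e] at h
      exact key4 (by convert hS using 1; norm_num) hx h
    · have e : dOf 5 = t5 := by rw [dOf, if_neg (by norm_num)]; rfl
      have h5 : √5 ^ 2 = 5 := Real.sq_sqrt (by norm_num)
      have hcos : cos (π / 5) ^ 2 = (3 + √5) / 8 := by
        rw [Real.cos_pi_div_five]; linear_combination h5 / 16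
      have hs : sin (π / (5 : ℕ)) ^ 2 = (5 - √5) / 8 := by
        push_cast
        rw [Real.sin_sq, hcos]; ring
      have h5b : √5 < (2.237 : ℝ) := by rw [Real.sqrt_lt'] <;> norm_num
      by_cases hex : ∃ t : ℝ, 1 < t ∧
          t * (t - Real.cos (π / 5) ^ 2) +
            (t - 1) * Real.sqrt ((t + 1) * (t + 1 - 2 * Real.cos (π / 5) ^ 2)) = 1 / 2
      · have et : t5 = hex.choose := by rw [t5, dif_pos hex]
        obtain ⟨ht1, ht2⟩ := hex.choose_spec
        rw [← et, ← e] at ht1 ht2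
        rw [hs] at hS hdisp
        have hq : 0 < (5 - √5) / 8 := by linarith
        have h := hdisp ((dOf 5 - cos (π / 5) ^ 2) / ((5 - √5) / 8)) (by
          rw [hcos, mul_sub, mul_div_cancel₀ _ hq.ne']; ring)
        have hc := const5 ht1 hq (by rw [hcos]; ring) ht2
        refine key5 rfl (by convert hS using 1; ring) hx ?_
        have := mul_lt_mul_of_pos_left h hq
        rw [hc] at this
        linarith
      · have et : t5 = 0 := by rw [t5, dif_neg hex]
        rw [e, et] at hlt
        have := (le_max_left (fnorm ((C * A * C⁻¹ : SL2C) : Matrix (Fin 2) (Fin 2) ℂ) ^ 2)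
          (fnorm ((C * B * C⁻¹ : SL2C) : Matrix (Fin 2) (Fin 2) ℂ) ^ 2))
        have h0 := sq_nonneg (fnorm ((C * A * C⁻¹ : SL2C) : Matrix (Fin 2) (Fin 2) ℂ))
        linarith
    · have e : dOf 6 = 6 - √24 := by rw [dOf, if_pos rfl]
      have hs : sin (π / (6 : ℕ)) ^ 2 = 1 / 4 := by
        push_cast
        rw [Real.sin_pi_div_six]; norm_num
      rw [hs] at hS hdisp
      have h := hdisp (4 * dOf 6 - 3) (by ring)
      rw [const6 e] at h
      exact key6 (by convert hS using 1; norm_num) hx h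

end
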